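/- There exist an integer q₁ ≥ 2 and a uniquely ergodic C^∞ diffeomorphism T of the torus 𝕋² whose unique invariant Borel probability measure is the Haar–Lebesgue measure λ, such that T is measure-theoretically isomorphic to the rotation of the circle by some irrational number and the upper topological slow entropy of T with respect to the intermediate scaling family a^{int1,5}_m(t) (with base q₁) equals 1. -/

import Mathlib

open MeasureTheory Filter Set
open scoped Topology ENNReal NNReal

noncomputable section

/-- The Bowen metric `d_n^T(x,y) = max_{0 ≤ i ≤ n-1} d(T^i x, T^i y)`. -/
def bowenDist {X : Type*} [PseudoMetricSpace X] (T : X → X) (n : ℕ) (x y : X) : ℝ :=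
  (((Finset.range n).sup fun i => nndist (T^[i] x) (T^[i] y)) : ℝ≥0)

/-- `N_{d_n^T}(ε)`: the minimal number of `(ε,n)`-Bowen balls of `T` needed to cover the
whole space. -/
def bowenCoverNum {X : Type*} [PseudoMetricSpace X] (T : X → X) (n : ℕ) (ε : ℝ) : ℕ :=
  sInf {N : ℕ | ∃ F : Finset X, F.card = N ∧ ∀ y : X, ∃ x ∈ F, bowenDist T n x y < ε}

/-- `N(ε)`: the supremum (`0` if the set is empty, by the `Real.sSup` convention) of all
`t > 0` such that `limsup_n N_{d_n^T}(ε) / a_n(t) > 0`. -/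
def topSlowEntFun {X : Type*} [PseudoMetricSpace X] (T : X → X) (a : ℕ → ℝ → ℝ) (ε : ℝ) : ℝ :=
  sSup {t : ℝ | 0 < t ∧
    0 < Filter.atTop.limsup fun n => (bowenCoverNum T n ε : ℝ≥0∞) / ENNReal.ofReal (a n t)}

/-- The upper topological slow entropy of `T` with respect to the scaling family `a`
equals `E`, i.e. `N(ε) → E` as `ε → 0⁺`. -/
def HasUpperTopSlowEntropy {X : Type*} [PseudoMetricSpace X] (T : X → X)
    (a : ℕ → ℝ → ℝ) (E : ℝ) : Prop :=
  Filter.Tendsto (topSlowEntFun T a) (𝓝[>] (0 : ℝ)) (𝓝 E)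

/-- The circle `𝕋¹ = ℝ/ℤ` with its quotient metric and Haar–Lebesgue probability
measure `volume`. -/
abbrev Torus1 : Type := AddCircle (1 : ℝ)

/-- The 2-torus `𝕋² = ℝ²/ℤ²`, with its quotient (flat) metric, its Borel σ-algebra and
its Haar–Lebesgue probability measure `volume`. -/
abbrev Torus2 : Type := AddCircle (1 : ℝ) × AddCircle (1 : ℝ)

/-- Canonical projection `ℝ² → 𝕋²`. -/
def torusProj : ℝ × ℝ → Torus2 := fun p => ((p.1 : Torus1), (p.2 : Torus1))

/-- `F : ℝ² → ℝ²` is a lift of `T : 𝕋² → 𝕋²`. -/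
def IsLiftOf (F : ℝ × ℝ → ℝ × ℝ) (T : Torus2 → Torus2) : Prop :=
  ∀ p, torusProj (F p) = T (torusProj p)

/-- `T` is a `C^k` diffeomorphism of the torus: it is a bijection and both `T` and `T⁻¹`
admit `C^k` lifts to the universal cover `ℝ²`. -/
def IsCkTorusDiffeo (k : ℕ∞) (T : Torus2 → Torus2) : Prop :=
  Function.Bijective T ∧
  (∃ F : ℝ × ℝ → ℝ × ℝ, ContDiff ℝ k F ∧ IsLiftOf F T) ∧
  (∃ G : ℝ × ℝ → ℝ × ℝ, ContDiff ℝ k G ∧ IsLiftOf G (Function.invFun T))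

/-- `T` is weakly mixing w.r.t. the measure `μ`: `T × T` is ergodic for `μ × μ`. -/
def WeaklyMixing {X : Type*} [MeasurableSpace X] (T : X → X) (μ : Measure X) : Prop :=
  Ergodic (fun p : X × X => (T p.1, T p.2)) (μ.prod μ)

/-- `T` is uniquely ergodic with the Haar–Lebesgue measure `volume` as its unique
invariant Borel probability measure. -/
def UniquelyErgodicWithVolume (T : Torus2 → Torus2) : Prop :=
  MeasurePreserving T volume volume ∧
  ∀ μ : Measure Torus2, IsProbabilityMeasure μ → MeasurePreserving T μ μ → μ = volume

/-- `T` (preserving the Haar measure `volume` on `𝕋²`) is measure-theoretically isomorphic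
to the rotation of the circle `𝕋¹ = ℝ/ℤ` by some irrational number `α`. -/
def IsoToIrrationalRotation (T : Torus2 → Torus2) : Prop :=
  ∃ α : ℝ, Irrational α ∧
    ∃ (A : Set Torus2) (B : Set Torus1) (ψ : Torus2 → Torus1) (φ : Torus1 → Torus2),
      MeasurableSet A ∧ MeasurableSet B ∧
      volume Aᶜ = 0 ∧ volume Bᶜ = 0 ∧
      Set.MapsTo T A A ∧ Set.MapsTo (fun y : Torus1 => y + (α : Torus1)) B B ∧
      Measurable ψ ∧ Measurable φ ∧
      Set.MapsTo ψ A B ∧ Set.MapsTo φ B A ∧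
      (∀ x ∈ A, φ (ψ x) = x) ∧ (∀ y ∈ B, ψ (φ y) = y) ∧
      Measure.map ψ volume = volume ∧
      (∀ x ∈ A, ψ (T x) = ψ x + (α : Torus1))

/-- A finite measurable partition of `X`. -/
structure FinMeasPartition (X : Type*) [MeasurableSpace X] where
  card : ℕ
  piece : Fin card → Set X
  measurable : ∀ i, MeasurableSet (piece i)
  disjoint : Pairwise fun i j => Disjoint (piece i) (piece j)
  cover : (⋃ i, piece i) = Set.univ

open Classical in
/-- The normalized Hamming distance between the length-`n` `P`-codings of the `T`-orbits
of `x` and `y` (the codings differ at time `k` iff `T^k x` and `T^k y` lie in different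
pieces of `P`). -/
def codeHammingDist {X : Type*} [MeasurableSpace X] (T : X → X) (P : FinMeasPartition X)
    (n : ℕ) (x y : X) : ℝ :=
  (((Finset.range n).filter fun k =>
      ¬ ∃ i, T^[k] x ∈ P.piece i ∧ T^[k] y ∈ P.piece i).card : ℝ) / n

/-- `S^H_P(T,n,ε)`: the minimal number of `(ε,n)`-Hamming balls whose union has
`μ`-measure greater than `1 - ε`. -/
def hammingCoverNum {X : Type*} [MeasurableSpace X] (μ : Measure X) (T : X → X)
    (P : FinMeasPartition X) (n : ℕ) (ε : ℝ) : ℕ :=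
  sInf {N : ℕ | ∃ F : Finset X, F.card = N ∧
    ENNReal.ofReal (1 - ε) < μ (⋃ x ∈ F, {y | codeHammingDist T P n x y < ε})}

/-- For a fixed partition `P` and `ε > 0`: the supremum (with the `Real.sSup` convention,
`0` if the set is empty) of all `t > 0` with `limsup_n S^H_P(T,n,ε)/a_n(t) > 0`. -/
def measSlowEntFun {X : Type*} [MeasurableSpace X] (μ : Measure X) (T : X → X)
    (a : ℕ → ℝ → ℝ) (P : FinMeasPartition X) (ε : ℝ) : ℝ :=
  sSup {t : ℝ | 0 < t ∧
    0 < Filter.atTop.limsup fun n =>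
      (hammingCoverNum μ T P n ε : ℝ≥0∞) / ENNReal.ofReal (a n t)}

/-- The upper measure-theoretic slow entropy of `(T,μ)` w.r.t. the scaling family `a`
equals `E`: for every finite measurable partition the limit as `ε → 0⁺` exists, and the
least upper bound over all partitions of these limits is `E`. -/
def HasUpperMeasSlowEntropy {X : Type*} [MeasurableSpace X] (μ : Measure X) (T : X → X)
    (a : ℕ → ℝ → ℝ) (E : ℝ) : Prop :=
  (∀ P : FinMeasPartition X, ∃ e : ℝ,
      Filter.Tendsto (measSlowEntFun μ T a P) (𝓝[>] (0 : ℝ)) (𝓝 e)) ∧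
  IsLUB {e : ℝ | ∃ P : FinMeasPartition X,
      Filter.Tendsto (measSlowEntFun μ T a P) (𝓝[>] (0 : ℝ)) (𝓝 e)} E

/-- `Γ_r(x) = (Γ(x^{1/r} + 1))^r`, where `Γ` is the Euler Gamma function. -/
def GammaR (r : ℕ) (x : ℝ) : ℝ := (Real.Gamma (x ^ ((r : ℝ)⁻¹) + 1)) ^ r

/-- The inverse of `Γ_r` on `[1,∞)` (where `Γ_r` is strictly increasing with `Γ_r 1 = 1`). -/
def GammaRInv (r : ℕ) (y : ℝ) : ℝ := sSup {x : ℝ | 1 ≤ x ∧ GammaR r x ≤ y}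

/-- The intermediate scaling family `a^{int1,r}_m(t) = m^(t / Γ_r⁻¹(ln m / ln q₁))`. -/
def intScale1 (r q₁ : ℕ) (m : ℕ) (t : ℝ) : ℝ :=
  (m : ℝ) ^ (t / GammaRInv r (Real.log m / Real.log q₁))

/-- The intermediate scaling family
`a^{int2,r}_m(t) = m^(t / (Γ_r⁻¹(ln m / ln q₁))^((r-2)/r))`. -/
def intScale2 (r q₁ : ℕ) (m : ℕ) (t : ℝ) : ℝ :=
  (m : ℝ) ^ (t / GammaRInv r (Real.log m / Real.log q₁) ^ (((r : ℝ) - 2) / (r : ℝ)))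

/-- The logarithmic scaling family `a^{ln}_m(t) = (ln m)^t`. -/
def logScale (m : ℕ) (t : ℝ) : ℝ := Real.log m ^ t

/-- The polynomial scaling family `a^{pol}_m(t) = m^t`. -/
def polScale (m : ℕ) (t : ℝ) : ℝ := (m : ℝ) ^ t

end

section
open MeasureTheory Filter Set
open scoped Topology ENNReal NNReal ContDiff

namespace Abc

/-! ### Smooth maps with polynomially bounded derivatives -/

/-- smooth with bounded derivatives of every order at least one -/
def BD (f : ℝ × ℝ → ℝ × ℝ) : Prop :=
  ContDiff ℝ ∞ f ∧ ∀ k : ℕ, 1 ≤ k → ∃ C : ℝ, ∀ x, ‖iteratedFDeriv ℝ k f x‖ ≤ C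

/-- a family of smooth maps with derivatives polynomially bounded in the parameter -/
def PB (f : ℕ → ℝ × ℝ → ℝ × ℝ) : Prop :=
  (∀ Q, ContDiff ℝ ∞ (f Q)) ∧ ∀ k : ℕ, 1 ≤ k → ∃ C P : ℕ, ∀ Q : ℕ, 1 ≤ Q → ∀ x,
    ‖iteratedFDeriv ℝ k (f Q) x‖ ≤ (C : ℝ) * (Q : ℝ) ^ P

lemma BD.toPB {f : ℝ × ℝ → ℝ × ℝ} (hf : BD f) : PB (fun _ => f) := by
  refine ⟨fun _ => hf.1, fun k hk => ?_⟩
  obtain ⟨C, hC⟩ := hf.2 k hk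
  obtain ⟨C', hC'⟩ := exists_nat_ge C
  exact ⟨C', 0, fun Q hQ x => by simpa using (hC x).trans hC'⟩

lemma PB.toBD {f : ℕ → ℝ × ℝ → ℝ × ℝ} (hf : PB f) {Q : ℕ} (hQ : 1 ≤ Q) : BD (f Q) := by
  refine ⟨hf.1 Q, fun k hk => ?_⟩
  obtain ⟨C, P, h⟩ := hf.2 k hk
  exact ⟨_, h Q hQ⟩

lemma PB.unif {f : ℕ → ℝ × ℝ → ℝ × ℝ} (hf : PB f) (k : ℕ) :
    ∃ C P : ℕ, 1 ≤ C ∧ ∀ i : ℕ, 1 ≤ i → i ≤ k → ∀ Q : ℕ, 1 ≤ Q → ∀ x,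
    ‖iteratedFDeriv ℝ i (f Q) x‖ ≤ (C : ℝ) * (Q : ℝ) ^ P := by
  induction k with
  | zero => exact ⟨1, 0, le_refl _, fun i h1 h2 => by omega⟩
  | succ k ih =>
    obtain ⟨C, P, hC1, h⟩ := ih
    obtain ⟨C', P', h'⟩ := hf.2 (k+1) (by omega)
    refine ⟨C + C', P + P', by omega, fun i h1 h2 Q hQ x => ?_⟩
    have hQ' : (1 : ℝ) ≤ Q := by exact_mod_cast hQ
    have hP : (Q : ℝ) ^ P ≤ (Q : ℝ) ^ (P + P') := pow_le_pow_right₀ hQ' (by omega)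
    have hP' : (Q : ℝ) ^ P' ≤ (Q : ℝ) ^ (P + P') := pow_le_pow_right₀ hQ' (by omega)
    have e1 : (C : ℝ) * (Q : ℝ) ^ P ≤ C * (Q : ℝ) ^ (P + P') := by gcongr
    have e2 : (C' : ℝ) * (Q : ℝ) ^ P' ≤ C' * (Q : ℝ) ^ (P + P') := by gcongr
    have p1 : (0 : ℝ) ≤ C * (Q : ℝ) ^ (P + P') := by positivity
    have p2 : (0 : ℝ) ≤ C' * (Q : ℝ) ^ (P + P') := by positivity
    push_cast
    rw [add_mul]
    rcases Nat.lt_or_ge k i with hi | hi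
    · obtain rfl : i = k + 1 := by omega
      linarith [h' Q hQ x]
    · linarith [h i h1 hi Q hQ x]

lemma comp_bound {g f : ℝ × ℝ → ℝ × ℝ} (hg : ContDiff ℝ ∞ g) (hf : ContDiff ℝ ∞ f) {n : ℕ}
    (hn : 1 ≤ n) (x : ℝ × ℝ) {C D : ℝ} (hC0 : 0 ≤ C) (hD1 : 1 ≤ D)
    (hC : ∀ i, 1 ≤ i → i ≤ n → ‖iteratedFDeriv ℝ i g (f x)‖ ≤ C)
    (hD : ∀ i, 1 ≤ i → i ≤ n → ‖iteratedFDeriv ℝ i f x‖ ≤ D) :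
    ‖iteratedFDeriv ℝ n (fun y => g (f y)) x‖ ≤ n.factorial * C * D ^ n := by
  have key : ∀ (u : ℝ × ℝ → ℝ × ℝ) (c : ℝ × ℝ) (i : ℕ), 1 ≤ i → ContDiff ℝ ∞ u →
      iteratedFDeriv ℝ i (fun y => u y - c) = iteratedFDeriv ℝ i u := by
    intro u c i hi hu
    have h := iteratedFDeriv_sub (𝕜 := ℝ) (i := i) (f := u) (g := fun _ => c)
      (hu.of_le (by exact_mod_cast le_top)) contDiff_const
    have e : (u - fun _ => c) = fun y => u y - c := rfl
    rw [e] at h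
    rw [h, iteratedFDeriv_const_of_ne (by omega)]
    simp
  have h := norm_iteratedFDeriv_comp_le (𝕜 := ℝ) (g := fun y => g y - g (f x)) (f := f) (n := n)
    (N := ∞) (hg.sub contDiff_const) hf (by exact_mod_cast le_top) x (C := C) (D := D) ?_ ?_
  · have e : ((fun y => g y - g (f x)) ∘ f) = fun y => g (f y) - g (f x) := rfl
    rw [e, key (fun y => g (f y)) (g (f x)) n hn (hg.comp hf)] at h
    exact h
  · intro i hi
    rcases Nat.eq_zero_or_pos i with rfl | hpos
    · simpa using hC0
    · rw [key _ _ i hpos hg]; exact hC i hpos hi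
  · intro i h1 h2
    exact (hD i h1 h2).trans (le_self_pow₀ hD1 (by omega))

lemma PB.comp {g f : ℕ → ℝ × ℝ → ℝ × ℝ} (hg : PB g) (hf : PB f) :
    PB (fun Q x => g Q (f Q x)) := by
  refine ⟨fun Q => (hg.1 Q).comp (hf.1 Q), fun k hk => ?_⟩
  obtain ⟨C, P, hC1, hC⟩ := hg.unif k
  obtain ⟨D, R, hD1, hD⟩ := hf.unif k
  refine ⟨k.factorial * C * D ^ k, P + R * k, fun Q hQ x => ?_⟩
  have hQ' : (1 : ℝ) ≤ Q := by exact_mod_cast hQ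
  have hD1' : (1 : ℝ) ≤ D := by exact_mod_cast hD1
  have := comp_bound (hg.1 Q) (hf.1 Q) hk x (C := (C : ℝ) * (Q : ℝ) ^ P)
    (D := (D : ℝ) * (Q : ℝ) ^ R) (by positivity)
    (by have := one_le_pow₀ hQ' (n := R); nlinarith)
    (fun i h1 h2 => hC i h1 h2 Q hQ _) (fun i h1 h2 => hD i h1 h2 Q hQ _)
  refine this.trans (le_of_eq ?_)
  push_cast
  rw [mul_pow, pow_add, pow_mul]; ring

lemma BD.comp {g f : ℝ × ℝ → ℝ × ℝ} (hg : BD g) (hf : BD f) : BD (fun x => g (f x)) :=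
  (hg.toPB.comp hf.toPB).toBD (le_refl 1)

lemma clm_iter_bound (A : (ℝ × ℝ) →L[ℝ] (ℝ × ℝ)) (k : ℕ) (hk : 1 ≤ k) (x : ℝ × ℝ) :
    ‖iteratedFDeriv ℝ k (A : ℝ × ℝ → ℝ × ℝ) x‖ ≤ ‖A‖ := by
  obtain ⟨k, rfl⟩ : ∃ j, k = j + 1 := ⟨k - 1, by omega⟩
  rw [← norm_iteratedFDeriv_fderiv]
  have : fderiv ℝ (A : ℝ × ℝ → ℝ × ℝ) = fun _ => A := by ext1 y; exact A.fderiv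
  rw [this]
  rcases Nat.eq_zero_or_pos k with rfl | h
  · simp
  · rw [iteratedFDeriv_const_of_ne (by omega)]; simp

lemma BD_id : BD (fun x => x) := by
  refine ⟨contDiff_id, fun k hk => ⟨_, fun x => clm_iter_bound (ContinuousLinearMap.id ℝ _) k hk x⟩⟩

lemma PB_lin {W : ℝ × ℝ → ℝ × ℝ} (hW : BD W) (c : ℕ → ℝ) (hc : ∀ Q : ℕ, 1 ≤ Q → |c Q| ≤ Q) :
    PB (fun Q x => x + c Q • W x) := by
  refine ⟨fun Q => contDiff_id.add (hW.1.const_smul _), fun k hk => ?_⟩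
  obtain ⟨C, hC⟩ := BD_id.2 k hk
  obtain ⟨D, hD⟩ := hW.2 k hk
  obtain ⟨M, hM⟩ := exists_nat_ge C
  obtain ⟨N, hN⟩ := exists_nat_ge D
  refine ⟨M + N, 1, fun Q hQ x => ?_⟩
  have hQ' : (1 : ℝ) ≤ Q := by exact_mod_cast hQ
  have hWk : ContDiff ℝ k W := hW.1.of_le (by exact_mod_cast le_top)
  have e : iteratedFDeriv ℝ k (fun x => x + c Q • W x) x
      = iteratedFDeriv ℝ k (fun x => x) x + c Q • iteratedFDeriv ℝ k W x := by
    have h1 := iteratedFDeriv_add_apply (𝕜 := ℝ) (i := k) (f := fun x : ℝ × ℝ => x)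
      (g := fun x => c Q • W x) (x := x) contDiff_id.contDiffAt (hWk.const_smul (c Q)).contDiffAt
    have h2 := iteratedFDeriv_const_smul_apply' (𝕜 := ℝ) (i := k) (a := c Q) (f := W) (x := x)
      hWk.contDiffAt
    rw [← h2]; exact h1
  rw [e]
  have h3 : ‖c Q • iteratedFDeriv ℝ k W x‖ ≤ Q * N := by
    rw [norm_smul, Real.norm_eq_abs]
    exact mul_le_mul (hc Q hQ) ((hD x).trans hN) (norm_nonneg _) (by positivity)
  have h4 : ‖iteratedFDeriv ℝ k (fun x : ℝ × ℝ => x) x‖ ≤ Q * M :=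
    ((hC x).trans hM).trans (le_mul_of_one_le_left (by positivity) hQ')
  refine (norm_add_le _ _).trans ?_
  push_cast
  rw [pow_one]; nlinarith

/-- the difference of two time-`t` maps in `C^k` -/
lemma conj_diff_bound {G G' : ℝ × ℝ → ℝ × ℝ} (hG : ContDiff ℝ ∞ G) (hG' : ContDiff ℝ ∞ G')
    {k : ℕ} {C D : ℝ} (hC0 : 0 ≤ C) (hD1 : 1 ≤ D)
    (hC : ∀ i, 1 ≤ i → i ≤ k + 1 → ∀ x, ‖iteratedFDeriv ℝ i G x‖ ≤ C)
    (hD : ∀ i, 1 ≤ i → i ≤ k → ∀ x, ‖iteratedFDeriv ℝ i G' x‖ ≤ D) (t t' : ℝ) (x : ℝ × ℝ) :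
    ‖iteratedFDeriv ℝ k (fun p => G (G' p + (t, 0)) - G (G' p + (t', 0))) x‖
      ≤ k.factorial * (C * |t - t'|) * D ^ k := by
  have hg : ContDiff ℝ ∞ (fun p : ℝ × ℝ => G (p + (t, 0)) - G (p + (t', 0))) :=
    (hG.comp (contDiff_id.add contDiff_const)).sub (hG.comp (contDiff_id.add contDiff_const))
  have h := norm_iteratedFDeriv_comp_le (𝕜 := ℝ)
    (g := fun p : ℝ × ℝ => G (p + (t, 0)) - G (p + (t', 0))) (f := G') (n := k)
    (N := ∞) hg hG' (by exact_mod_cast le_top) x (C := C * |t - t'|) (D := D) ?_ ?_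
  · exact h
  · intro i hi
    have e : iteratedFDeriv ℝ i (fun p : ℝ × ℝ => G (p + (t, 0)) - G (p + (t', 0))) (G' x)
        = iteratedFDeriv ℝ i G (G' x + (t, 0)) - iteratedFDeriv ℝ i G (G' x + (t', 0)) := by
      have hGi : ContDiff ℝ i G := hG.of_le (by exact_mod_cast le_top)
      have h1 := iteratedFDeriv_sub_apply (𝕜 := ℝ) (i := i) (f := fun p : ℝ × ℝ => G (p + (t, 0)))
        (g := fun p => G (p + (t', 0))) (x := G' x)
        (hGi.comp (contDiff_id.add contDiff_const)).contDiffAt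
        (hGi.comp (contDiff_id.add contDiff_const)).contDiffAt
      rw [← iteratedFDeriv_comp_add_right, ← iteratedFDeriv_comp_add_right]
      exact h1
    rw [e]
    have hdiff : Differentiable ℝ (iteratedFDeriv ℝ i G) :=
      hG.differentiable_iteratedFDeriv (by exact_mod_cast WithTop.coe_lt_top _)
    have := Convex.norm_image_sub_le_of_norm_fderiv_le (𝕜 := ℝ) (f := iteratedFDeriv ℝ i G)
      (s := univ) (C := C) (x := G' x + (t', 0)) (y := G' x + (t, 0))
      (fun y _ => hdiff y) (fun y _ => by
        rw [norm_fderiv_iteratedFDeriv]; exact hC (i+1) (by omega) (by omega) y)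
      convex_univ (mem_univ _) (mem_univ _)
    refine this.trans (le_of_eq ?_)
    congr 1
    rw [add_sub_add_left_eq_sub, Prod.mk_sub_mk, sub_zero, Prod.norm_mk, norm_zero, Real.norm_eq_abs]
    simp
  · intro i h1 h2
    exact (hD i h1 h2 x).trans (le_self_pow₀ hD1 (by omega))

end Abc

end

section
open MeasureTheory Filter Set
open scoped Topology ENNReal NNReal ContDiff

namespace Abc

/-! ### Torus basics -/

instance probT1 : IsProbabilityMeasure (volume : Measure Torus1) :=
  ⟨UnitAddCircle.measure_univ⟩

instance probT2 : IsProbabilityMeasure (volume : Measure Torus2) := by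
  rw [Measure.volume_eq_prod]; infer_instance

/-- the circle map with a given lift -/
noncomputable def circ (f : ℝ → ℝ) (hf : Function.Periodic (fun x => (f x : Torus1)) 1) :
    Torus1 → Torus1 := hf.lift

lemma circ_coe (f : ℝ → ℝ) (hf : Function.Periodic (fun x => (f x : Torus1)) 1) (x : ℝ) :
    circ f hf (x : Torus1) = (f x : Torus1) := Function.Periodic.lift_coe hf x

lemma circ_continuous {f : ℝ → ℝ} (hf : Function.Periodic (fun x => (f x : Torus1)) 1)
    (hc : Continuous f) : Continuous (circ f hf) := by
  have : Continuous (fun x : ℝ => (f x : Torus1)) := (AddCircle.continuous_mk' 1).comp hc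
  exact continuous_coinduced_dom.mpr this

lemma coe_norm_le (x : ℝ) : ‖(x : Torus1)‖ ≤ |x| := by
  have := QuotientAddGroup.norm_mk_le_norm (S := AddSubgroup.zmultiples (1:ℝ)) (m := x)
  exact this

lemma coe_dist_le (x y : ℝ) : dist (x : Torus1) (y : Torus1) ≤ |x - y| := by
  rw [dist_eq_norm, ← AddCircle.coe_sub]; exact coe_norm_le _

lemma coe_int (n : ℤ) : ((n : ℝ) : Torus1) = 0 := by
  rw [AddCircle.coe_eq_zero_iff]; exact ⟨n, by simp⟩

lemma coe_nat (n : ℕ) : ((n : ℝ) : Torus1) = 0 := by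
  have := coe_int n; simpa using this

lemma coe_surj (x : Torus1) : ∃ a : ℝ, (a : Torus1) = x := QuotientAddGroup.mk_surjective x

/-- nearest representatives -/
lemma exists_rep (x : Torus1) (b : ℝ) : ∃ a : ℝ, (a : Torus1) = x ∧
    |a - b| = dist x (b : Torus1) := by
  obtain ⟨a, rfl⟩ := coe_surj x
  refine ⟨a - round (a - b), ?_, ?_⟩
  · rw [AddCircle.coe_sub, coe_int, sub_zero]
  · rw [dist_eq_norm, ← AddCircle.coe_sub, UnitAddCircle.norm_eq]
    congr 1; ring

lemma torusProj_surj (z : Torus2) : ∃ p, torusProj p = z := by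
  obtain ⟨a, ha⟩ := coe_surj z.1
  obtain ⟨b, hb⟩ := coe_surj z.2
  exact ⟨(a, b), Prod.ext ha hb⟩

lemma torusProj_continuous : Continuous torusProj :=
  ((AddCircle.continuous_mk' 1).comp continuous_fst).prodMk
    ((AddCircle.continuous_mk' 1).comp continuous_snd)

lemma torusProj_add (p p' : ℝ × ℝ) : torusProj (p + p') = torusProj p + torusProj p' := rfl
lemma torusProj_sub (p p' : ℝ × ℝ) : torusProj (p - p') = torusProj p - torusProj p' := rfl

lemma torusProj_dist (p p' : ℝ × ℝ) : dist (torusProj p) (torusProj p') ≤ dist p p' := by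
  rw [Prod.dist_eq, Prod.dist_eq]
  exact max_le_max (coe_dist_le _ _) (coe_dist_le _ _)

lemma torusProj_rep (z w : Torus2) : ∃ p p', torusProj p = z ∧ torusProj p' = w ∧
    dist p p' = dist z w := by
  obtain ⟨p', rfl⟩ := torusProj_surj w
  obtain ⟨a, ha, ha'⟩ := exists_rep z.1 p'.1
  obtain ⟨b, hb, hb'⟩ := exists_rep z.2 p'.2
  refine ⟨(a, b), p', Prod.ext ha hb, rfl, ?_⟩
  rw [Prod.dist_eq, Prod.dist_eq, Real.dist_eq, Real.dist_eq]
  exact congrArg₂ max ha' hb'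

lemma BD.lip_of {G : ℝ × ℝ → ℝ × ℝ} (hG : ContDiff ℝ ∞ G) {C : ℝ}
    (hC : ∀ x, ‖iteratedFDeriv ℝ 1 G x‖ ≤ C) (x y : ℝ × ℝ) : dist (G x) (G y) ≤ C * dist x y := by
  have := Convex.norm_image_sub_le_of_norm_fderiv_le (𝕜 := ℝ) (f := G)
      (s := univ) (C := C) (x := y) (y := x)
      (fun y _ => hG.differentiable (by simp) y) (fun y _ => by
        have := hC y; rwa [← norm_iteratedFDeriv_one]) convex_univ (mem_univ _) (mem_univ _)
  rwa [dist_eq_norm, dist_eq_norm]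

lemma BD.lip {G : ℝ × ℝ → ℝ × ℝ} (hG : BD G) : ∃ C : ℕ, ∀ x y, dist (G x) (G y) ≤ C * dist x y := by
  obtain ⟨C, hC⟩ := hG.2 1 (le_refl _)
  obtain ⟨M, hM⟩ := exists_nat_ge C
  exact ⟨M, BD.lip_of hG.1 fun x => (hC x).trans hM⟩

lemma lip_of_lift {G : ℝ × ℝ → ℝ × ℝ} {H : Torus2 → Torus2} (h : IsLiftOf G H) {C : ℝ}
    (hC : ∀ x y, dist (G x) (G y) ≤ C * dist x y) (z w : Torus2) :
    dist (H z) (H w) ≤ C * dist z w := by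
  obtain ⟨p, p', rfl, rfl, e⟩ := torusProj_rep z w
  rw [← h, ← h, ← e]
  exact (torusProj_dist _ _).trans (hC _ _)

lemma BD.add {f g : ℝ × ℝ → ℝ × ℝ} (hf : BD f) (hg : BD g) : BD (fun x => f x + g x) := by
  refine ⟨hf.1.add hg.1, fun k hk => ?_⟩
  obtain ⟨C, hC⟩ := hf.2 k hk
  obtain ⟨D, hD⟩ := hg.2 k hk
  refine ⟨C + D, fun x => ?_⟩
  have h1 := iteratedFDeriv_add_apply (𝕜 := ℝ) (i := k) (f := f) (g := g) (x := x)
    (hf.1.of_le (by exact_mod_cast le_top)).contDiffAt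
    (hg.1.of_le (by exact_mod_cast le_top)).contDiffAt
  have : (f + g) = fun x => f x + g x := rfl
  rw [← this, h1]
  exact (norm_add_le _ _).trans (add_le_add (hC x) (hD x))

lemma BD_clm (A : (ℝ × ℝ) →L[ℝ] (ℝ × ℝ)) : BD (fun x => A x) :=
  ⟨A.contDiff, fun k hk => ⟨_, fun x => clm_iter_bound A k hk x⟩⟩

lemma BD_periodic {f : ℝ × ℝ → ℝ × ℝ} (hf : ContDiff ℝ ∞ f) (h1 : ∀ x, f (x + (1, 0)) = f x)
    (h2 : ∀ x, f (x + (0, 1)) = f x) : BD f := by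
  refine ⟨hf, fun k hk => ?_⟩
  have hc : Continuous (iteratedFDeriv ℝ k f) := hf.continuous_iteratedFDeriv (by exact_mod_cast le_top)
  have p1 : ∀ x, iteratedFDeriv ℝ k f (x + (1, 0)) = iteratedFDeriv ℝ k f x := fun x => by
    rw [← iteratedFDeriv_comp_add_right]; congr 1; exact funext h1
  have p2 : ∀ x, iteratedFDeriv ℝ k f (x + (0, 1)) = iteratedFDeriv ℝ k f x := fun x => by
    rw [← iteratedFDeriv_comp_add_right]; congr 1; exact funext h2
  obtain ⟨C, hC⟩ := ((isCompact_Icc (a := (0:ℝ)) (b := 1)).prod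
    (isCompact_Icc (a := (0:ℝ)) (b := 1))).exists_bound_of_continuousOn hc.continuousOn
  refine ⟨C, fun x => ?_⟩
  have q1 : Function.Periodic (fun s => iteratedFDeriv ℝ k f (s, x.2)) 1 := fun s => by
    have := p1 (s, x.2); simpa using this
  have q2 : Function.Periodic (fun s => iteratedFDeriv ℝ k f (Int.fract x.1, s)) 1 := fun s => by
    have := p2 (Int.fract x.1, s); simpa using this
  have e1 : iteratedFDeriv ℝ k f x = iteratedFDeriv ℝ k f (Int.fract x.1, x.2) := by
    have := q1.sub_int_mul_eq (x := x.1) ⌊x.1⌋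
    simp only [mul_one] at this
    exact this.symm
  have e2 : iteratedFDeriv ℝ k f (Int.fract x.1, x.2)
      = iteratedFDeriv ℝ k f (Int.fract x.1, Int.fract x.2) := by
    have := q2.sub_int_mul_eq (x := x.2) ⌊x.2⌋
    simp only [mul_one] at this
    exact this.symm
  rw [e1, e2]
  exact hC _ ⟨⟨Int.fract_nonneg _, (Int.fract_lt_one _).le⟩,
    ⟨Int.fract_nonneg _, (Int.fract_lt_one _).le⟩⟩

/-! ### The smooth sawtooth -/

noncomputable def saw (r y : ℝ) : ℝ :=
  Real.pi⁻¹ * Real.arctan (r * Real.sin (2 * Real.pi * y) / (1 - r * Real.cos (2 * Real.pi * y)))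

lemma saw_den {r : ℝ} (h0 : 0 ≤ r) (h1 : r < 1) (y : ℝ) :
    0 < 1 - r * Real.cos (2 * Real.pi * y) := by
  nlinarith [Real.cos_le_one (2 * Real.pi * y)]

lemma saw_contDiff {r : ℝ} (h0 : 0 ≤ r) (h1 : r < 1) : ContDiff ℝ ∞ (saw r) := by
  unfold saw
  refine contDiff_const.mul (Real.contDiff_arctan.comp ?_)
  refine ContDiff.div (by fun_prop) (by fun_prop) fun y => (saw_den h0 h1 y).ne'

lemma saw_periodic (r y : ℝ) : saw r (y + 1) = saw r y := by
  unfold saw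
  rw [mul_add, mul_one, Real.sin_add_two_pi, Real.cos_add_two_pi]

lemma saw_zero (r : ℝ) : saw r 0 = 0 := by simp [saw]

lemma saw_bound (r y : ℝ) : |saw r y| ≤ 1 / 2 := by
  unfold saw
  rw [abs_mul, abs_of_pos (inv_pos.2 Real.pi_pos)]
  set w := r * Real.sin (2 * Real.pi * y) / (1 - r * Real.cos (2 * Real.pi * y))
  have h1 := Real.arctan_lt_pi_div_two w
  have h2 := Real.neg_pi_div_two_lt_arctan w
  have : |Real.arctan w| ≤ Real.pi / 2 := abs_le.2 ⟨by linarith, h1.le⟩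
  rw [inv_mul_le_iff₀ Real.pi_pos]; linarith

lemma saw_tendsto {y : ℝ} (h0 : 0 < y) (h1 : y < 1) {r : ℕ → ℝ} (hr : Tendsto r atTop (𝓝 1)) :
    Tendsto (fun k => y + saw (r k) y - 1 / 2) atTop (𝓝 0) := by
  have hpi := Real.pi_pos
  have hs : 0 < Real.sin (Real.pi * y) := Real.sin_pos_of_pos_of_lt_pi (by positivity) (by nlinarith)
  have e1 : Real.sin (2 * Real.pi * y) = 2 * Real.sin (Real.pi * y) * Real.cos (Real.pi * y) := by
    rw [mul_assoc, Real.sin_two_mul]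
  have e2 : 1 - Real.cos (2 * Real.pi * y) = 2 * Real.sin (Real.pi * y) ^ 2 := by
    rw [mul_assoc, Real.cos_two_mul, Real.cos_sq']; ring
  have lim : Tendsto (fun k => saw (r k) y) atTop (𝓝 (saw 1 y)) := by
    unfold saw
    refine tendsto_const_nhds.mul ((Real.continuous_arctan.tendsto _).comp ?_)
    refine Tendsto.div (hr.mul_const _) (tendsto_const_nhds.sub (hr.mul_const _)) ?_
    rw [one_mul, e2]; positivity
  have val : saw 1 y = 1 / 2 - y := by
    unfold saw
    rw [one_mul, one_mul, e1, e2]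
    have : 2 * Real.sin (Real.pi * y) * Real.cos (Real.pi * y) / (2 * Real.sin (Real.pi * y) ^ 2)
        = Real.tan (Real.pi / 2 - Real.pi * y) := by
      rw [Real.tan_eq_sin_div_cos, Real.sin_pi_div_two_sub, Real.cos_pi_div_two_sub]
      field_simp
    rw [this, Real.arctan_tan (by nlinarith) (by nlinarith)]
    field_simp
  have := (tendsto_const_nhds (x := y)).add lim |>.sub_const (1/2)
  rw [val] at this
  simpa using this

lemma exists_saw {δ : ℝ} (hδ : 0 < δ) {η : ℝ≥0∞} (hη : 0 < η) :
    ∃ β : ℝ → ℝ, ContDiff ℝ ∞ β ∧ (∀ y, β (y + 1) = β y) ∧ β 0 = 0 ∧ (∀ y, |β y| ≤ 1 / 2) ∧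
      ∃ Y : Set Torus1, MeasurableSet Y ∧ volume Yᶜ ≤ η ∧
        ∀ y : ℝ, (y : Torus1) ∈ Y → ‖((y + β y - 1 / 2 : ℝ) : Torus1)‖ ≤ δ := by
  set r : ℕ → ℝ := fun k => 1 - 1 / ((k : ℝ) + 1) with hrdef
  have hr0 : ∀ k, 0 ≤ r k := fun k => by
    have : 1 / ((k : ℝ) + 1) ≤ 1 := by
      rw [div_le_one (by positivity)]; linarith [(Nat.cast_nonneg k : (0:ℝ) ≤ k)]
    simp only [hrdef]; linarith
  have hr1 : ∀ k, r k < 1 := fun k => by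
    have : 0 < 1 / ((k : ℝ) + 1) := by positivity
    simp only [hrdef]; linarith
  have hr : Tendsto r atTop (𝓝 1) := by
    have := (tendsto_const_nhds (x := (1:ℝ))).sub (tendsto_one_div_add_atTop_nhds_zero_nat (𝕜 := ℝ))
    rw [sub_zero] at this
    exact this
  have hper : ∀ k, Function.Periodic (fun x => ((x + saw (r k) x - 1 / 2 : ℝ) : Torus1)) 1 := by
    intro k x
    simp only [saw_periodic]
    have : x + 1 + saw (r k) x - 1 / 2 = (x + saw (r k) x - 1 / 2) + 1 := by ring
    rw [this, AddCircle.coe_add, AddCircle.coe_period, add_zero]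
  have hcont : ∀ k, Continuous (circ _ (hper k)) := fun k =>
    circ_continuous _ ((continuous_id.add (saw_contDiff (hr0 k) (hr1 k)).continuous).sub
      continuous_const)
  have hae : ∀ᵐ y : Torus1 ∂volume, Tendsto (fun k => circ _ (hper k) y) atTop (𝓝 (0 : Torus1)) := by
    have h0 : ∀ᵐ y : Torus1 ∂volume, y ≠ 0 := by
      have := UnitAddCircle.measurePreserving_mk 0
      have hm : MeasurableSet ({0}ᶜ : Set Torus1) := (measurableSet_singleton _).compl
      have hs : volume ({0} : Set Torus1) = 0 := by
        rw [← this.measure_preimage (measurableSet_singleton _).nullMeasurableSet]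
        rw [Measure.restrict_apply (this.measurable (measurableSet_singleton _))]
        refine measure_mono_null (t := {1}) ?_ (by simp)
        rintro x ⟨hx, hx0, hx1⟩
        have hx' : ((x:ℝ) : Torus1) = 0 := hx
        rw [AddCircle.coe_eq_zero_iff] at hx'
        obtain ⟨n, hn⟩ := hx'
        simp only [zsmul_eq_mul, mul_one] at hn
        rw [← hn] at hx0 hx1 ⊢
        have a : 0 < n := by exact_mod_cast hx0
        have b : n ≤ 1 := by
          have : (n:ℝ) ≤ 1 := by linarith
          exact_mod_cast this
        have : n = 1 := by omega
        simp [this]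
      exact measure_eq_zero_iff_ae_notMem.1 hs
    filter_upwards [h0] with y hy
    obtain ⟨a, ha⟩ := coe_surj y
    have hfr : ((Int.fract a : ℝ) : Torus1) = y := by
      rw [← ha, Int.fract, AddCircle.coe_sub, coe_int, sub_zero]
    have hpos : 0 < Int.fract a := by
      rcases (Int.fract_nonneg a).lt_or_eq with h | h
      · exact h
      · exfalso; apply hy; rw [← hfr, ← h]; simp
    rw [← hfr]
    simp only [circ_coe]
    have := saw_tendsto hpos (Int.fract_lt_one a) hr
    have h2 := ((AddCircle.continuous_mk' (1:ℝ)).tendsto 0).comp this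
    exact h2
  have hmeas := tendstoInMeasure_of_tendsto_ae (μ := (volume : Measure Torus1))
    (f := fun k => circ _ (hper k)) (g := fun _ => (0 : Torus1))
    (fun k => (hcont k).aestronglyMeasurable) hae
  have h1 := hmeas (ENNReal.ofReal δ) (by simpa using hδ)
  obtain ⟨k, hk⟩ := ((h1.eventually (gt_mem_nhds hη))).exists
  refine ⟨saw (r k), saw_contDiff (hr0 k) (hr1 k), saw_periodic _, saw_zero _, saw_bound _,
    {y | dist (circ _ (hper k) y) 0 < δ}, ?_, ?_, ?_⟩
  · exact (isOpen_lt ((hcont k).dist continuous_const) continuous_const).measurableSet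
  · refine (measure_mono ?_).trans hk.le
    intro y hy
    simp only [mem_compl_iff, mem_ofPred_eq, not_lt] at hy
    simp only [mem_ofPred_eq, edist_dist]
    exact ENNReal.ofReal_le_ofReal hy
  · intro y hy
    have hy' : dist (circ _ (hper k) (y : Torus1)) 0 < δ := hy
    rw [circ_coe, dist_zero_right] at hy'
    exact hy'.le

end Abc

end

section
open MeasureTheory Filter Set
open scoped Topology ENNReal NNReal ContDiff

namespace Abc

/-! ### The scaling family -/

lemma pow_fifth (N : ℕ) : (((N : ℝ) ^ 5) ^ (((5 : ℕ) : ℝ)⁻¹)) = N :=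
  Real.pow_rpow_inv_natCast (Nat.cast_nonneg N) (by norm_num)

lemma gammaR_nat (N : ℕ) : GammaR 5 ((N : ℝ) ^ 5) = ((N.factorial : ℝ)) ^ 5 := by
  unfold GammaR
  rw [pow_fifth, Real.Gamma_nat_eq_factorial]

lemma gammaR_gt {N : ℕ} (hN : 2 ≤ N) {x : ℝ} (hx : (N : ℝ) ^ 5 < x) :
    ((N.factorial : ℝ)) ^ 5 < GammaR 5 x ∧ x * (((N - 1).factorial : ℝ)) ^ 5 ≤ GammaR 5 x := by
  have hx0 : 0 ≤ x := le_trans (by positivity) hx.le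
  set v := x ^ (((5 : ℕ) : ℝ)⁻¹) with hv
  have hv5 : v ^ 5 = x := Real.rpow_inv_natCast_pow hx0 (by norm_num)
  have hv0 : 0 ≤ v := Real.rpow_nonneg hx0 _
  have hNv : (N : ℝ) < v := by
    refine lt_of_pow_lt_pow_left₀ 5 hv0 ?_
    rw [hv5]; exact hx
  have hN' : (2 : ℝ) ≤ N := by exact_mod_cast hN
  have hG : GammaR 5 x = (Real.Gamma (v + 1)) ^ 5 := rfl
  constructor
  · rw [hG, ← Real.Gamma_nat_eq_factorial]
    refine pow_lt_pow_left₀ ?_ (Real.Gamma_pos_of_pos (by positivity)).le (by norm_num)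
    exact Real.Gamma_strictMonoOn_Ici (by simp; linarith) (by simp; linarith) (by linarith)
  · rw [hG, Real.Gamma_add_one (by linarith), mul_pow, hv5]
    refine mul_le_mul_of_nonneg_left ?_ hx0
    refine pow_le_pow_left₀ (by positivity) ?_ 5
    rw [← Real.Gamma_nat_eq_factorial]
    have : (((N - 1 : ℕ) : ℝ) + 1) = N := by
      rw [Nat.cast_sub (by omega)]; simp
    rw [this]
    exact Real.Gamma_strictMonoOn_Ici.monotoneOn (by simpa using hN') (by simp; linarith) hNv.le

lemma gammaSet_one {e : ℝ} (he : 1 ≤ e) : (1 : ℝ) ∈ {x : ℝ | 1 ≤ x ∧ GammaR 5 x ≤ e} := by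
  refine ⟨le_refl _, ?_⟩
  have := gammaR_nat 1
  simp at this
  rw [this]; exact he

lemma gammaSet_lt {N : ℕ} (hN : 2 ≤ N) {e : ℝ} (he : e ≤ ((N.factorial : ℝ)) ^ 5) {x : ℝ}
    (hx : GammaR 5 x ≤ e) : x ≤ (N : ℝ) ^ 5 := by
  by_contra! h
  linarith [(gammaR_gt hN h).1]

lemma gammaSet_bdd (e : ℝ) : BddAbove {x : ℝ | 1 ≤ x ∧ GammaR 5 x ≤ e} := by
  obtain ⟨N, hN⟩ := exists_nat_ge e
  refine ⟨((N + 2 : ℕ) : ℝ) ^ 5, fun x hx => gammaSet_lt (by omega) ?_ hx.2⟩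
  have h1 : (1 : ℝ) ≤ ((N + 2).factorial : ℝ) := by exact_mod_cast Nat.factorial_pos _
  have h2 : ((N + 2 : ℕ) : ℝ) ≤ ((N + 2).factorial : ℝ) := by exact_mod_cast Nat.self_le_factorial _
  have h3 := le_self_pow₀ h1 (n := 5) (by norm_num)
  push_cast at h2
  linarith

lemma gammaInv_ge_one {e : ℝ} (he : 1 ≤ e) : 1 ≤ GammaRInv 5 e :=
  le_csSup (gammaSet_bdd e) (gammaSet_one he)

lemma gammaInv_le {N : ℕ} (hN : 2 ≤ N) {e : ℝ} (h1 : 1 ≤ e) (he : e ≤ ((N.factorial : ℝ)) ^ 5) :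
    GammaRInv 5 e ≤ (N : ℝ) ^ 5 :=
  csSup_le ⟨1, gammaSet_one h1⟩ fun _ hx => gammaSet_lt hN he hx.2

lemma gammaInv_eq {N : ℕ} (hN : 2 ≤ N) : GammaRInv 5 (((N.factorial : ℝ)) ^ 5) = (N : ℝ) ^ 5 := by
  have h1 : (1 : ℝ) ≤ (N.factorial : ℝ) ^ 5 := one_le_pow₀ (by exact_mod_cast Nat.factorial_pos _)
  refine le_antisymm (gammaInv_le hN h1 le_rfl) (le_csSup (gammaSet_bdd _) ⟨?_, (gammaR_nat N).le⟩)
  exact one_le_pow₀ (by exact_mod_cast (by omega : 1 ≤ N))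

lemma gammaInv_mul_le {M : ℕ} (hM : 1 ≤ M) {e : ℝ} (he : (((M + 1).factorial : ℝ)) ^ 5 ≤ e) :
    GammaRInv 5 e * ((M.factorial : ℝ)) ^ 5 ≤ e := by
  have h1 : (1 : ℝ) ≤ e :=
    le_trans (one_le_pow₀ (by exact_mod_cast Nat.factorial_pos _)) he
  have hpos : (0 : ℝ) < (M.factorial : ℝ) ^ 5 := by positivity
  rw [← le_div_iff₀ hpos]
  refine csSup_le ⟨1, gammaSet_one h1⟩ fun x hx => ?_
  rw [le_div_iff₀ hpos]
  rcases le_or_gt x (((M + 1 : ℕ) : ℝ) ^ 5) with h | h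
  · refine le_trans (mul_le_mul_of_nonneg_right h hpos.le) (le_trans (le_of_eq ?_) he)
    rw [Nat.factorial_succ]; push_cast; ring
  · exact ((gammaR_gt (by omega) h).2.trans hx.2)

/-- frequency and period -/
def Qf (M : ℕ) : ℕ := 2 ^ (M.factorial ^ 5)

lemma Qf_succ (M : ℕ) : Qf (M + 1) = Qf M ^ ((M + 1) ^ 5) := by
  unfold Qf
  rw [← pow_mul, Nat.factorial_succ, mul_pow, mul_comm]

lemma log_Qf (M : ℕ) : Real.log (Qf M) / Real.log 2 = ((M.factorial : ℝ)) ^ 5 := by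
  unfold Qf
  push_cast
  rw [Real.log_pow]
  have : Real.log 2 ≠ 0 := (Real.log_pos (by norm_num)).ne'
  field_simp
  push_cast; rfl

lemma one_lt_Qf (M : ℕ) : 1 < Qf M :=
  Nat.one_lt_two_pow (by positivity)

lemma scale_rpow (m : ℕ) (t : ℝ) : intScale1 5 2 m t = (intScale1 5 2 m 1) ^ t := by
  unfold intScale1
  rw [← Real.rpow_mul (Nat.cast_nonneg m)]
  congr 1; ring

lemma scale_exact {M : ℕ} (hM : 1 ≤ M) (t : ℝ) : intScale1 5 2 (Qf (M + 1)) t = (Qf M : ℝ) ^ t := by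
  unfold intScale1
  have h := log_Qf (M + 1)
  push_cast at h ⊢
  rw [h, gammaInv_eq (by omega), Qf_succ]
  push_cast
  rw [← Real.rpow_natCast, ← Real.rpow_mul (by positivity)]
  congr 1
  push_cast
  field_simp

lemma scale_lower {M : ℕ} (hM : 1 ≤ M) {P m R : ℕ} (hP : P + 1 ≤ (M + 1) ^ 5) (hR : R ≤ Qf M ^ P)
    (hm : Qf (M + 1) ≤ R * m) :
    (Qf M : ℝ) ^ (1 - (P : ℝ) / ((M : ℝ) + 1) ^ 5) ≤ intScale1 5 2 m 1 := by
  have hQ1 : (1 : ℝ) < Qf M := by exact_mod_cast one_lt_Qf M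
  have hl2 : 0 < Real.log 2 := Real.log_pos (by norm_num)
  set e := Real.log m / Real.log 2 with he
  have hmQ : Qf M ^ ((M + 1) ^ 5 - P) ≤ m := by
    have h1 : Qf M ^ P * Qf M ^ ((M + 1) ^ 5 - P) ≤ Qf M ^ P * m := by
      rw [← pow_add, Nat.add_sub_cancel' (by omega), ← Qf_succ]
      exact hm.trans (Nat.mul_le_mul_right _ hR)
    exact Nat.le_of_mul_le_mul_left h1 (pow_pos (by have := one_lt_Qf M; omega) _)
  have hmpos : (0 : ℝ) < m := by
    have := one_lt_Qf M
    have : 0 < Qf M ^ ((M + 1) ^ 5 - P) := pow_pos (by omega) _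
    exact_mod_cast lt_of_lt_of_le this hmQ
  have helow : (((M + 1) ^ 5 - P : ℕ) : ℝ) * (M.factorial : ℝ) ^ 5 ≤ e := by
    rw [he, ← log_Qf, ← mul_div_assoc, div_le_div_iff_of_pos_right hl2, ← Real.log_pow]
    refine Real.log_le_log (by positivity) (by exact_mod_cast hmQ)
  have hfac : (1 : ℝ) ≤ (M.factorial : ℝ) ^ 5 := one_le_pow₀ (by exact_mod_cast Nat.factorial_pos _)
  have he1 : 1 ≤ e := by
    refine le_trans ?_ helow
    have : (1 : ℝ) ≤ (((M + 1) ^ 5 - P : ℕ) : ℝ) := by exact_mod_cast (by omega)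
    nlinarith
  have hg1 := gammaInv_ge_one he1
  have hmexp : (m : ℝ) = 2 ^ e := by
    rw [he, Real.rpow_def_of_pos (by norm_num)]
    rw [mul_div_cancel₀ _ hl2.ne', Real.exp_log hmpos]
  have hQexp : (Qf M : ℝ) = 2 ^ ((M.factorial : ℝ) ^ 5) := by
    unfold Qf; push_cast; rw [← Real.rpow_natCast]; push_cast; rfl
  have hN0 : (0 : ℝ) < ((M : ℝ) + 1) ^ 5 := by positivity
  have hs : intScale1 5 2 m 1 = 2 ^ (e / GammaRInv 5 e) := by
    unfold intScale1
    push_cast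
    rw [← he, hmexp, ← Real.rpow_mul (by norm_num)]
    congr 1; ring
  rw [hs, hQexp, ← Real.rpow_mul (by norm_num)]
  refine Real.rpow_le_rpow_of_exponent_le (by norm_num) ?_
  rw [le_div_iff₀ (by linarith)]
  rcases le_or_gt ((((M + 1).factorial : ℝ)) ^ 5) e with h | h
  · have := gammaInv_mul_le hM h
    refine le_trans ?_ this
    rw [mul_comm]
    refine mul_le_mul_of_nonneg_left ?_ (by linarith)
    have : 0 ≤ (P : ℝ) / ((M : ℝ) + 1) ^ 5 := by positivity
    nlinarith
  · have hg2 := gammaInv_le (by omega : 2 ≤ M + 1) he1 h.le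
    rw [Nat.cast_sub (by omega)] at helow
    push_cast at helow hg2
    refine le_trans ?_ helow
    have hfrac : 0 ≤ 1 - (P : ℝ) / ((M : ℝ) + 1) ^ 5 := by
      rw [sub_nonneg, div_le_one hN0]
      have : ((P + 1 : ℕ) : ℝ) ≤ (((M + 1) ^ 5 : ℕ) : ℝ) := by exact_mod_cast hP
      push_cast at this; linarith
    calc (M.factorial : ℝ) ^ 5 * (1 - (P : ℝ) / ((M : ℝ) + 1) ^ 5) * GammaRInv 5 e
        ≤ (M.factorial : ℝ) ^ 5 * (1 - (P : ℝ) / ((M : ℝ) + 1) ^ 5) * ((M : ℝ) + 1) ^ 5 := by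
          refine mul_le_mul_of_nonneg_left hg2 (by positivity)
      _ = _ := by field_simp

end Abc

end

section
open MeasureTheory Filter Set
open scoped Topology ENNReal NNReal ContDiff

namespace Abc

/-! ### States of the construction -/

/-- horizontal rotation -/
def rot (t : Torus1) (z : Torus2) : Torus2 := (z.1 + t, z.2)

/-- a conjugating diffeomorphism together with a period -/
structure St where
  H : Torus2 ≃ Torus2
  G : ℝ × ℝ → ℝ × ℝ
  G' : ℝ × ℝ → ℝ × ℝ
  liftG : IsLiftOf G H
  liftG' : IsLiftOf G' H.symm
  bdG : BD G
  bdG' : BD G'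
  mp : MeasurePreserving H volume volume
  mp' : MeasurePreserving H.symm volume volume
  vert : ∀ x y, G (x, y + 1) = G (x, y) + (0, 1)
  q : ℕ
  K : ℕ
  ex : ℕ
  hqe : q = 2 ^ ex
  hK : 1 ≤ K
  lip : ∀ z w, dist (H z) (H w) ≤ K * dist z w
  hq : 64 * K ≤ q

/-- the conjugated rotation -/
def St.S (s : St) (t : Torus1) (z : Torus2) : Torus2 := s.H (rot t (s.H.symm z))

/-- its lift -/
def St.F (s : St) (t : ℝ) (p : ℝ × ℝ) : ℝ × ℝ := s.G (s.G' p + (t, 0))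

/-- what one step of the construction provides -/
structure Step (n : ℕ) (s s' : St) (Q : ℕ) : Prop where
  dvd : s.q ∣ s'.q
  comm : ∀ (k : ℤ) (z : Torus2), s'.S ((k / s.q : ℝ) : Torus1) z = s.S ((k / s.q : ℝ) : Torus1) z
  big : 100 * 2 ^ n * s'.K * s.q ≤ s'.q
  smooth : ∀ k ≤ n, ∀ (t t' : ℝ) (x : ℝ × ℝ),
    ‖iteratedFDeriv ℝ k (fun p => s'.F t p - s'.F t' p) x‖ ≤ s'.q / 2 ^ n * |t - t'|
  cover : ∃ F : Finset Torus2, (F.card : ℝ) ≤ (Q : ℝ) ^ (1 + 1 / ((n : ℝ) + 1)) ∧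
    ∀ z, ∃ w ∈ F, ∀ t, dist (s'.S t w) (s'.S t z) < 1 / ((n : ℝ) + 1)
  sep : ∃ F : Finset Torus2, (Q : ℝ) ^ (1 - 1 / ((n : ℝ) + 1)) ≤ (F.card : ℝ) ∧
    ∀ z ∈ F, ∀ w ∈ F, z ≠ w → ∃ t, 1 / 4 ≤ dist (s'.S t z) (s'.S t w)
  scale : ∀ t : ℝ, intScale1 5 2 s'.q t = (Q : ℝ) ^ t
  scale' : ∀ m : ℕ, s'.q ≤ 100 * (n + 1) * s'.K * m →
    (Q : ℝ) ^ (1 - 1 / ((n : ℝ) + 1)) ≤ intScale1 5 2 m 1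
  ue : ∀ (f : Torus2 → ℝ) (C : ℝ), 0 ≤ C → (∀ z w, |f z - f w| ≤ C * dist z w) → ∀ z,
    |(∫ t : Torus1, f (s'.S t z)) - ∫ w, f w| ≤ C / ((n : ℝ) + 1)
  psi : ∀ z, dist (s'.H.symm z).1 (s.H.symm z).1 ≤ 1 / (2 ^ n * s.q)
  good : ∃ 𝒢 : Set Torus2, MeasurableSet 𝒢 ∧ volume 𝒢ᶜ ≤ (1 / 2 : ℝ≥0∞) ^ n ∧
    ∀ z ∈ 𝒢, ∀ w ∈ 𝒢, dist (s'.H.symm z).1 (s'.H.symm w).1 ≤ 4 / s'.q →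
      dist z w ≤ 1 / ((n : ℝ) + 1)
  Qbig : n + 2 ≤ Q

lemma rot_add (t u : Torus1) (z : Torus2) : rot t (rot u z) = rot (t + u) z := by
  unfold rot; simp only; rw [add_assoc, add_comm u t]

lemma rot_zero (z : Torus2) : rot 0 z = z := by simp [rot]

lemma rot_dist (t u : Torus1) (z : Torus2) : dist (rot t z) (rot u z) = dist t u := by
  unfold rot; rw [Prod.dist_eq]; simp

lemma rot_dist' (t : Torus1) (z w : Torus2) : dist (rot t z) (rot t w) = dist z w := by
  unfold rot; rw [Prod.dist_eq, Prod.dist_eq]; simp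

lemma rot_coe (t : ℝ) (p : ℝ × ℝ) : torusProj (p + (t, 0)) = rot (t : Torus1) (torusProj p) := by
  unfold rot torusProj; simp

lemma St.F_lift (s : St) (t : ℝ) : IsLiftOf (s.F t) (s.S (t : Torus1)) := by
  intro p
  unfold St.F St.S
  rw [s.liftG, rot_coe, s.liftG']

lemma St.S_add (s : St) (t u : Torus1) (z : Torus2) : s.S t (s.S u z) = s.S (t + u) z := by
  unfold St.S; simp [rot_add]

lemma St.S_zero (s : St) (z : Torus2) : s.S 0 z = z := by
  unfold St.S; simp [rot_zero]

lemma St.S_iter (s : St) (t : Torus1) (i : ℕ) (z : Torus2) : (s.S t)^[i] z = s.S (i • t) z := by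
  induction i with
  | zero => simp [St.S_zero]
  | succ i ih => rw [Function.iterate_succ_apply', ih, St.S_add, succ_nsmul']

lemma St.S_dist (s : St) (t u : Torus1) (z : Torus2) : dist (s.S t z) (s.S u z) ≤ s.K * dist t u := by
  unfold St.S
  refine (s.lip _ _).trans ?_
  rw [rot_dist]

lemma St.S_fst (s : St) (t : Torus1) (z : Torus2) :
    (s.H.symm (s.S t z)).1 = (s.H.symm z).1 + t := by
  unfold St.S; simp [rot]

lemma rot_mp (t : Torus1) : MeasurePreserving (rot t) volume volume := by
  have h1 : MeasurePreserving (fun x : Torus1 => x + t) volume volume :=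
    measurePreserving_add_right _ t
  exact h1.prod (MeasurePreserving.id _)

lemma St.S_mp (s : St) (t : Torus1) : MeasurePreserving (s.S t) volume volume :=
  s.mp.comp ((rot_mp t).comp s.mp')

lemma cont_of_lift {G : ℝ × ℝ → ℝ × ℝ} {H : Torus2 → Torus2} (h : IsLiftOf G H) (hG : BD G) :
    Continuous H := by
  obtain ⟨C, hC⟩ := hG.lip
  exact (LipschitzWith.of_dist_le_mul (K := C) (by exact_mod_cast lip_of_lift h hC)).continuous

lemma St.cont (s : St) : Continuous s.H := cont_of_lift s.liftG s.bdG
lemma St.cont' (s : St) : Continuous s.H.symm := cont_of_lift s.liftG' s.bdG'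

lemma rot_cont (t : Torus1) : Continuous (rot t) := by unfold rot; fun_prop

lemma St.S_cont (s : St) (t : Torus1) : Continuous (s.S t) :=
  s.cont.comp ((rot_cont t).comp s.cont')

lemma St.q_pos (s : St) : 0 < s.q := by have := s.hK; have := s.hq; omega

/-- initial state -/
def St0 : St where
  H := Equiv.refl _
  G := fun p => p
  G' := fun p => p
  liftG := fun _ => rfl
  liftG' := fun _ => rfl
  bdG := BD_id
  bdG' := BD_id
  mp := MeasurePreserving.id _
  mp' := MeasurePreserving.id _
  vert := fun x y => by simp
  q := 64
  K := 1
  ex := 6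
  hqe := by norm_num
  hK := le_refl _
  lip := fun z w => by simp
  hq := by norm_num

end Abc

end

section
open MeasureTheory Filter Set
open scoped Topology ENNReal NNReal ContDiff

namespace Abc

/-! ### The limit -/

/-- an infinite run of the construction -/
structure Sq where
  st : ℕ → St
  Q : ℕ → ℕ
  step : ∀ n, Step n (st n) (st (n + 1)) (Q n)

namespace Sq
variable (σ : Sq)

/-- the periods -/
abbrev q (n : ℕ) : ℕ := (σ.st n).q
/-- the Lipschitz constants -/
abbrev K (n : ℕ) : ℕ := (σ.st n).K

lemma qpos (n : ℕ) : (0 : ℝ) < σ.q n := by exact_mod_cast (σ.st n).q_pos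
lemma Kone (n : ℕ) : (1 : ℝ) ≤ σ.K n := by exact_mod_cast (σ.st n).hK

/-- approximating rotation numbers -/
noncomputable def al (n : ℕ) : ℝ := ∑ k ∈ Finset.range n, 1 / (σ.q (k + 1) : ℝ)

lemma al_succ (n : ℕ) : σ.al (n + 1) = σ.al n + 1 / (σ.q (n + 1) : ℝ) := by
  unfold al; rw [Finset.sum_range_succ]

lemma al_zero : σ.al 0 = 0 := by simp [al]

lemma al_int (n : ℕ) : ∃ p : ℤ, σ.al n = p / σ.q n := by
  induction n with
  | zero => exact ⟨0, by simp [al]⟩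
  | succ n ih =>
    obtain ⟨p, hp⟩ := ih
    obtain ⟨d, hd⟩ := (σ.step n).dvd
    refine ⟨p * d + 1, ?_⟩
    have h1 := σ.qpos n
    have h2 := σ.qpos (n + 1)
    have h3 : (σ.q (n + 1) : ℝ) = σ.q n * d := by exact_mod_cast hd
    rw [al_succ, hp, h3]
    rw [h3] at h2
    have h4 : (d : ℝ) ≠ 0 := by rintro h; rw [h] at h2; simp at h2
    field_simp
    push_cast
    ring

/-- error sizes -/
noncomputable def r (n : ℕ) : ℝ := σ.K (n + 1) / σ.q (n + 1)

lemma big' (n : ℕ) : 100 * 2 ^ n * (σ.K (n + 1) : ℝ) * σ.q n ≤ σ.q (n + 1) := by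
  exact_mod_cast (σ.step n).big

lemma r_pos (n : ℕ) : 0 < σ.r n := by
  unfold r; have := σ.qpos (n + 1); have := σ.Kone (n + 1); positivity

lemma r_le (n : ℕ) : σ.r n ≤ 1 / (100 * 2 ^ n * σ.q n) := by
  unfold r
  have h1 := σ.qpos n
  have h2 := σ.qpos (n + 1)
  rw [div_le_div_iff₀ h2 (by positivity)]
  have := σ.big' n
  nlinarith

lemma qinv_le (n : ℕ) : 1 / (σ.q (n + 1) : ℝ) ≤ σ.r n := by
  unfold r
  have h2 := σ.qpos (n + 1)
  have := σ.Kone (n + 1)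
  gcongr

lemma r_succ (n : ℕ) : σ.r (n + 1) ≤ σ.r n / 2 := by
  refine (σ.r_le (n + 1)).trans ?_
  have h1 := σ.qpos (n + 1)
  refine le_trans ?_ (div_le_div_of_nonneg_right (σ.qinv_le n) (by norm_num))
  rw [div_div]
  apply one_div_le_one_div_of_le (by positivity)
  have : (1 : ℝ) ≤ 2 ^ (n + 1) := one_le_pow₀ (by norm_num)
  nlinarith

lemma r_geo (n k : ℕ) : σ.r (n + k) ≤ 2 * σ.r n / 2 / 2 ^ k := by
  induction k with
  | zero => simp
  | succ k ih =>
    have := σ.r_succ (n + k)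
    rw [← add_assoc]
    refine this.trans ?_
    rw [pow_succ, ← div_div]
    linarith

lemma r_small (n : ℕ) : σ.r n ≤ (1 / 2) ^ n := by
  refine (σ.r_le n).trans ?_
  have h1 : (1 : ℝ) ≤ σ.q n := by exact_mod_cast (σ.st n).q_pos
  rw [one_div_pow]
  apply one_div_le_one_div_of_le (by positivity)
  have : (0 : ℝ) < 2 ^ n := by positivity
  nlinarith [mul_le_mul_of_nonneg_left h1 this.le]

/-- generic limit lemma -/
lemma lim_exists {X : Type*} [MetricSpace X] [CompleteSpace X] (f : ℕ → X) (c : ℝ) (hc : 0 ≤ c)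
    (hf : ∀ n, dist (f n) (f (n + 1)) ≤ c * σ.r n) :
    ∃ a, Tendsto f atTop (𝓝 a) ∧ ∀ n, dist (f n) a ≤ c * (2 * σ.r n) := by
  have key : ∀ n k, dist (f (n + k)) (f (n + k + 1)) ≤ (c * (2 * σ.r n)) / 2 / 2 ^ k := by
    intro n k
    refine (hf _).trans ?_
    refine (mul_le_mul_of_nonneg_left (σ.r_geo n k) hc).trans (le_of_eq ?_)
    ring
  have h1 : CauchySeq f := by
    refine cauchySeq_of_le_geometric_two (C := c * (2 * σ.r 0)) ?_
    intro k
    have := key 0 k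
    simpa using this
  obtain ⟨a, ha⟩ := cauchySeq_tendsto_of_complete h1
  refine ⟨a, ha, fun n => ?_⟩
  have h2 : Tendsto (fun k => f (n + k)) atTop (𝓝 a) := by
    have := (tendsto_add_atTop_iff_nat n).2 ha
    simpa [add_comm] using this
  exact dist_le_of_le_geometric_two_of_tendsto₀ (f := fun k => f (n + k)) (key n) h2

lemma al_dist (n : ℕ) : dist (σ.al n) (σ.al (n + 1)) ≤ 1 * σ.r n := by
  rw [al_succ, one_mul, Real.dist_eq, sub_add_cancel_left, abs_neg, abs_of_nonneg]
  · exact σ.qinv_le n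
  · have := σ.qpos (n + 1); positivity

/-- the rotation number -/
noncomputable def α : ℝ := (σ.lim_exists σ.al 1 zero_le_one σ.al_dist).choose

lemma α_tendsto : Tendsto σ.al atTop (𝓝 σ.α) :=
  (σ.lim_exists σ.al 1 zero_le_one σ.al_dist).choose_spec.1

lemma α_mono : StrictMono σ.al := by
  apply strictMono_nat_of_lt_succ
  intro n
  rw [al_succ]
  have := σ.qpos (n + 1)
  have : 0 < 1 / (σ.q (n + 1) : ℝ) := by positivity
  linarith

lemma α_lt (n : ℕ) : σ.al n < σ.α :=
  (σ.α_mono (Nat.lt_succ_self n)).trans_le (σ.α_mono.monotone.ge_of_tendsto σ.α_tendsto _)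

/-- approximating diffeomorphisms (all integer powers at once) -/
noncomputable def U (n : ℕ) (e : ℤ) (z : Torus2) : Torus2 :=
  (σ.st n).S ((e * σ.al n : ℝ) : Torus1) z

lemma U_eq (n : ℕ) (e : ℤ) (z : Torus2) :
    σ.U n e z = (σ.st (n + 1)).S ((e * σ.al n : ℝ) : Torus1) z := by
  obtain ⟨p, hp⟩ := σ.al_int n
  have := (σ.step n).comm (e * p) z
  unfold U
  rw [hp]
  push_cast at this
  rw [mul_div_assoc] at this
  exact this.symm

lemma U_dist (e : ℤ) (z : Torus2) (n : ℕ) :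
    dist (σ.U n e z) (σ.U (n + 1) e z) ≤ |(e : ℝ)| * σ.r n := by
  rw [U_eq]
  unfold U
  refine ((σ.st (n + 1)).S_dist _ _ _).trans ?_
  have h1 : dist ((e * σ.al n : ℝ) : Torus1) ((e * σ.al (n + 1) : ℝ) : Torus1) ≤
      |(e : ℝ)| * (1 / σ.q (n + 1)) := by
    refine (coe_dist_le _ _).trans ?_
    rw [al_succ, ← mul_sub, abs_mul, sub_add_cancel_left, abs_neg]
    have := σ.qpos (n + 1)
    rw [abs_of_nonneg (a := 1 / (σ.q (n + 1) : ℝ)) (by positivity)]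
  refine (mul_le_mul_of_nonneg_left h1 (Nat.cast_nonneg _)).trans (le_of_eq ?_)
  unfold r
  ring

/-- powers of the limit diffeomorphism -/
noncomputable def W (e : ℤ) (z : Torus2) : Torus2 :=
  (σ.lim_exists (fun n => σ.U n e z) |(e : ℝ)| (abs_nonneg _) (σ.U_dist e z)).choose

lemma W_tendsto (e : ℤ) (z : Torus2) : Tendsto (fun n => σ.U n e z) atTop (𝓝 (σ.W e z)) :=
  (σ.lim_exists (fun n => σ.U n e z) |(e : ℝ)| (abs_nonneg _) (σ.U_dist e z)).choose_spec.1

lemma W_dist (e : ℤ) (z : Torus2) (n : ℕ) :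
    dist (σ.U n e z) (σ.W e z) ≤ |(e : ℝ)| * (2 * σ.r n) :=
  (σ.lim_exists (fun n => σ.U n e z) |(e : ℝ)| (abs_nonneg _) (σ.U_dist e z)).choose_spec.2 n

lemma r_tendsto : Tendsto σ.r atTop (𝓝 0) :=
  squeeze_zero (fun n => (σ.r_pos n).le) σ.r_small
    (tendsto_pow_atTop_nhds_zero_of_lt_one (by norm_num) (by norm_num))

lemma W_unif (e : ℤ) : TendstoUniformly (fun n => σ.U n e) (σ.W e) atTop := by
  rw [Metric.tendstoUniformly_iff]
  intro ε hε
  have h : Tendsto (fun n => |(e : ℝ)| * (2 * σ.r n)) atTop (𝓝 0) := by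
    simpa using (σ.r_tendsto.const_mul 2).const_mul |(e : ℝ)|
  filter_upwards [h.eventually (gt_mem_nhds hε)] with n hn z
  rw [dist_comm]
  exact (σ.W_dist e z n).trans_lt hn

lemma W_cont (e : ℤ) : Continuous (σ.W e) :=
  (σ.W_unif e).continuous (Frequently.of_forall fun n => (σ.st n).S_cont _)

lemma W_add (e e' : ℤ) (z : Torus2) : σ.W e (σ.W e' z) = σ.W (e + e') z := by
  have h1 := (σ.W_unif e).tendsto_comp ((σ.W_cont e).continuousAt) (σ.W_tendsto e' z)
  refine tendsto_nhds_unique h1 ?_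
  refine (σ.W_tendsto (e + e') z).congr fun n => ?_
  unfold U
  rw [St.S_add]
  push_cast
  rw [add_mul]
  rfl

lemma W_zero (z : Torus2) : σ.W 0 z = z := by
  refine tendsto_nhds_unique (σ.W_tendsto 0 z) ?_
  refine tendsto_const_nhds.congr fun n => ?_
  unfold U
  simp [St.S_zero]

/-- the diffeomorphism -/
noncomputable def T : Torus2 → Torus2 := σ.W 1

lemma T_iter (i : ℕ) (z : Torus2) : σ.T^[i] z = σ.W i z := by
  induction i with
  | zero => simp [W_zero]
  | succ i ih =>
    rw [Function.iterate_succ_apply', ih]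
    unfold T
    rw [W_add]
    push_cast
    rw [add_comm]

lemma T_bij : Function.Bijective σ.T := by
  refine ⟨Function.LeftInverse.injective (g := σ.W (-1)) fun z => ?_,
    Function.RightInverse.surjective (g := σ.W (-1)) fun z => ?_⟩
  · unfold T; rw [W_add]; simp [W_zero]
  · unfold T; rw [W_add]; simp [W_zero]

lemma T_inv : Function.invFun σ.T = σ.W (-1) := by
  funext z
  apply σ.T_bij.1
  rw [Function.rightInverse_invFun σ.T_bij.2]
  unfold T; rw [W_add]; simp [W_zero]

lemma W_smooth (e : ℤ) : ∃ F : ℝ × ℝ → ℝ × ℝ, ContDiff ℝ ∞ F ∧ IsLiftOf F (σ.W e) := by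
  let f : ℕ → ℝ × ℝ → ℝ × ℝ := fun n p =>
    (σ.st (n + 1)).F (e * σ.al (n + 1)) p - (σ.st (n + 1)).F (e * σ.al n) p
  have hF : ∀ n t, ContDiff ℝ ∞ ((σ.st n).F t) := by
    intro n t
    unfold St.F
    have h1 := (σ.st n).bdG.1
    have h2 := (σ.st n).bdG'.1
    exact h1.comp (h2.add contDiff_const)
  have hb : ∀ k n, k ≤ n → ∀ x, ‖iteratedFDeriv ℝ k (f n) x‖ ≤ |(e : ℝ)| * (1 / 2) ^ n := by
    intro k n hk x
    refine ((σ.step n).smooth k hk _ _ x).trans (le_of_eq ?_)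
    have := σ.qpos (n + 1)
    rw [al_succ, ← mul_sub, add_sub_cancel_left, abs_mul,
      abs_of_nonneg (a := 1 / (σ.q (n + 1) : ℝ)) (by positivity), one_div_pow]
    field_simp
  have hsum : Summable (fun n : ℕ => |(e : ℝ)| * (1 / 2 : ℝ) ^ n) :=
    (summable_geometric_of_lt_one (by norm_num) (by norm_num)).mul_left _
  have hs : ∀ p, Summable (fun n => f n p) := by
    intro p
    refine Summable.of_norm_bounded hsum fun n => ?_
    have := hb 0 n (Nat.zero_le _) p
    simpa using this
  refine ⟨fun p => p + ∑' n, f n p, ?_, ?_⟩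
  · refine contDiff_id.add ?_
    refine contDiff_tsum_of_eventually (v := fun _ n => |(e : ℝ)| * (1 / 2) ^ n) ?_ ?_ ?_
    · intro n; exact (hF _ _).sub (hF _ _)
    · intro k _; exact hsum
    · intro k _
      rw [Nat.cofinite_eq_atTop]
      filter_upwards [eventually_ge_atTop k] with n hn
      exact hb k n hn
  · intro p
    have h1 : ∀ n, torusProj (p + ∑ k ∈ Finset.range n, f k p) = σ.U n e (torusProj p) := by
      intro n
      induction n with
      | zero => simp [U, al_zero, St.S_zero]
      | succ n ih =>
        rw [Finset.sum_range_succ, ← add_assoc, torusProj_add, ih, torusProj_sub,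
          (σ.st (n + 1)).F_lift, (σ.st (n + 1)).F_lift, ← U_eq]
        unfold U
        simp
    have h2 : Tendsto (fun n => torusProj (p + ∑ k ∈ Finset.range n, f k p)) atTop
        (𝓝 (torusProj (p + ∑' n, f n p))) :=
      (torusProj_continuous.tendsto _).comp ((hs p).hasSum.tendsto_sum_nat.const_add p)
    exact tendsto_nhds_unique h2 ((σ.W_tendsto e _).congr fun n => (h1 n).symm)

lemma T_diffeo : IsCkTorusDiffeo ⊤ σ.T := by
  refine ⟨σ.T_bij, σ.W_smooth 1, ?_⟩
  rw [T_inv]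
  exact σ.W_smooth (-1)

lemma α_irr : Irrational σ.α := by
  rintro ⟨x, hx⟩
  have hd : 0 < x.den := x.den_pos
  obtain ⟨n, hn⟩ : ∃ n : ℕ, x.den < 2 ^ n := ⟨x.den, Nat.lt_two_pow_self⟩
  obtain ⟨p, hp⟩ := σ.al_int n
  have h1 := σ.α_lt n
  have h2 : σ.α - σ.al n ≤ 2 * σ.r n := by
    have := (σ.lim_exists σ.al 1 zero_le_one σ.al_dist).choose_spec.2 n
    rw [Real.dist_eq, abs_sub_comm, one_mul] at this
    exact (le_abs_self _).trans this
  have hq := σ.qpos n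
  have hx' : σ.α = x.num / x.den := by
    rw [← hx]; exact_mod_cast (Rat.num_div_den x).symm
  have hd' : (0 : ℝ) < x.den := by exact_mod_cast hd
  have h3 : σ.α - σ.al n = ((x.num * σ.q n - p * x.den : ℤ) : ℝ) / (x.den * σ.q n) := by
    rw [hx', hp]; push_cast; field_simp
  have h4 : 0 < ((x.num * σ.q n - p * x.den : ℤ) : ℝ) := by
    by_contra h
    have : σ.α - σ.al n ≤ 0 := by
      rw [h3]; exact div_nonpos_of_nonpos_of_nonneg (not_lt.1 h) (by positivity)
    linarith
  have h5 : (1 : ℝ) ≤ ((x.num * σ.q n - p * x.den : ℤ) : ℝ) := by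
    have h6 : (0 : ℤ) < x.num * σ.q n - p * x.den := by exact_mod_cast h4
    exact_mod_cast h6
  have h7 : 1 / (x.den * σ.q n : ℝ) ≤ 2 * (1 / (100 * 2 ^ n * σ.q n)) := by
    calc 1 / (x.den * σ.q n : ℝ) ≤ σ.α - σ.al n := by rw [h3]; gcongr
      _ ≤ 2 * σ.r n := h2
      _ ≤ _ := by have := σ.r_le n; linarith
  have hn' : (x.den : ℝ) < 2 ^ n := by exact_mod_cast hn
  rw [mul_one_div, div_le_div_iff₀ (by positivity) (by positivity)] at h7
  have : (0 : ℝ) < σ.q n := hq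
  nlinarith

end Sq
end Abc

end

section
open MeasureTheory Filter Set
open scoped Topology ENNReal NNReal ContDiff

namespace Abc

/-- Lipschitz functions determine a measure -/
lemma ext_of_lip {μ ν : Measure Torus2} [IsProbabilityMeasure μ] [IsProbabilityMeasure ν]
    (h : ∀ (f : Torus2 → ℝ) (C : ℝ), 0 ≤ C → (∀ z w, |f z - f w| ≤ C * dist z w) →
      ∫ z, f z ∂μ = ∫ z, f z ∂ν) : μ = ν := by
  have key : ∀ F : Set Torus2, IsClosed F → μ F = ν F := by
    intro F hF
    rcases F.eq_empty_or_nonempty with rfl | hne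
    · simp
    let f : ℕ → Torus2 → ℝ := fun k z => max 0 (1 - k * Metric.infDist z F)
    have hfl : ∀ k z w, |f k z - f k w| ≤ k * dist z w := by
      intro k z w
      have h1 : |Metric.infDist z F - Metric.infDist w F| ≤ dist z w := by
        have := (Metric.lipschitz_infDist_pt F).dist_le_mul z w
        simpa [Real.dist_eq] using this
      calc |f k z - f k w| ≤ |(1 - k * Metric.infDist z F) - (1 - k * Metric.infDist w F)| := by
            have := abs_max_sub_max_le_abs (1 - k * Metric.infDist z F) (1 - k * Metric.infDist w F) 0
            simpa [f, max_comm] using this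
        _ = k * |Metric.infDist z F - Metric.infDist w F| := by
            rw [show (1 - k * Metric.infDist z F) - (1 - k * Metric.infDist w F) =
              -(k * (Metric.infDist z F - Metric.infDist w F)) by ring, abs_neg, abs_mul,
              Nat.abs_cast]
        _ ≤ _ := by gcongr
    have hlim : ∀ (ρ : Measure Torus2) [IsProbabilityMeasure ρ],
        Tendsto (fun k => ∫ z, f k z ∂ρ) atTop (𝓝 (∫ z, F.indicator 1 z ∂ρ)) := by
      intro ρ _
      refine tendsto_integral_of_dominated_convergence (fun _ => 1) ?_ (integrable_const _) ?_ ?_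
      · intro k
        have : Continuous (f k) := by
          have := Metric.continuous_infDist_pt F
          fun_prop
        exact this.aestronglyMeasurable
      · intro k
        refine Eventually.of_forall fun z => ?_
        have h0 : 0 ≤ f k z := le_max_left _ _
        rw [Real.norm_eq_abs, abs_of_nonneg h0]
        refine max_le zero_le_one ?_
        have : 0 ≤ k * Metric.infDist z F := mul_nonneg (Nat.cast_nonneg _) Metric.infDist_nonneg
        linarith
      · refine Eventually.of_forall fun z => ?_
        by_cases hz : z ∈ F
        · rw [indicator_of_mem hz]
          have : ∀ k, f k z = 1 := by
            intro k; simp [f, Metric.infDist_zero_of_mem hz]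
          simp [this]
        · rw [indicator_of_notMem hz]
          have hpos : 0 < Metric.infDist z F := (hF.notMem_iff_infDist_pos hne).1 hz
          refine tendsto_const_nhds.congr' ?_
          have := tendsto_natCast_atTop_atTop (R := ℝ) |>.atTop_mul_const hpos
          filter_upwards [this.eventually_ge_atTop 1] with k hk
          simp only [f]
          rw [max_eq_left]
          linarith
    have h1 := hlim μ
    have h2 := hlim ν
    have h3 : ∀ k, ∫ z, f k z ∂μ = ∫ z, f k z ∂ν := fun k => h (f k) k (Nat.cast_nonneg _) (hfl k)
    simp_rw [h3] at h1
    have h4 := tendsto_nhds_unique h1 h2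
    rw [integral_indicator_one hF.measurableSet, integral_indicator_one hF.measurableSet] at h4
    exact (measureReal_eq_measureReal_iff).1 h4
  apply ext_of_generate_finite _ ?_ isPiSystem_isClosed
  · exact fun F hF => key F hF
  · exact key _ isClosed_univ
  · rw [BorelSpace.measurable_eq (α := Torus2), borel_eq_generateFrom_isClosed]

lemma riemann (g : Torus1 → ℝ) (C : ℝ) (hC : 0 ≤ C) (hg : ∀ t u, |g t - g u| ≤ C * dist t u)
    (N : ℕ) (hN : 0 < N) :
    |(1 / N : ℝ) * ∑ i ∈ Finset.range N, g ((i / N : ℝ) : Torus1) - ∫ t, g t| ≤ C / N := by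
  have hN' : (0 : ℝ) < N := by exact_mod_cast hN
  have hc : Continuous g := by
    have : LipschitzWith ⟨C, hC⟩ g := LipschitzWith.of_dist_le_mul hg
    exact this.continuous
  have hc' : Continuous fun x : ℝ => g (x : Torus1) := hc.comp (AddCircle.continuous_mk' 1)
  have h1 : ∫ t, g t = ∑ i ∈ Finset.range N, ∫ x in (i / N : ℝ)..((i + 1 : ℕ) / N : ℝ), g (x : Torus1) := by
    rw [intervalIntegral.sum_integral_adjacent_intervals (a := fun i : ℕ => (i / N : ℝ))]
    · rw [← AddCircle.intervalIntegral_preimage 1 0 g]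
      congr 1
      · simp
      · simp [hN'.ne']
    · intro k _
      exact hc'.intervalIntegrable _ _
  rw [h1, Finset.mul_sum, ← Finset.sum_sub_distrib]
  have h2 : ∀ i ∈ Finset.range N, |(1 / N : ℝ) * g ((i / N : ℝ) : Torus1) -
      ∫ x in (i / N : ℝ)..((i + 1 : ℕ) / N : ℝ), g (x : Torus1)| ≤ C / N * (1 / N) := by
    intro i _
    have hlen : ((i + 1 : ℕ) / N : ℝ) - (i / N : ℝ) = 1 / N := by push_cast; ring
    have h3 : (1 / N : ℝ) * g ((i / N : ℝ) : Torus1) =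
        ∫ x in (i / N : ℝ)..((i + 1 : ℕ) / N : ℝ), g ((i / N : ℝ) : Torus1) := by
      rw [intervalIntegral.integral_const, hlen, smul_eq_mul]
    rw [h3, ← intervalIntegral.integral_sub (by simp) (hc'.intervalIntegrable _ _)]
    have hle : (i / N : ℝ) ≤ ((i + 1 : ℕ) / N : ℝ) := by
      have : (0 : ℝ) ≤ 1 / N := by positivity
      linarith
    have := intervalIntegral.norm_integral_le_of_norm_le_const (a := (i / N : ℝ))
      (b := ((i + 1 : ℕ) / N : ℝ)) (C := C / N)
      (f := fun x => g ((i / N : ℝ) : Torus1) - g (x : Torus1)) ?_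
    · rw [hlen, abs_of_nonneg (a := (1 / N : ℝ)) (by positivity)] at this
      exact this
    · intro x hx
      rw [uIoc_of_le hle] at hx
      refine (hg _ _).trans ?_
      rw [div_eq_mul_one_div C]
      refine mul_le_mul_of_nonneg_left ((coe_dist_le _ _).trans ?_) hC
      rw [abs_sub_comm, abs_of_nonneg (by linarith [hx.1])]
      linarith [hx.2]
  refine (Finset.abs_sum_le_sum_abs _ _).trans ((Finset.sum_le_sum h2).trans (le_of_eq ?_))
  rw [Finset.sum_const, Finset.card_range, nsmul_eq_mul]
  field_simp

namespace Sq
variable (σ : Sq)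

/-- number of blocks -/
def N (n : ℕ) : ℕ := σ.q (n + 1) / σ.q n

lemma N_mul (n : ℕ) : σ.q n * σ.N n = σ.q (n + 1) := Nat.mul_div_cancel' (σ.step n).dvd

lemma N_mulR (n : ℕ) : (σ.q n : ℝ) * σ.N n = σ.q (n + 1) := by exact_mod_cast σ.N_mul n

lemma N_pos (n : ℕ) : 0 < σ.N n := by
  rcases Nat.eq_zero_or_pos (σ.N n) with h | h
  · have h1 := σ.N_mul n
    rw [h] at h1
    have := (σ.st (n + 1)).q_pos
    simp only [q] at h1
    omega
  · exact h

lemma N_posR (n : ℕ) : (0 : ℝ) < σ.N n := by exact_mod_cast σ.N_pos n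

lemma N_big (n : ℕ) : 100 * 2 ^ n * (σ.K (n + 1) : ℝ) ≤ σ.N n := by
  have := σ.big' n
  rw [← σ.N_mulR n, mul_comm (σ.q n : ℝ)] at this
  exact le_of_mul_le_mul_right this (σ.qpos n)

lemma U_grid (n i : ℕ) (z : Torus2) :
    σ.U (n + 1) ((i * σ.q n : ℕ) : ℤ) z = (σ.st (n + 1)).S ((i / σ.N n : ℝ) : Torus1) z := by
  unfold U
  congr 1
  obtain ⟨p, hp⟩ := σ.al_int n
  have h1 := σ.qpos n
  have h2 := σ.N_posR n
  have : (((i * σ.q n : ℕ) : ℤ) : ℝ) * σ.al (n + 1) = ((i * p : ℤ) : ℝ) + i / σ.N n := by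
    rw [al_succ, hp, ← σ.N_mulR n]
    push_cast
    field_simp
  rw [this, AddCircle.coe_add, coe_int, zero_add]

lemma orbit_grid (n i : ℕ) (hi : i ≤ σ.N n) (z : Torus2) :
    dist (σ.T^[i * σ.q n] z) ((σ.st (n + 1)).S ((i / σ.N n : ℝ) : Torus1) z) ≤
      1 / (100 * 2 ^ n) := by
  rw [T_iter, ← U_grid, dist_comm]
  refine (σ.W_dist _ _ _).trans ?_
  have h1 := σ.r_le (n + 1)
  have h2 := σ.qpos (n + 1)
  have h3 : |(((i * σ.q n : ℕ) : ℤ) : ℝ)| ≤ σ.q (n + 1) := by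
    rw [Int.cast_natCast, Nat.abs_cast]
    have : i * σ.q n ≤ σ.q (n + 1) := by
      rw [← σ.N_mul n, mul_comm]; exact Nat.mul_le_mul_left _ hi
    exact_mod_cast this
  have h4 := σ.r_pos (n + 1)
  calc |(((i * σ.q n : ℕ) : ℤ) : ℝ)| * (2 * σ.r (n + 1))
      ≤ σ.q (n + 1) * (2 * (1 / (100 * 2 ^ (n + 1) * σ.q (n + 1)))) := by gcongr
    _ = _ := by rw [pow_succ]; field_simp

lemma T_mp : MeasurePreserving σ.T volume volume := by
  have hc : Continuous σ.T := σ.W_cont 1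
  refine ⟨hc.measurable, ?_⟩
  have : IsProbabilityMeasure (Measure.map σ.T volume) :=
    Measure.isProbabilityMeasure_map hc.aemeasurable
  apply ext_of_forall_integral_eq_of_IsFiniteMeasure
  intro f
  rw [integral_map hc.aemeasurable f.continuous.aestronglyMeasurable]
  have h1 : Tendsto (fun n => ∫ z, f (σ.U n 1 z)) atTop (𝓝 (∫ z, f (σ.T z))) := by
    refine tendsto_integral_of_dominated_convergence (fun _ => ‖f‖) ?_ (integrable_const _) ?_ ?_
    · intro n
      exact (f.continuous.comp ((σ.st n).S_cont _)).aestronglyMeasurable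
    · intro n
      exact Eventually.of_forall fun z => f.norm_coe_le_norm _
    · exact Eventually.of_forall fun z => (f.continuous.tendsto _).comp (σ.W_tendsto 1 z)
  refine tendsto_nhds_unique h1 (tendsto_const_nhds.congr fun n => ?_)
  have h2 := (σ.st n).S_mp ((((1 : ℤ) : ℝ) * σ.al n : ℝ) : Torus1)
  have h3 := integral_map (μ := volume) h2.measurable.aemeasurable
    (f := f) f.continuous.aestronglyMeasurable
  rw [h2.map_eq] at h3
  exact h3

lemma avg_close (f : Torus2 → ℝ) (C : ℝ) (hC : 0 ≤ C) (hf : ∀ z w, |f z - f w| ≤ C * dist z w)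
    (n : ℕ) (z : Torus2) :
    |(1 / σ.N n : ℝ) * ∑ i ∈ Finset.range (σ.N n), f (σ.T^[i * σ.q n] z) - ∫ w, f w| ≤
      C * (3 / ((n : ℝ) + 1)) := by
  have hN := σ.N_posR n
  have hs := σ.step n
  set g : Torus1 → ℝ := fun t => f ((σ.st (n + 1)).S t z) with hg
  have hgl : ∀ t u, |g t - g u| ≤ C * σ.K (n + 1) * dist t u := by
    intro t u
    refine (hf _ _).trans ?_
    rw [mul_assoc]
    exact mul_le_mul_of_nonneg_left ((σ.st (n + 1)).S_dist t u z) hC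
  have hn2 : ((n : ℝ) + 1) ≤ 2 ^ n := by
    have : n + 1 ≤ 2 ^ n := Nat.lt_two_pow_self
    exact_mod_cast this
  have h100 : 1 / (100 * 2 ^ n : ℝ) ≤ 1 / ((n : ℝ) + 1) := by
    apply one_div_le_one_div_of_le (by positivity)
    have : (0 : ℝ) < 2 ^ n := by positivity
    linarith
  have h1 := riemann g (C * σ.K (n + 1)) (by positivity) hgl (σ.N n) (σ.N_pos n)
  have h1' : C * σ.K (n + 1) / σ.N n ≤ C * (1 / ((n : ℝ) + 1)) := by
    rw [mul_div_assoc]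
    refine mul_le_mul_of_nonneg_left (le_trans ?_ h100) hC
    rw [div_le_div_iff₀ hN (by positivity)]
    have := σ.N_big n
    linarith
  have h2 := hs.ue f C hC hf z
  have h3 : |(1 / σ.N n : ℝ) * ∑ i ∈ Finset.range (σ.N n), f (σ.T^[i * σ.q n] z) -
      (1 / σ.N n : ℝ) * ∑ i ∈ Finset.range (σ.N n), g ((i / σ.N n : ℝ) : Torus1)| ≤
      C * (1 / ((n : ℝ) + 1)) := by
    rw [← mul_sub, ← Finset.sum_sub_distrib, abs_mul, abs_of_nonneg (by positivity)]
    have h4 : |∑ i ∈ Finset.range (σ.N n), (f (σ.T^[i * σ.q n] z) - g ((i / σ.N n : ℝ) : Torus1))|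
        ≤ ∑ i ∈ Finset.range (σ.N n), C * (1 / ((n : ℝ) + 1)) := by
      refine (Finset.abs_sum_le_sum_abs _ _).trans (Finset.sum_le_sum fun i hi => ?_)
      refine (hf _ _).trans (mul_le_mul_of_nonneg_left ?_ hC)
      exact (σ.orbit_grid n i (Finset.mem_range.1 hi).le z).trans h100
    rw [Finset.sum_const, Finset.card_range, nsmul_eq_mul] at h4
    calc (1 / σ.N n : ℝ) * _ ≤ (1 / σ.N n : ℝ) * (σ.N n * (C * (1 / ((n : ℝ) + 1)))) := by gcongr
      _ = _ := by field_simp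
  have h5 : C / ((n : ℝ) + 1) = C * (1 / ((n : ℝ) + 1)) := by ring
  rw [h5] at h2
  have h6 := abs_sub_le ((1 / σ.N n : ℝ) * ∑ i ∈ Finset.range (σ.N n), f (σ.T^[i * σ.q n] z))
    ((1 / σ.N n : ℝ) * ∑ i ∈ Finset.range (σ.N n), g ((i / σ.N n : ℝ) : Torus1)) (∫ w, f w)
  have h7 := abs_sub_le ((1 / σ.N n : ℝ) * ∑ i ∈ Finset.range (σ.N n), g ((i / σ.N n : ℝ) : Torus1))
    (∫ t, g t) (∫ w, f w)
  have h8 : C * (3 / ((n : ℝ) + 1)) = 3 * (C * (1 / ((n : ℝ) + 1))) := by ring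
  rw [h8]
  linarith

lemma T_ue : UniquelyErgodicWithVolume σ.T := by
  refine ⟨σ.T_mp, fun μ hμ hinv => ?_⟩
  refine ext_of_lip fun f C hC hf => ?_
  have hc : Continuous f := by
    have : LipschitzWith ⟨C, hC⟩ f := LipschitzWith.of_dist_le_mul hf
    exact this.continuous
  have hfi : ∀ (g : Torus2 → ℝ), Continuous g → Integrable g μ := fun g hg =>
    hg.integrable_of_hasCompactSupport (HasCompactSupport.of_compactSpace g)
  have hcT : Continuous σ.T := σ.W_cont 1
  have h1 : ∀ n : ℕ, |∫ z, f z ∂μ - ∫ w, f w| ≤ C * (3 / ((n : ℝ) + 1)) := by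
    intro n
    have hN := σ.N_posR n
    have hci : ∀ i, Continuous fun z => f (σ.T^[i * σ.q n] z) := fun i =>
      hc.comp (hcT.iterate _)
    have h2 : ∫ z, (1 / σ.N n : ℝ) * ∑ i ∈ Finset.range (σ.N n), f (σ.T^[i * σ.q n] z) ∂μ =
        ∫ z, f z ∂μ := by
      rw [integral_const_mul, integral_finsetSum _ fun i _ => hfi _ (hci i)]
      have h3 : ∀ i ∈ Finset.range (σ.N n), ∫ z, f (σ.T^[i * σ.q n] z) ∂μ = ∫ z, f z ∂μ := by
        intro i _
        have h4 := hinv.iterate (i * σ.q n)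
        have h5 := integral_map (μ := μ) h4.measurable.aemeasurable (f := f)
          hc.aestronglyMeasurable
        rw [h4.map_eq] at h5
        exact h5.symm
      rw [Finset.sum_congr rfl h3, Finset.sum_const, Finset.card_range, nsmul_eq_mul]
      field_simp
    have h6 : ∫ w, f w = ∫ _z, (∫ w, f w) ∂μ := by simp
    rw [← h2]
    conv_lhs => rw [h6]
    rw [← integral_sub]
    · have := norm_integral_le_of_norm_le_const (μ := μ) (C := C * (3 / ((n : ℝ) + 1)))
        (f := fun z => (1 / σ.N n : ℝ) * ∑ i ∈ Finset.range (σ.N n), f (σ.T^[i * σ.q n] z) -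
          ∫ w, f w) (Eventually.of_forall fun z => σ.avg_close f C hC hf n z)
      simpa using this
    · apply hfi
      exact continuous_const.mul (continuous_finsetSum _ fun i _ => hci i)
    · exact integrable_const _
  have h2 : Tendsto (fun n : ℕ => C * (3 / ((n : ℝ) + 1))) atTop (𝓝 0) := by
    have := (tendsto_one_div_add_atTop_nhds_zero_nat (𝕜 := ℝ)).const_mul (C * 3)
    simpa [mul_assoc, div_eq_mul_inv] using this
  have h3 := ge_of_tendsto' h2 h1
  exact sub_eq_zero.1 (abs_eq_zero.1 (le_antisymm h3 (abs_nonneg _)))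

end Sq
end Abc

end

section
open MeasureTheory Filter Set
open scoped Topology ENNReal NNReal ContDiff

namespace Abc
namespace Sq
variable (σ : Sq)

/-- approximate factor maps -/
def ps (n : ℕ) (z : Torus2) : Torus1 := ((σ.st n).H.symm z).1

lemma q_mono : Monotone σ.q := by
  apply monotone_nat_of_le_succ
  intro n
  have h1 := (σ.st (n + 1)).q_pos
  exact Nat.le_of_dvd h1 (σ.step n).dvd

lemma ps_lim (z : Torus2) : ∃ a, Tendsto (fun n => σ.ps n z) atTop (𝓝 a) ∧
    ∀ n, dist (σ.ps n z) a ≤ 2 / σ.q n := by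
  have key : ∀ n k, dist (σ.ps (n + k) z) (σ.ps (n + k + 1) z) ≤ (2 / σ.q n) / 2 / 2 ^ k := by
    intro n k
    rw [dist_comm]
    refine ((σ.step (n + k)).psi z).trans ?_
    have h1 := σ.qpos n
    have h2 : (σ.q n : ℝ) ≤ σ.q (n + k) := by exact_mod_cast σ.q_mono (Nat.le_add_right n k)
    have h3 : (2 / σ.q n : ℝ) / 2 / 2 ^ k = 1 / (2 ^ k * σ.q n) := by field_simp
    rw [h3]
    apply one_div_le_one_div_of_le (by positivity)
    gcongr
    · norm_num
    · exact Nat.le_add_left k n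
  have h1 : CauchySeq (fun n => σ.ps n z) := by
    refine cauchySeq_of_le_geometric_two (C := 2 / σ.q 0) ?_
    intro k
    have := key 0 k
    simpa using this
  obtain ⟨a, ha⟩ := cauchySeq_tendsto_of_complete h1
  refine ⟨a, ha, fun n => ?_⟩
  have h2 : Tendsto (fun k => σ.ps (n + k) z) atTop (𝓝 a) := by
    have := (tendsto_add_atTop_iff_nat n).2 ha
    simpa [add_comm] using this
  exact dist_le_of_le_geometric_two_of_tendsto₀ (f := fun k => σ.ps (n + k) z) (key n) h2

/-- the factor map -/
noncomputable def ψ (z : Torus2) : Torus1 := (σ.ps_lim z).choose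

lemma ψ_tendsto (z : Torus2) : Tendsto (fun n => σ.ps n z) atTop (𝓝 (σ.ψ z)) :=
  (σ.ps_lim z).choose_spec.1

lemma ψ_dist (z : Torus2) (n : ℕ) : dist (σ.ps n z) (σ.ψ z) ≤ 2 / σ.q n :=
  (σ.ps_lim z).choose_spec.2 n

lemma q_tendsto : Tendsto (fun n => 2 / (σ.q n : ℝ)) atTop (𝓝 0) := by
  rw [← tendsto_add_atTop_iff_nat 1]
  have := σ.r_tendsto.const_mul 2
  rw [mul_zero] at this
  refine squeeze_zero (fun n => ?_) (fun n => ?_) this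
  · have := σ.qpos (n + 1); positivity
  · have := σ.qinv_le n
    rw [div_eq_mul_one_div]; linarith

lemma ps_cont (n : ℕ) : Continuous (σ.ps n) := continuous_fst.comp (σ.st n).cont'

lemma ψ_unif : TendstoUniformly σ.ps σ.ψ atTop := by
  rw [Metric.tendstoUniformly_iff]
  intro ε hε
  filter_upwards [σ.q_tendsto.eventually (gt_mem_nhds hε)] with n hn z
  rw [dist_comm]
  exact (σ.ψ_dist z n).trans_lt hn

lemma ψ_cont : Continuous σ.ψ := σ.ψ_unif.continuous (Frequently.of_forall fun n => σ.ps_cont n)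

lemma ψ_T (z : Torus2) : σ.ψ (σ.T z) = σ.ψ z + (σ.α : Torus1) := by
  have h1 := σ.ψ_unif.tendsto_comp σ.ψ_cont.continuousAt (σ.W_tendsto 1 z)
  refine tendsto_nhds_unique h1 ?_
  have h2 : Tendsto (fun n => ((σ.al n : ℝ) : Torus1)) atTop (𝓝 (σ.α : Torus1)) :=
    ((AddCircle.continuous_mk' 1).tendsto _).comp σ.α_tendsto
  refine ((σ.ψ_tendsto z).add h2).congr fun n => ?_
  unfold ps U
  rw [St.S_fst]
  simp

lemma ψ_map : Measure.map σ.ψ volume = volume := by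
  have : IsProbabilityMeasure (Measure.map σ.ψ volume) :=
    Measure.isProbabilityMeasure_map σ.ψ_cont.aemeasurable
  apply ext_of_forall_integral_eq_of_IsFiniteMeasure
  intro f
  rw [integral_map σ.ψ_cont.aemeasurable f.continuous.aestronglyMeasurable]
  have h1 : Tendsto (fun n => ∫ z, f (σ.ps n z)) atTop (𝓝 (∫ z, f (σ.ψ z))) := by
    refine tendsto_integral_of_dominated_convergence (fun _ => ‖f‖) ?_ (integrable_const _) ?_ ?_
    · intro n
      exact (f.continuous.comp (σ.ps_cont n)).aestronglyMeasurable
    · intro n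
      exact Eventually.of_forall fun z => f.norm_coe_le_norm _
    · exact Eventually.of_forall fun z => (f.continuous.tendsto _).comp (σ.ψ_tendsto z)
  refine tendsto_nhds_unique h1 (tendsto_const_nhds.congr fun n => ?_)
  have h2 : MeasurePreserving (σ.ps n) volume volume :=
    (measurePreserving_fst (μ := (volume : Measure Torus1)) (ν := (volume : Measure Torus1))).comp
      (σ.st n).mp'
  have h3 := integral_map (μ := volume) h2.measurable.aemeasurable
    (f := f) f.continuous.aestronglyMeasurable
  rw [h2.map_eq] at h3
  exact h3

lemma W_mp (k : ℤ) : MeasurePreserving (σ.W k) volume volume := by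
  have hc := σ.W_cont k
  refine ⟨hc.measurable, ?_⟩
  have : IsProbabilityMeasure (Measure.map (σ.W k) volume) :=
    Measure.isProbabilityMeasure_map hc.aemeasurable
  apply ext_of_forall_integral_eq_of_IsFiniteMeasure
  intro f
  rw [integral_map hc.aemeasurable f.continuous.aestronglyMeasurable]
  have h1 : Tendsto (fun n => ∫ z, f (σ.U n k z)) atTop (𝓝 (∫ z, f (σ.W k z))) := by
    refine tendsto_integral_of_dominated_convergence (fun _ => ‖f‖) ?_ (integrable_const _) ?_ ?_
    · intro n
      exact (f.continuous.comp ((σ.st n).S_cont _)).aestronglyMeasurable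
    · intro n
      exact Eventually.of_forall fun z => f.norm_coe_le_norm _
    · exact Eventually.of_forall fun z => (f.continuous.tendsto _).comp (σ.W_tendsto k z)
  refine tendsto_nhds_unique h1 (tendsto_const_nhds.congr fun n => ?_)
  have h2 := (σ.st n).S_mp (((k : ℝ) * σ.al n : ℝ) : Torus1)
  have h3 := integral_map (μ := volume) h2.measurable.aemeasurable
    (f := f) f.continuous.aestronglyMeasurable
  rw [h2.map_eq] at h3
  exact h3

lemma exists_A0 : ∃ A0 : Set Torus2, MeasurableSet A0 ∧ volume A0ᶜ = 0 ∧ InjOn σ.ψ A0 := by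
  choose G hG1 hG2 hG3 using fun n => (σ.step n).good
  have h1 : ∀ᵐ z ∂(volume : Measure Torus2), ∀ᶠ n in atTop, z ∉ (G n)ᶜ := by
    apply ae_eventually_notMem
    refine ne_top_of_le_ne_top ?_ (ENNReal.tsum_le_tsum hG2)
    rw [ENNReal.tsum_geometric]
    simp
  refine ⟨⋃ n, ⋂ m, ⋂ (_ : n ≤ m), G m, ?_, ?_, ?_⟩
  · exact MeasurableSet.iUnion fun n => MeasurableSet.iInter fun m =>
      MeasurableSet.iInter fun _ => hG1 m
  · refine measure_mono_null ?_ (ae_iff.1 h1)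
    intro z hz hz'
    apply hz
    obtain ⟨n, hn⟩ := eventually_atTop.1 hz'
    refine mem_iUnion.2 ⟨n, mem_iInter.2 fun m => mem_iInter.2 fun hm => ?_⟩
    exact not_notMem.1 (hn m hm)
  · intro z hz w hw hzw
    obtain ⟨n, hn⟩ := mem_iUnion.1 hz
    obtain ⟨n', hn'⟩ := mem_iUnion.1 hw
    have h2 : ∀ m ≥ max n n', dist z w ≤ 1 / ((m : ℝ) + 1) := by
      intro m hm
      apply hG3 m z (mem_iInter.1 (mem_iInter.1 hn m) ((le_max_left _ _).trans hm)) w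
        (mem_iInter.1 (mem_iInter.1 hn' m) ((le_max_right _ _).trans hm))
      have a1 := σ.ψ_dist z (m + 1)
      have a2 := σ.ψ_dist w (m + 1)
      rw [hzw] at a1
      have a3 := dist_triangle_right (σ.ps (m + 1) z) (σ.ps (m + 1) w) (σ.ψ w)
      have a4 : (4 : ℝ) / σ.q (m + 1) = 2 / σ.q (m + 1) + 2 / σ.q (m + 1) := by ring
      change dist (σ.ps (m + 1) z) (σ.ps (m + 1) w) ≤ 4 / σ.q (m + 1)
      rw [a4]
      linarith
    have h3 : dist z w ≤ 0 := by
      refine ge_of_tendsto (tendsto_one_div_add_atTop_nhds_zero_nat (𝕜 := ℝ)) ?_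
      filter_upwards [eventually_ge_atTop (max n n')] with m hm using h2 m hm
    exact dist_le_zero.1 h3

open Classical in
lemma T_iso : IsoToIrrationalRotation σ.T := by
  obtain ⟨A0, hA0, hA0v, hinj⟩ := σ.exists_A0
  let A : Set Torus2 := ⋂ k : ℤ, σ.W k ⁻¹' A0
  have hA : MeasurableSet A := MeasurableSet.iInter fun k => (σ.W_cont k).measurable hA0
  have hAsub : A ⊆ A0 := by
    intro z hz
    have := mem_iInter.1 hz 0
    rwa [mem_preimage, W_zero] at this
  have hinjA : InjOn σ.ψ A := hinj.mono hAsub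
  have hAv : volume Aᶜ = 0 := by
    simp only [A, compl_iInter]
    refine measure_iUnion_null fun k => ?_
    rw [← preimage_compl, (σ.W_mp k).measure_preimage hA0.compl.nullMeasurableSet]
    exact hA0v
  have him : ∀ S ⊆ A, MeasurableSet S → MeasurableSet (σ.ψ '' S) := fun S hS hSm =>
    hSm.image_of_continuousOn_injOn σ.ψ_cont.continuousOn (hinjA.mono hS)
  have hB : MeasurableSet (σ.ψ '' A) := him A subset_rfl hA
  have hTA : MapsTo σ.T A A := by
    intro z hz
    refine mem_iInter.2 fun k => ?_
    rw [mem_preimage]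
    unfold T
    rw [W_add]
    exact mem_iInter.1 hz (k + 1)
  let φ : Torus1 → Torus2 := fun y => if h : ∃ x, x ∈ A ∧ σ.ψ x = y then h.choose else 0
  have hφ : ∀ x ∈ A, φ (σ.ψ x) = x := by
    intro x hx
    have h : ∃ x', x' ∈ A ∧ σ.ψ x' = σ.ψ x := ⟨x, hx, rfl⟩
    simp only [φ]
    rw [dif_pos h]
    exact hinjA h.choose_spec.1 hx h.choose_spec.2
  refine ⟨σ.α, σ.α_irr, A, σ.ψ '' A, σ.ψ, φ, hA, hB, hAv, ?_, hTA, ?_, σ.ψ_cont.measurable, ?_,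
    mapsTo_image _ _, ?_, hφ, ?_, σ.ψ_map, fun x _ => σ.ψ_T x⟩
  · have h1 : MeasurePreserving σ.ψ volume volume := ⟨σ.ψ_cont.measurable, σ.ψ_map⟩
    rw [← h1.measure_preimage hB.compl.nullMeasurableSet]
    refine measure_mono_null ?_ hAv
    intro z hz hzA
    exact hz (mem_image_of_mem _ hzA)
  · rintro _ ⟨x, hx, rfl⟩
    exact ⟨σ.T x, hTA hx, σ.ψ_T x⟩
  · intro S hS
    have h1 : φ ⁻¹' S = σ.ψ '' (A ∩ S) ∪ ((σ.ψ '' A)ᶜ ∩ {_y | (0 : Torus2) ∈ S}) := by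
      ext y
      by_cases hy : y ∈ σ.ψ '' A
      · obtain ⟨x, hx, rfl⟩ := hy
        simp only [mem_preimage, hφ x hx, mem_union, mem_image, mem_inter_iff, mem_compl_iff]
        constructor
        · intro hxS
          exact Or.inl ⟨x, ⟨hx, hxS⟩, rfl⟩
        · rintro (⟨x', ⟨hx', hxS'⟩, h⟩ | ⟨h, _⟩)
          · rw [← hinjA hx' hx h]; exact hxS'
          · exact absurd ⟨x, hx, rfl⟩ h
      · have hy' : ¬ ∃ x, x ∈ A ∧ σ.ψ x = y := hy
        have h0 : φ y = 0 := by simp only [φ]; rw [dif_neg hy']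
        rw [mem_preimage, h0]
        constructor
        · intro h
          exact Or.inr ⟨hy, h⟩
        · rintro (⟨x', ⟨hx', _⟩, h⟩ | ⟨_, h⟩)
          · exact absurd ⟨x', hx', h⟩ hy
          · exact h
    rw [h1]
    exact (him _ inter_subset_left (hA.inter hS)).union (hB.compl.inter (MeasurableSet.const _))
  · rintro _ ⟨x, hx, rfl⟩
    rw [hφ x hx]; exact hx
  · rintro _ ⟨x, hx, rfl⟩
    rw [hφ x hx]

end Sq
end Abc

end

section
open MeasureTheory Filter Set
open scoped Topology ENNReal NNReal ContDiff

namespace Abc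

lemma bowenDist_lt {X : Type*} [PseudoMetricSpace X] (T : X → X) (n : ℕ) (x y : X) {ε : ℝ}
    (hε : 0 < ε) : bowenDist T n x y < ε ↔ ∀ i < n, dist (T^[i] x) (T^[i] y) < ε := by
  unfold bowenDist
  lift ε to ℝ≥0 using hε.le
  have hε' : 0 < ε := by exact_mod_cast hε
  rw [NNReal.coe_lt_coe, Finset.sup_lt_iff (by simpa using hε')]
  simp only [Finset.mem_range, ← NNReal.coe_lt_coe, coe_nndist]

namespace Sq
variable (σ : Sq)

lemma cov (n m : ℕ) (ε : ℝ) (hε : 0 < ε) (h : m * (4 * σ.r (n + 1)) + 1 / ((n : ℝ) + 1) ≤ ε) :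
    ∃ F : Finset Torus2, (F.card : ℝ) ≤ (σ.Q n : ℝ) ^ (1 + 1 / ((n : ℝ) + 1)) ∧
      ∀ y : Torus2, ∃ x ∈ F, bowenDist σ.T m x y < ε := by
  obtain ⟨F, hF1, hF2⟩ := (σ.step n).cover
  refine ⟨F, hF1, fun y => ?_⟩
  obtain ⟨w, hw, hd⟩ := hF2 y
  refine ⟨w, hw, (bowenDist_lt _ _ _ _ hε).2 fun i hi => ?_⟩
  have hU := hd (((i : ℤ) : ℝ) * σ.al (n + 1) : ℝ)
  change dist (σ.U (n + 1) i w) (σ.U (n + 1) i y) < _ at hU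
  have h1 := σ.W_dist i w (n + 1)
  have h2 := σ.W_dist i y (n + 1)
  rw [T_iter, T_iter]
  rw [dist_comm] at h1
  have h3 := dist_triangle4 (σ.W i w) (σ.U (n + 1) i w) (σ.U (n + 1) i y) (σ.W i y)
  have h4 : |((i : ℤ) : ℝ)| * (2 * σ.r (n + 1)) ≤ m * (2 * σ.r (n + 1)) := by
    have := σ.r_pos (n + 1)
    rw [Int.cast_natCast, Nat.abs_cast]
    gcongr
  linarith

lemma cov_exists (m : ℕ) (ε : ℝ) (hε : 0 < ε) :
    ∃ F : Finset Torus2, F.card = bowenCoverNum σ.T m ε ∧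
      ∀ y : Torus2, ∃ x ∈ F, bowenDist σ.T m x y < ε := by
  have h1 : Tendsto (fun n : ℕ => (m : ℝ) * (4 * σ.r (n + 1)) + 1 / ((n : ℝ) + 1)) atTop (𝓝 0) := by
    have a := ((((tendsto_add_atTop_iff_nat 1).2 σ.r_tendsto).const_mul 4).const_mul (m : ℝ)).add
      (tendsto_one_div_add_atTop_nhds_zero_nat (𝕜 := ℝ))
    simpa using a
  obtain ⟨n, hn⟩ := (h1.eventually (gt_mem_nhds hε)).exists
  obtain ⟨F, _, hF⟩ := σ.cov n m ε hε hn.le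
  exact Nat.sInf_mem (s := {N : ℕ | ∃ F : Finset Torus2, F.card = N ∧
    ∀ y : Torus2, ∃ x ∈ F, bowenDist σ.T m x y < ε}) ⟨F.card, F, rfl, hF⟩

lemma num_lower (n : ℕ) (ε : ℝ) (hε : 0 < ε) (hε' : ε ≤ 1 / 16) :
    (σ.Q n : ℝ) ^ (1 - 1 / ((n : ℝ) + 1)) ≤ bowenCoverNum σ.T (σ.q (n + 1)) ε := by
  obtain ⟨F, hF1, hF2⟩ := (σ.step n).sep
  refine hF1.trans ?_
  obtain ⟨E, hE, hE2⟩ := σ.cov_exists (σ.q (n + 1)) ε hε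
  rw [← hE]
  choose f hf1 hf2 using hE2
  have hN := σ.N_posR n
  have : F.card ≤ E.card := by
    refine Finset.card_le_card_of_injOn f (fun y _ => hf1 y) ?_
    intro z hz w hw hzw
    by_contra hne
    obtain ⟨t, ht⟩ := hF2 z hz w hw hne
    obtain ⟨a, ha0, ha1, rfl⟩ : ∃ a : ℝ, 0 ≤ a ∧ a < 1 ∧ (a : Torus1) = t := by
      obtain ⟨b, rfl⟩ := coe_surj t
      refine ⟨Int.fract b, Int.fract_nonneg b, Int.fract_lt_one b, ?_⟩
      have h := Int.self_sub_floor b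
      rw [← h, AddCircle.coe_sub, coe_int, sub_zero]
    set i := ⌊a * σ.N n⌋₊ with hi
    have hi1 : (i : ℝ) ≤ a * σ.N n := Nat.floor_le (by positivity)
    have hi2 : a * σ.N n < i + 1 := Nat.lt_floor_add_one _
    have hiN : i < σ.N n := by
      have : (i : ℝ) < σ.N n := by nlinarith
      exact_mod_cast this
    have hdist : dist ((i / σ.N n : ℝ) : Torus1) (a : Torus1) ≤ 1 / σ.N n := by
      refine (coe_dist_le _ _).trans ?_
      rw [abs_sub_comm, abs_of_nonneg (by rw [sub_nonneg, div_le_iff₀ hN]; exact hi1)]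
      rw [sub_le_iff_le_add, ← add_div, le_div_iff₀ hN]
      linarith
    have hs : ∀ y : Torus2, dist (σ.T^[i * σ.q n] y) ((σ.st (n + 1)).S (a : Torus1) y) ≤ 1 / 50 := by
      intro y
      have h1 := σ.orbit_grid n i hiN.le y
      have h2 := (σ.st (n + 1)).S_dist ((i / σ.N n : ℝ) : Torus1) (a : Torus1) y
      have h2p : (1 : ℝ) ≤ 2 ^ n := one_le_pow₀ (by norm_num)
      have h3 : 1 / (100 * 2 ^ n : ℝ) ≤ 1 / 100 := by
        apply one_div_le_one_div_of_le (by norm_num); linarith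
      have h4 : (σ.K (n + 1) : ℝ) * dist ((i / σ.N n : ℝ) : Torus1) (a : Torus1) ≤ 1 / 100 := by
        have h5 := σ.N_big n
        have h6 := σ.Kone (n + 1)
        calc (σ.K (n + 1) : ℝ) * dist ((i / σ.N n : ℝ) : Torus1) (a : Torus1)
            ≤ σ.K (n + 1) * (1 / σ.N n) := by gcongr
          _ ≤ 1 / 100 := by
            rw [mul_one_div, div_le_div_iff₀ hN (by norm_num)]
            nlinarith
      have h7 := dist_triangle (σ.T^[i * σ.q n] y) ((σ.st (n + 1)).S ((i / σ.N n : ℝ) : Torus1) y)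
        ((σ.st (n + 1)).S (a : Torus1) y)
      have h8 : dist ((σ.st (n + 1)).S ((i / σ.N n : ℝ) : Torus1) y)
        ((σ.st (n + 1)).S (a : Torus1) y) ≤ 1 / 100 := h2.trans h4
      linarith
    have hlt : i * σ.q n < σ.q (n + 1) := by
      rw [← σ.N_mul n, mul_comm]
      exact Nat.mul_lt_mul_of_pos_left hiN (σ.st n).q_pos
    have b1 := (bowenDist_lt _ _ _ _ hε).1 (hf2 z) _ hlt
    have b2 := (bowenDist_lt _ _ _ _ hε).1 (hf2 w) _ hlt
    rw [hzw] at b1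
    have b3 := dist_triangle_left (σ.T^[i * σ.q n] z) (σ.T^[i * σ.q n] w) (σ.T^[i * σ.q n] (f w))
    have c1 := hs z
    have c2 := hs w
    rw [dist_comm] at c1
    have c3 := dist_triangle4 ((σ.st (n + 1)).S (a : Torus1) z) (σ.T^[i * σ.q n] z)
      (σ.T^[i * σ.q n] w) ((σ.st (n + 1)).S (a : Torus1) w)
    linarith
  exact_mod_cast this

lemma Qpos (n : ℕ) : (1 : ℝ) < σ.Q n := by
  have := (σ.step n).Qbig
  have : 1 < σ.Q n := by omega
  exact_mod_cast this

lemma q_atTop : Tendsto (fun n => σ.q (n + 1)) atTop atTop := by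
  refine tendsto_atTop_mono (fun n => ?_) tendsto_id
  have h := (σ.step n).big
  have h1 := (σ.st n).q_pos
  have h2 := (σ.st (n + 1)).hK
  have h3 : n < 2 ^ n := Nat.lt_two_pow_self
  calc n ≤ 2 ^ n * 1 * 1 := by omega
    _ ≤ 100 * 2 ^ n * (σ.st (n + 1)).K * (σ.st n).q := by
      refine Nat.mul_le_mul (Nat.mul_le_mul (by omega) h2) h1
    _ ≤ _ := h

lemma ent_lower (ε t : ℝ) (hε : 0 < ε) (hε' : ε ≤ 1 / 16) (_ht : 0 < t) (ht1 : t < 1) :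
    0 < Filter.atTop.limsup fun m =>
      (bowenCoverNum σ.T m ε : ℝ≥0∞) / ENNReal.ofReal (intScale1 5 2 m t) := by
  refine lt_of_lt_of_le one_pos ?_
  refine le_limsup_of_frequently_le ?_
  refine σ.q_atTop.frequently (Eventually.frequently ?_)
  have h1 : ∀ᶠ n : ℕ in atTop, 1 / ((n : ℝ) + 1) < 1 - t :=
    (tendsto_one_div_add_atTop_nhds_zero_nat (𝕜 := ℝ)).eventually (gt_mem_nhds (by linarith))
  filter_upwards [h1] with n hn
  have h2 := σ.num_lower n ε hε hε'
  have hs : intScale1 5 2 (σ.q (n + 1)) t = (σ.Q n : ℝ) ^ t := (σ.step n).scale t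
  have hQ := σ.Qpos n
  rw [hs]
  have hpos : 0 < (σ.Q n : ℝ) ^ t := Real.rpow_pos_of_pos (by linarith) _
  rw [ENNReal.le_div_iff_mul_le (Or.inl (by simpa using hpos)) (Or.inl (by simp)), one_mul]
  rw [← ENNReal.ofReal_natCast]
  apply ENNReal.ofReal_le_ofReal
  refine le_trans ?_ h2
  exact Real.rpow_le_rpow_of_exponent_le hQ.le (by linarith)

lemma ent_upper (ε t : ℝ) (hε : 0 < ε) (ht1 : 1 < t) :
    ¬ 0 < Filter.atTop.limsup fun m =>
      (bowenCoverNum σ.T m ε : ℝ≥0∞) / ENNReal.ofReal (intScale1 5 2 m t) := by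
  rw [not_lt]
  have hlim : Tendsto (fun n0 : ℕ => ENNReal.ofReal (((n0 : ℝ) + 2) ^ (-((t - 1) / 2)))) atTop
      (𝓝 0) := by
    rw [← ENNReal.ofReal_zero]
    apply ENNReal.tendsto_ofReal
    exact (tendsto_rpow_neg_atTop (by linarith)).comp
      (tendsto_atTop_add_const_right _ _ tendsto_natCast_atTop_atTop)
  have e1 : ∀ᶠ n0 : ℕ in atTop, 2 * (1 / ((n0 : ℝ) + 1)) < ε := by
    have := (tendsto_one_div_add_atTop_nhds_zero_nat (𝕜 := ℝ)).const_mul 2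
    rw [mul_zero] at this
    exact this.eventually (gt_mem_nhds hε)
  have e2 : ∀ᶠ n0 : ℕ in atTop, (1 + t) * (1 / ((n0 : ℝ) + 1)) < (t - 1) / 2 := by
    have := (tendsto_one_div_add_atTop_nhds_zero_nat (𝕜 := ℝ)).const_mul (1 + t)
    rw [mul_zero] at this
    exact this.eventually (gt_mem_nhds (by linarith))
  refine ge_of_tendsto hlim ?_
  filter_upwards [e1, e2] with n0 hn1 hn2
  refine limsup_le_of_le (by isBoundedDefault) ?_
  filter_upwards [eventually_gt_atTop (σ.q (n0 + 2))] with m hm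
  have hex : ∃ n, 4 * m * (n + 1) * σ.K (n + 2) ≤ σ.q (n + 2) := by
    refine ⟨m, ?_⟩
    have h := (σ.step (m + 1)).big
    have h0 := (σ.step m).big
    have h1 := (σ.st m).q_pos
    have h2 := (σ.st (m + 1)).hK
    have h3 : m + 1 ≤ 2 ^ m := Nat.lt_two_pow_self
    have h4 : m ≤ (σ.st (m + 1)).q := by
      calc m ≤ 2 ^ m * 1 * 1 := by omega
        _ ≤ 100 * 2 ^ m * (σ.st (m + 1)).K * (σ.st m).q := by
          refine Nat.mul_le_mul (Nat.mul_le_mul (by omega) h2) h1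
        _ ≤ _ := h0
    calc 4 * m * (m + 1) * σ.K (m + 2) = 4 * (m + 1) * σ.K (m + 2) * m := by ring
      _ ≤ 100 * 2 ^ (m + 1) * (σ.st (m + 1 + 1)).K * (σ.st (m + 1)).q := by
        refine Nat.mul_le_mul (Nat.mul_le_mul_right _ ?_) h4
        rw [pow_succ]; omega
      _ ≤ _ := h
  classical
  obtain ⟨n, hn, hmin⟩ : ∃ n, 4 * m * (n + 1) * σ.K (n + 2) ≤ σ.q (n + 2) ∧
      ∀ k < n, ¬ 4 * m * (k + 1) * σ.K (k + 2) ≤ σ.q (k + 2) :=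
    ⟨Nat.find hex, Nat.find_spec hex, fun k hk => Nat.find_min hex hk⟩
  have hmfail : ∀ k ≤ n0, ¬ 4 * m * (k + 1) * σ.K (k + 2) ≤ σ.q (k + 2) := by
    intro k hk hle
    have h1 := σ.q_mono (show k + 2 ≤ n0 + 2 by omega)
    have h2 : m * 1 * 1 ≤ 4 * m * (k + 1) * σ.K (k + 2) :=
      Nat.mul_le_mul (Nat.mul_le_mul (by omega) (by omega)) (σ.st (k + 2)).hK
    omega
  have hnn : n0 < n := by
    by_contra h
    exact hmfail n (not_lt.1 h) hn
  obtain ⟨k, rfl⟩ : ∃ k, n = k + 1 := ⟨n - 1, by omega⟩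
  have hfail := hmin k (Nat.lt_succ_self k)
  have hn1pos : (0 : ℝ) < ((k + 1 : ℕ) : ℝ) + 1 := by positivity
  have hcomp : 1 / (((k + 1 : ℕ) : ℝ) + 1) ≤ 1 / ((n0 : ℝ) + 1) := by
    apply one_div_le_one_div_of_le (by positivity)
    have : (n0 : ℝ) ≤ (k + 1 : ℕ) := by exact_mod_cast hnn.le
    linarith
  -- upper bound of the covering number
  have hmr : (m : ℝ) * (4 * σ.r (k + 1 + 1)) ≤ 1 / (((k + 1 : ℕ) : ℝ) + 1) := by
    have hq := σ.qpos (k + 1 + 2)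
    have hn' : 4 * (m : ℝ) * (((k + 1 : ℕ) : ℝ) + 1) * σ.K (k + 1 + 2) ≤ σ.q (k + 1 + 2) := by
      exact_mod_cast hn
    unfold r
    rw [le_div_iff₀ hn1pos]
    rw [show (m : ℝ) * (4 * ((σ.K (k + 1 + 1 + 1) : ℝ) / σ.q (k + 1 + 1 + 1))) *
      (((k + 1 : ℕ) : ℝ) + 1) = (4 * (m : ℝ) * (((k + 1 : ℕ) : ℝ) + 1) * σ.K (k + 1 + 2)) /
        σ.q (k + 1 + 2) by ring]
    rw [div_le_one hq]
    exact hn'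
  obtain ⟨F, hF1, hF2⟩ := σ.cov (k + 1) m ε hε (by linarith)
  have hnum : (bowenCoverNum σ.T m ε : ℝ) ≤ (σ.Q (k + 1) : ℝ) ^ (1 + 1 / (((k + 1 : ℕ) : ℝ) + 1)) := by
    refine le_trans ?_ hF1
    have : bowenCoverNum σ.T m ε ≤ F.card := Nat.sInf_le ⟨F, rfl, hF2⟩
    exact_mod_cast this
  -- lower bound of the scale
  have hsc : (σ.Q (k + 1) : ℝ) ^ (1 - 1 / (((k + 1 : ℕ) : ℝ) + 1)) ≤ intScale1 5 2 m 1 := by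
    apply (σ.step (k + 1)).scale' m
    refine (not_le.1 hfail).le.trans ?_
    calc 4 * m * (k + 1) * σ.K (k + 2) = 4 * (k + 1) * σ.K (k + 2) * m := by ring
      _ ≤ 100 * (k + 1 + 1) * (σ.st (k + 1 + 1)).K * m := by
        refine Nat.mul_le_mul_right _ (Nat.mul_le_mul_right _ (by omega))
  have hQ := σ.Qpos (k + 1)
  set e := 1 / (((k + 1 : ℕ) : ℝ) + 1) with he
  set Q := (σ.Q (k + 1) : ℝ) with hQdef
  have hQ0 : 0 < Q := by linarith
  have hsct : Q ^ ((1 - e) * t) ≤ intScale1 5 2 m t := by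
    rw [scale_rpow, Real.rpow_mul hQ0.le]
    exact Real.rpow_le_rpow (Real.rpow_nonneg hQ0.le _) hsc (by linarith)
  have hpos : 0 < Q ^ ((1 - e) * t) := Real.rpow_pos_of_pos hQ0 _
  have hs0 : 0 < intScale1 5 2 m t := hpos.trans_le hsct
  rw [← ENNReal.ofReal_natCast, ← ENNReal.ofReal_div_of_pos hs0]
  apply ENNReal.ofReal_le_ofReal
  calc (bowenCoverNum σ.T m ε : ℝ) / intScale1 5 2 m t
      ≤ Q ^ (1 + e) / Q ^ ((1 - e) * t) := by gcongr
    _ = Q ^ ((1 + e) - (1 - e) * t) := by rw [← Real.rpow_sub hQ0]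
    _ ≤ Q ^ (-((t - 1) / 2)) := by
      apply Real.rpow_le_rpow_of_exponent_le hQ.le
      have : (1 + t) * e ≤ (1 + t) * (1 / ((n0 : ℝ) + 1)) := by gcongr
      nlinarith
    _ ≤ ((n0 : ℝ) + 2) ^ (-((t - 1) / 2)) := by
      apply Real.rpow_le_rpow_of_nonpos (by positivity) _ (by linarith)
      have h1 := (σ.step (k + 1)).Qbig
      have h2 : n0 + 2 ≤ σ.Q (k + 1) := by omega
      rw [hQdef]; exact_mod_cast h2

lemma T_ent : HasUpperTopSlowEntropy σ.T (intScale1 5 2) 1 := by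
  unfold HasUpperTopSlowEntropy
  refine tendsto_const_nhds.congr' ?_
  have h : Ioc (0 : ℝ) (1 / 16) ∈ 𝓝[>] (0 : ℝ) := Ioc_mem_nhdsGT (by norm_num)
  filter_upwards [h] with ε hε
  symm
  unfold topSlowEntFun
  set S := {t : ℝ | 0 < t ∧ 0 < Filter.atTop.limsup fun n =>
    (bowenCoverNum σ.T n ε : ℝ≥0∞) / ENNReal.ofReal (intScale1 5 2 n t)} with hS
  have h1 : ∀ t ∈ S, t ≤ 1 := by
    intro t ht
    by_contra hlt
    exact σ.ent_upper ε t hε.1 (not_le.1 hlt) ht.2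
  have h2 : ∀ t, 0 < t → t < 1 → t ∈ S := fun t h0 hlt =>
    ⟨h0, σ.ent_lower ε t hε.1 hε.2 h0 hlt⟩
  refine csSup_eq_of_forall_le_of_forall_lt_exists_gt ⟨1 / 2, h2 _ (by norm_num) (by norm_num)⟩ h1 ?_
  intro w hw
  refine ⟨(max w 0 + 1) / 2, h2 _ ?_ ?_, ?_⟩
  · have := le_max_right w 0; linarith
  · have : max w 0 < 1 := max_lt hw one_pos; linarith
  · have := le_max_left w 0
    linarith

end Sq

lemma main_of_step (hstep : ∀ n s, ∃ s' Q, Step n s s' Q) :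
    ∃ q₁ : ℕ, 2 ≤ q₁ ∧ ∃ T : Torus2 → Torus2,
      IsCkTorusDiffeo ⊤ T ∧
      UniquelyErgodicWithVolume T ∧
      IsoToIrrationalRotation T ∧
      HasUpperTopSlowEntropy T (intScale1 5 q₁) 1 := by
  choose f g hfg using hstep
  let st : ℕ → St := fun n => Nat.rec St0 (fun n s => f n s) n
  let σ : Sq := ⟨st, fun n => g n (st n), fun n => hfg n (st n)⟩
  exact ⟨2, le_refl _, σ.T, σ.T_diffeo, σ.T_ue, σ.T_iso, σ.T_ent⟩

end Abc

end

section
open MeasureTheory Filter Set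
open scoped Topology ENNReal NNReal ContDiff

namespace Abc

/-! ### The conjugating map of one step -/

/-- parameters of one step -/
structure Par where
  β : ℝ → ℝ
  hβs : ContDiff ℝ ∞ β
  hβp : ∀ y, β (y + 1) = β y
  hβb : ∀ y, |β y| ≤ 1 / 2
  hβ0 : β 0 = 0
  Lb : ℕ
  hLb : ∀ y y', |β y - β y'| ≤ Lb * |y - y'|
  q : ℕ
  Q : ℕ
  L : ℕ
  hq : 1 ≤ q
  hQ : 1 ≤ Q
  hqQ : q ∣ Q
  hL : 100 * q ≤ L

namespace Par
variable (p : Par)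

lemma q_pos : (0 : ℝ) < p.q := by exact_mod_cast p.hq
lemma Q_pos : (0 : ℝ) < p.Q := by exact_mod_cast p.hQ
lemma L_ge : (100 : ℝ) * p.q ≤ p.L := by exact_mod_cast p.hL
lemma L_pos : (0 : ℝ) < p.L := by have := p.L_ge; have := p.q_pos; linarith

/-- the profile of the vertical shear, divided by `Q` -/
noncomputable def b (x : ℝ) : ℝ := x + Real.sin (2 * Real.pi * p.q * x) / p.L

/-- the profile of the vertical shear -/
noncomputable def a (x : ℝ) : ℝ := p.Q * p.b x

lemma b_shift (x : ℝ) (k : ℤ) : p.b (x + k / p.q) = p.b x + k / p.q := by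
  unfold b
  have h : 2 * Real.pi * p.q * (x + k / p.q) = 2 * Real.pi * p.q * x + k * (2 * Real.pi) := by
    have := p.q_pos; field_simp
  rw [h, Real.sin_add_int_mul_two_pi]; ring

lemma b_one (x : ℝ) : p.b (x + 1) = p.b x + 1 := by
  have h := p.b_shift x p.q
  have h2 : (((p.q : ℤ) : ℝ) / p.q) = 1 := by have := p.q_pos; push_cast; field_simp
  rwa [h2] at h

lemma a_shift (x : ℝ) (k : ℤ) : ∃ m : ℤ, p.a (x + k / p.q) = p.a x + m := by
  obtain ⟨d, hd⟩ := p.hqQ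
  refine ⟨d * k, ?_⟩
  unfold a
  rw [b_shift]
  have := p.q_pos
  rw [hd]; push_cast; field_simp

lemma a_one (x : ℝ) : p.a (x + 1) = p.a x + p.Q := by unfold a; rw [b_one]; ring

lemma a_zero : p.a 0 = 0 := by simp [a, b]

lemma a_cont : Continuous p.a := by unfold a b; fun_prop

lemma a_diff (x x' : ℝ) : |p.a x - p.a x' - p.Q * (x - x')| ≤ p.Q * (7 * p.q / p.L) * |x - x'| := by
  have hL := p.L_pos
  have hQ := p.Q_pos
  have hq := p.q_pos
  have h1 : p.a x - p.a x' - p.Q * (x - x') =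
      p.Q * ((Real.sin (2 * Real.pi * p.q * x) - Real.sin (2 * Real.pi * p.q * x')) / p.L) := by
    unfold a b; ring
  have h2 := Real.abs_sin_sub_sin_le (2 * Real.pi * p.q * x) (2 * Real.pi * p.q * x')
  have h3 : |2 * Real.pi * p.q * x - 2 * Real.pi * p.q * x'| ≤ 7 * p.q * |x - x'| := by
    rw [← mul_sub, abs_mul, abs_of_pos (by positivity)]
    gcongr
    have := Real.pi_lt_d2; linarith
  rw [h1, abs_mul, abs_div, abs_of_pos hQ, abs_of_pos hL,
    mul_assoc (p.Q : ℝ) (7 * p.q / p.L)]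
  refine mul_le_mul_of_nonneg_left ?_ hQ.le
  rw [div_mul_eq_mul_div]
  refine div_le_div_of_nonneg_right ?_ hL.le
  linarith

lemma qL : 7 * (p.q : ℝ) / p.L ≤ 1 := by
  rw [div_le_one p.L_pos]; have := p.L_ge; have := p.q_pos; linarith

lemma a_lip (x x' : ℝ) : |p.a x - p.a x'| ≤ 2 * p.Q * |x - x'| := by
  have h := p.a_diff x x'
  have h1 : p.Q * (7 * p.q / p.L) * |x - x'| ≤ p.Q * 1 * |x - x'| := by
    have := p.qL; gcongr
  have h2 : |p.a x - p.a x'| ≤ |p.a x - p.a x' - p.Q * (x - x')| + |p.Q * (x - x')| := by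
    have := abs_add_le (p.a x - p.a x' - p.Q * (x - x')) (p.Q * (x - x'))
    simpa using this
  rw [abs_mul, abs_of_pos p.Q_pos] at h2
  linarith

lemma a_per : Function.Periodic (fun x => (p.a x : Torus1)) 1 := by
  intro x
  simp only [a_one, AddCircle.coe_add, coe_nat, add_zero]

lemma bt_per : Function.Periodic (fun y => ((p.β y / p.Q : ℝ) : Torus1)) 1 := by
  intro y
  simp only [p.hβp]

/-- vertical shear -/
noncomputable def phi : Torus1 → Torus1 := circ p.a p.a_per
/-- horizontal shear -/
noncomputable def bt : Torus1 → Torus1 := circ (fun y => p.β y / p.Q) p.bt_per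

lemma phi_coe (x : ℝ) : p.phi x = (p.a x : Torus1) := circ_coe _ _ _
lemma bt_coe (x : ℝ) : p.bt x = ((p.β x / p.Q : ℝ) : Torus1) := circ_coe _ p.bt_per _

lemma phi_cont : Continuous p.phi := circ_continuous _ p.a_cont
lemma bt_cont : Continuous p.bt := circ_continuous p.bt_per (p.hβs.continuous.div_const _)

lemma phi_dist (x x' : Torus1) : dist (p.phi x) (p.phi x') ≤ 2 * p.Q * dist x x' := by
  obtain ⟨u, rfl⟩ := coe_surj x'
  obtain ⟨v, rfl, hv⟩ := exists_rep x u
  rw [phi_coe, phi_coe, ← hv]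
  exact (coe_dist_le _ _).trans (p.a_lip _ _)

lemma bt_dist (x x' : Torus1) : dist (p.bt x) (p.bt x') ≤ p.Lb / p.Q * dist x x' := by
  obtain ⟨u, rfl⟩ := coe_surj x'
  obtain ⟨v, rfl, hv⟩ := exists_rep x u
  rw [bt_coe, bt_coe, ← hv]
  refine (coe_dist_le _ _).trans ?_
  rw [← sub_div, abs_div, abs_of_pos p.Q_pos, div_mul_eq_mul_div]
  have := p.Q_pos
  gcongr
  exact p.hLb _ _

lemma bt_norm (y : Torus1) : ‖p.bt y‖ ≤ 1 / (2 * p.Q) := by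
  obtain ⟨u, rfl⟩ := coe_surj y
  rw [bt_coe]
  refine (coe_norm_le _).trans ?_
  rw [abs_div, abs_of_pos p.Q_pos, div_le_div_iff₀ p.Q_pos (by have := p.Q_pos; positivity)]
  have := p.hβb u
  have := p.Q_pos
  nlinarith

lemma phi_shift (x : Torus1) (k : ℤ) : p.phi (x + ((k / p.q : ℝ) : Torus1)) = p.phi x := by
  obtain ⟨u, rfl⟩ := coe_surj x
  rw [← AddCircle.coe_add, phi_coe, phi_coe]
  obtain ⟨m, hm⟩ := p.a_shift u k
  rw [hm, AddCircle.coe_add, coe_int, add_zero]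

/-- the conjugating map -/
noncomputable def hh : Torus2 ≃ Torus2 where
  toFun z := (z.1 + p.bt z.2, z.2 + p.phi (z.1 + p.bt z.2))
  invFun z := (z.1 - p.bt (z.2 - p.phi z.1), z.2 - p.phi z.1)
  left_inv z := by simp
  right_inv z := by simp

lemma hh_apply (x y : Torus1) : p.hh (x, y) = (x + p.bt y, y + p.phi (x + p.bt y)) := rfl
lemma hh_symm_apply (x y : Torus1) :
    p.hh.symm (x, y) = (x - p.bt (y - p.phi x), y - p.phi x) := rfl

lemma hh_rot (k : ℤ) (z : Torus2) :
    p.hh (rot ((k / p.q : ℝ) : Torus1) z) = rot ((k / p.q : ℝ) : Torus1) (p.hh z) := by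
  obtain ⟨x, y⟩ := z
  simp only [rot, hh_apply]
  have : x + ((k / p.q : ℝ) : Torus1) + p.bt y = x + p.bt y + ((k / p.q : ℝ) : Torus1) := by abel
  rw [this, phi_shift]

lemma hh_dist (x x' y y' : Torus1) :
    dist (p.hh (x, y)) (p.hh (x', y')) ≤ 2 * p.Q * dist x x' + (2 * p.Lb + 1) * dist y y' := by
  have hQ := p.Q_pos
  have hQ1 : (1 : ℝ) ≤ p.Q := by exact_mod_cast p.hQ
  have h1 : dist (x + p.bt y) (x' + p.bt y') ≤ dist x x' + p.Lb / p.Q * dist y y' :=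
    (dist_add_add_le _ _ _ _).trans (by gcongr; exact p.bt_dist _ _)
  have h2 : dist (y + p.phi (x + p.bt y)) (y' + p.phi (x' + p.bt y')) ≤
      dist y y' + 2 * p.Q * (dist x x' + p.Lb / p.Q * dist y y') :=
    (dist_add_add_le _ _ _ _).trans (by
      gcongr
      exact (p.phi_dist _ _).trans (by gcongr))
  have h3 : 2 * p.Q * (dist x x' + p.Lb / p.Q * dist y y') = 2 * p.Q * dist x x' + 2 * p.Lb * dist y y' := by
    field_simp
  have hx := dist_nonneg (x := x) (y := x')
  have hy := dist_nonneg (x := y) (y := y')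
  have hLb : (p.Lb : ℝ) / p.Q ≤ p.Lb := div_le_self (by positivity) hQ1
  have h4 : (p.Lb : ℝ) / p.Q * dist y y' ≤ p.Lb * dist y y' := by gcongr
  have h5 : 0 ≤ (p.Lb : ℝ) * dist y y' := by positivity
  rw [hh_apply, hh_apply, Prod.dist_eq]
  apply max_le
  · refine h1.trans ?_
    nlinarith
  · refine h2.trans ?_
    rw [h3]; linarith

/-- vertical shear as a map of the torus -/
noncomputable def V : Torus2 → Torus2 := fun z => (z.1, z.2 + p.phi z.1)

lemma shear_mp (g : Torus1 → Torus1) (hg : Continuous g) :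
    MeasurePreserving (fun z : Torus2 => (z.1, z.2 + g z.1)) volume volume := by
  refine MeasurePreserving.skew_product (μa := (volume : Measure Torus1)) (μb := volume) (μc := volume) (μd := volume)
    (f := fun x => x) (g := fun x y => y + g x) (MeasurePreserving.id _) ?_ ?_
  · exact (continuous_snd.add (hg.comp continuous_fst)).measurable
  · exact Eventually.of_forall fun x => (measurePreserving_add_right (volume : Measure Torus1) (g x)).map_eq

lemma V_mp : MeasurePreserving p.V volume volume := shear_mp _ p.phi_cont

lemma shear_mp' (g : Torus1 → Torus1) (hg : Continuous g) :
    MeasurePreserving (fun z : Torus2 => (z.1 + g z.2, z.2)) volume volume := by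
  have h := (Measure.measurePreserving_swap (μ := (volume : Measure Torus1)) (ν := (volume : Measure Torus1)))
  exact h.comp ((shear_mp g hg).comp h)

lemma hh_mp : MeasurePreserving p.hh volume volume :=
  (shear_mp p.phi p.phi_cont).comp (shear_mp' p.bt p.bt_cont)

lemma hh_mp' : MeasurePreserving p.hh.symm volume volume := by
  have h1 := shear_mp' (fun y => - p.bt y) p.bt_cont.neg
  have h2 := shear_mp (fun y => - p.phi y) p.phi_cont.neg
  have h3 := h1.comp h2
  convert h3 using 2
  funext z
  obtain ⟨x, y⟩ := z
  simp [hh_symm_apply, sub_eq_add_neg]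

end Par

end Abc

end

section
open MeasureTheory Filter Set
open scoped Topology ENNReal NNReal ContDiff

namespace Abc

lemma grid (N : ℕ) (hN : 1 ≤ N) (x : Torus1) :
    ∃ i ∈ Finset.range N, dist (((i : ℝ) / N : ℝ) : Torus1) x ≤ 1 / N := by
  obtain ⟨u, rfl⟩ := coe_surj x
  have hN' : (0 : ℝ) < N := by exact_mod_cast hN
  have hf0 := Int.fract_nonneg u
  have hf1 := Int.fract_lt_one u
  have hm : 0 ≤ Int.fract u * N := by positivity
  refine ⟨⌊Int.fract u * N⌋₊, ?_, ?_⟩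
  · rw [Finset.mem_range, Nat.floor_lt hm]
    nlinarith
  · have hu : (u : Torus1) = ((Int.fract u : ℝ) : Torus1) := by
      conv_lhs => rw [← Int.floor_add_fract u]
      rw [AddCircle.coe_add, coe_int, zero_add]
    rw [hu]
    refine (coe_dist_le _ _).trans ?_
    have h1 := Nat.floor_le hm
    have h2 := Nat.lt_floor_add_one (Int.fract u * N)
    have h3 : (⌊Int.fract u * N⌋₊ : ℝ) / N - Int.fract u = (⌊Int.fract u * N⌋₊ - Int.fract u * N) / N := by
      field_simp
    rw [h3, abs_div, abs_of_pos hN']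
    gcongr
    rw [abs_le]; constructor <;> linarith

/-- conjugated rotation -/
def Sg (H : Torus2 ≃ Torus2) (t : Torus1) (z : Torus2) : Torus2 := H (rot t (H.symm z))

namespace Par
variable (p : Par) (s : St)

/-- the new conjugacy -/
noncomputable def H' : Torus2 ≃ Torus2 := p.hh.trans s.H

lemma H'_apply (z : Torus2) : p.H' s z = s.H (p.hh z) := rfl
lemma H'_symm (z : Torus2) : (p.H' s).symm z = p.hh.symm (s.H.symm z) := rfl
lemma Sg_H' (t : Torus1) (z : Torus2) : Sg (p.H' s) t (p.H' s z) = s.H (p.hh (rot t z)) := by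
  unfold Sg; rw [Equiv.symm_apply_apply]; rfl

lemma Kpos : (1 : ℝ) ≤ s.K := by exact_mod_cast s.hK

lemma comm_geo (hq : p.q = s.q) (k : ℤ) (z : Torus2) :
    Sg (p.H' s) ((k / s.q : ℝ) : Torus1) z = s.S ((k / s.q : ℝ) : Torus1) z := by
  unfold Sg St.S
  rw [H'_symm, H'_apply, ← hq, hh_rot, Equiv.apply_symm_apply]

lemma psi_geo (z : Torus2) : dist ((p.H' s).symm z).1 (s.H.symm z).1 ≤ 1 / (2 * p.Q) := by
  rw [H'_symm]
  obtain ⟨x, y⟩ := s.H.symm z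
  rw [hh_symm_apply, dist_eq_norm]
  simp only [sub_sub_cancel_left, norm_neg]
  exact p.bt_norm _

lemma cover_geo (n : ℕ) : ∃ F : Finset Torus2,
    F.card ≤ 15 * s.K ^ 2 * (n + 1) ^ 2 * (2 * p.Lb + 1) * p.Q ∧
    ∀ z, ∃ w ∈ F, ∀ t, dist (Sg (p.H' s) t w) (Sg (p.H' s) t z) < 1 / ((n : ℝ) + 1) := by
  classical
  set N1 := 5 * s.K * (n + 1) * p.Q with hN1
  set N2 := 3 * s.K * (n + 1) * (2 * p.Lb + 1) with hN2
  have hK := s.hK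
  have hQ := p.hQ
  have h1 : 1 ≤ N1 := Nat.one_le_iff_ne_zero.mpr (by positivity)
  have h2 : 1 ≤ N2 := Nat.one_le_iff_ne_zero.mpr (by positivity)
  refine ⟨((Finset.range N1) ×ˢ (Finset.range N2)).image
    (fun ij => p.H' s ((((ij.1 : ℝ) / N1 : ℝ) : Torus1), (((ij.2 : ℝ) / N2 : ℝ) : Torus1))), ?_, ?_⟩
  · refine Finset.card_image_le.trans ?_
    rw [Finset.card_product, Finset.card_range, Finset.card_range, hN1, hN2]
    apply le_of_eq; ring
  · intro z
    obtain ⟨⟨x, y⟩, rfl⟩ := (p.H' s).surjective z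
    obtain ⟨i, hi, hix⟩ := grid N1 h1 x
    obtain ⟨j, hj, hjy⟩ := grid N2 h2 y
    refine ⟨_, Finset.mem_image.mpr ⟨(i, j), Finset.mem_product.mpr ⟨hi, hj⟩, rfl⟩, fun t => ?_⟩
    rw [Sg_H', Sg_H']
    refine lt_of_le_of_lt (s.lip _ _) ?_
    simp only [rot]
    refine lt_of_le_of_lt (mul_le_mul_of_nonneg_left (p.hh_dist _ _ _ _) (by positivity)) ?_
    rw [dist_add_right]
    have hKp := Kpos s
    have hQp := p.Q_pos
    have : (s.K : ℝ) * (2 * p.Q * (1 / N1) + (2 * p.Lb + 1) * (1 / N2)) = (11 / 15) * (1 / (n + 1)) := by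
      rw [hN1, hN2]; push_cast
      field_simp
      ring
    have h3 : (s.K : ℝ) * (2 * p.Q * dist (((i : ℝ) / N1 : ℝ) : Torus1) x +
        (2 * p.Lb + 1) * dist (((j : ℝ) / N2 : ℝ) : Torus1) y) ≤
        (s.K : ℝ) * (2 * p.Q * (1 / N1) + (2 * p.Lb + 1) * (1 / N2)) := by gcongr
    refine lt_of_le_of_lt h3 ?_
    rw [this]
    have : (0 : ℝ) < 1 / (n + 1) := by positivity
    linarith

lemma good_point {Y : Set Torus1} {δ : ℝ}
    (hY : ∀ y : ℝ, (y : Torus1) ∈ Y → ‖((y + p.β y - 1 / 2 : ℝ) : Torus1)‖ ≤ δ)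
    (x y : Torus1) (hy : y ∈ Y) :
    dist (p.hh (x, y)).2 (p.phi x + ((1 / 2 : ℝ) : Torus1)) ≤ δ + 4 * p.q / p.L := by
  obtain ⟨u, rfl⟩ := coe_surj x
  obtain ⟨v, rfl⟩ := coe_surj y
  have h1 := hY v hy
  rw [hh_apply, bt_coe, ← AddCircle.coe_add, phi_coe, phi_coe]
  simp only
  rw [← AddCircle.coe_add, ← AddCircle.coe_add, dist_eq_norm, ← AddCircle.coe_sub]
  have h2 : v + p.a (u + p.β v / p.Q) - (p.a u + 1 / 2) = (v + p.β v - 1 / 2) +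
      (p.a (u + p.β v / p.Q) - p.a u - p.Q * (u + p.β v / p.Q - u)) := by
    have := p.Q_pos; field_simp; ring
  rw [h2, AddCircle.coe_add]
  refine (norm_add_le _ _).trans (add_le_add h1 ((coe_norm_le _).trans ((p.a_diff _ _).trans ?_)))
  rw [add_sub_cancel_left, abs_div, abs_of_pos p.Q_pos]
  have hQ := p.Q_pos
  have hL := p.L_pos
  have h3 := p.hβb v
  have h4 : p.Q * (7 * p.q / p.L) * (|p.β v| / p.Q) = (7 * |p.β v|) * p.q / p.L := by field_simp
  rw [h4]
  gcongr
  linarith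

lemma good_geo {Y : Set Torus1} {δ : ℝ} (hYm : MeasurableSet Y) {η : ℝ≥0∞} (hYv : volume Yᶜ ≤ η)
    (hY : ∀ y : ℝ, (y : Torus1) ∈ Y → ‖((y + p.β y - 1 / 2 : ℝ) : Torus1)‖ ≤ δ) (hδ : 0 ≤ δ)
    (q' : ℝ) (hq' : 0 < q') :
    ∃ 𝒢 : Set Torus2, MeasurableSet 𝒢 ∧ volume 𝒢ᶜ ≤ η ∧
    ∀ z ∈ 𝒢, ∀ w ∈ 𝒢, dist ((p.H' s).symm z).1 ((p.H' s).symm w).1 ≤ 4 / q' →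
      dist z w ≤ s.K * (4 / q' + 1 / p.Q + 8 * p.Q / q' + 2 * δ + 8 * p.q / p.L) := by
  have hmp : MeasurePreserving (fun z => ((p.H' s).symm z).2) volume volume :=
    (measurePreserving_snd (μ := (volume : Measure Torus1)) (ν := (volume : Measure Torus1))).comp
      (p.hh_mp'.comp s.mp')
  refine ⟨(fun z => ((p.H' s).symm z).2) ⁻¹' Y, hmp.measurable hYm, ?_, ?_⟩
  · rw [← preimage_compl, hmp.measure_preimage hYm.compl.nullMeasurableSet]; exact hYv
  · intro z hz w hw h
    obtain ⟨⟨x, y⟩, rfl⟩ := (p.H' s).surjective z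
    obtain ⟨⟨x', y'⟩, rfl⟩ := (p.H' s).surjective w
    simp only [mem_preimage, Equiv.symm_apply_apply] at hz hw h
    rw [H'_apply, H'_apply]
    refine (s.lip _ _).trans (mul_le_mul_of_nonneg_left ?_ (by positivity))
    have hQ := p.Q_pos
    have hL := p.L_pos
    have hq := p.q_pos
    have b1 : 0 ≤ 4 / q' := by positivity
    have b2 : 0 ≤ 8 * p.Q / q' := by positivity
    have b3 : 0 ≤ 8 * p.q / (p.L : ℝ) := by positivity
    have b4 : 0 ≤ 1 / (p.Q : ℝ) := by positivity
    rw [Prod.dist_eq]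
    apply max_le
    · have e1 : dist (p.hh (x, y)).1 (p.hh (x', y')).1 ≤ dist x x' + dist (p.bt y) (p.bt y') :=
        dist_add_add_le _ _ _ _
      have e2 : dist (p.bt y) (p.bt y') ≤ 1 / (2 * p.Q) + 1 / (2 * p.Q) := by
        rw [dist_eq_norm]
        exact (norm_sub_le _ _).trans (add_le_add (p.bt_norm _) (p.bt_norm _))
      have e3 : 1 / (2 * (p.Q : ℝ)) + 1 / (2 * p.Q) = 1 / p.Q := by field_simp; norm_num
      linarith
    · have e1 := p.good_point hY x y hz
      have e2 := p.good_point hY x' y' hw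
      have e3 : dist (p.phi x + ((1 / 2 : ℝ) : Torus1)) (p.phi x' + ((1 / 2 : ℝ) : Torus1)) ≤
          8 * p.Q / q' := by
        rw [dist_add_right]
        refine (p.phi_dist _ _).trans ?_
        calc 2 * p.Q * dist x x' ≤ 2 * p.Q * (4 / q') := by gcongr
          _ = 8 * p.Q / q' := by ring
      have e4 := dist_triangle4 (p.hh (x, y)).2 (p.phi x + ((1 / 2 : ℝ) : Torus1))
        (p.phi x' + ((1 / 2 : ℝ) : Torus1)) (p.hh (x', y')).2
      rw [dist_comm] at e2
      have e5 : 8 * (p.q : ℝ) / p.L = 4 * p.q / p.L + 4 * p.q / p.L := by ring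
      linarith

lemma ue_geo (f : Torus2 → ℝ) (C : ℝ) (hC : 0 ≤ C) (hf : ∀ z w, |f z - f w| ≤ C * dist z w)
    (z : Torus2) :
    |(∫ t : Torus1, f (Sg (p.H' s) t z)) - ∫ w, f w| ≤ C * (s.K * (1 / p.Q + 7 * p.q / p.L)) := by
  have hQ := p.Q_pos
  have hL := p.L_pos
  have hq := p.q_pos
  set Φ : Torus2 → ℝ := fun z => f (s.H z) with hΦ
  have hfc : Continuous f := by
    have : LipschitzWith C.toNNReal f := LipschitzWith.of_dist_le_mul fun z w => by
      rw [Real.dist_eq, Real.coe_toNNReal _ hC]; exact hf z w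
    exact this.continuous
  have hΦc : Continuous Φ := hfc.comp s.cont
  have hΦL : ∀ z w, |Φ z - Φ w| ≤ C * (s.K * dist z w) := fun z w =>
    (hf _ _).trans (mul_le_mul_of_nonneg_left (s.lip _ _) hC)
  have hVc : Continuous p.V := by
    have := p.phi_cont
    unfold V; fun_prop
  set I : Torus1 → ℝ := fun y => ∫ t : Torus1, Φ (p.V (t, y)) with hI
  obtain ⟨⟨x, y⟩, rfl⟩ := (p.H' s).surjective z
  have h1 : (∫ t : Torus1, f (Sg (p.H' s) t (p.H' s (x, y)))) = I y := by
    have : ∀ t : Torus1, f (Sg (p.H' s) t (p.H' s (x, y))) = (fun u => Φ (p.V (u, y))) (t + (x + p.bt y)) := by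
      intro t
      rw [Sg_H']
      simp only [hΦ, rot, hh_apply, V]
      have : x + t + p.bt y = t + (x + p.bt y) := by abel
      rw [this]
    rw [integral_congr_ae (Eventually.of_forall this)]
    exact integral_add_right_eq_self (μ := (volume : Measure Torus1)) (fun u => Φ (p.V (u, y))) (x + p.bt y)
  have hintg : ∀ g : Torus1 → ℝ, Continuous g → Integrable g volume := fun g hg =>
    hg.integrable_of_hasCompactSupport (HasCompactSupport.of_compactSpace g)
  have h2 : ∫ w, f w = ∫ v, I v := by
    have e1 : ∫ w, f w = ∫ w, Φ w := by
      have := s.mp.map_eq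
      conv_lhs => rw [← this]
      rw [integral_map s.cont.aemeasurable hfc.aestronglyMeasurable]
    have e2 : ∫ w, Φ w = ∫ w, Φ (p.V w) := by
      conv_lhs => rw [← p.V_mp.map_eq]
      rw [integral_map hVc.aemeasurable hΦc.aestronglyMeasurable]
    rw [e1, e2, Measure.volume_eq_prod, integral_prod_symm]
    exact (hΦc.comp hVc).integrable_of_hasCompactSupport (HasCompactSupport.of_compactSpace _)
  have h3 : ∀ y y', |I y - I y'| ≤ C * (s.K * (1 / p.Q + 7 * p.q / p.L)) := by
    intro y y'
    obtain ⟨v0, hv0⟩ := coe_surj (y - y')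
    set v := Int.fract v0 with hvdef
    have hv : (v : Torus1) = y - y' := by
      rw [← hv0]
      conv_rhs => rw [← Int.floor_add_fract v0]
      rw [AddCircle.coe_add, coe_int, zero_add]
    have hv0 : 0 ≤ v := Int.fract_nonneg _
    have hv1 : v ≤ 1 := (Int.fract_lt_one _).le
    have e1 : I y' = ∫ t : Torus1, Φ (p.V (t + ((v / p.Q : ℝ) : Torus1), y')) :=
      (integral_add_right_eq_self (fun t : Torus1 => Φ (p.V (t, y'))) ((v / p.Q : ℝ) : Torus1)).symm
    rw [e1]
    simp only [hI]
    rw [← integral_sub]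
    · have hb : ∀ t : Torus1, ‖Φ (p.V (t, y)) - Φ (p.V (t + ((v / p.Q : ℝ) : Torus1), y'))‖ ≤
          C * (s.K * (1 / p.Q + 7 * p.q / p.L)) := by
        intro t
        rw [Real.norm_eq_abs]
        refine (hΦL _ _).trans ?_
        have : dist (p.V (t, y)) (p.V (t + ((v / p.Q : ℝ) : Torus1), y')) ≤ 1 / p.Q + 7 * p.q / p.L := by
          have b1 : 0 ≤ 7 * p.q / (p.L : ℝ) := by positivity
          have b2 : 0 ≤ 1 / (p.Q : ℝ) := by positivity
          rw [Prod.dist_eq]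
          apply max_le
          · simp only [V]
            rw [dist_self_add_right]
            refine (coe_norm_le _).trans ?_
            rw [abs_of_nonneg (by positivity)]
            have : v / p.Q ≤ 1 / p.Q := by gcongr
            linarith
          · simp only [V]
            obtain ⟨u, rfl⟩ := coe_surj t
            have hy : y = y' + (v : Torus1) := by rw [hv]; abel
            rw [hy, ← AddCircle.coe_add, phi_coe, phi_coe, dist_eq_norm]
            have : y' + (v : Torus1) + (p.a u : Torus1) - (y' + (p.a (u + v / p.Q) : Torus1)) =
              ((-(p.a (u + v / p.Q) - p.a u - p.Q * (u + v / p.Q - u)) : ℝ) : Torus1) := by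
              have h : p.Q * (u + v / p.Q - u) = v := by field_simp; ring
              rw [h]
              simp only [AddCircle.coe_neg, AddCircle.coe_sub]
              abel
            rw [this]
            refine (coe_norm_le _).trans ?_
            rw [abs_neg]
            refine (p.a_diff _ _).trans ?_
            rw [add_sub_cancel_left, abs_of_nonneg (by positivity)]
            have e : p.Q * (7 * p.q / p.L) * (v / p.Q) = 7 * p.q / p.L * v := by field_simp
            rw [e]
            nlinarith
        gcongr
      have := norm_integral_le_of_norm_le_const (μ := (volume : Measure Torus1)) (Eventually.of_forall hb)
      simpa using this
    · exact hintg _ (hΦc.comp (hVc.comp (by fun_prop)))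
    · exact hintg _ (hΦc.comp (hVc.comp (by fun_prop)))
  have hIi : Integrable I volume := by
    have hc : Continuous I := by
      have : Continuous fun z : Torus2 => Φ (p.V (z.2, z.1)) := hΦc.comp (hVc.comp (by fun_prop))
      have h := continuous_parametric_integral_of_continuous (μ := (volume : Measure Torus1))
        (f := fun y t => Φ (p.V (t, y))) this isCompact_univ
      simpa only [Measure.restrict_univ] using h
    exact hintg _ hc
  rw [h1, h2]
  have e : I y - ∫ v, I v = ∫ v, (I y - I v) := by
    rw [integral_sub (integrable_const _) hIi]; simp
  rw [e]
  have := norm_integral_le_of_norm_le_const (μ := (volume : Measure Torus1))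
    (Eventually.of_forall fun v => (show ‖I y - I v‖ ≤ _ from h3 y v))
  simpa using this

end Par

end Abc

end

section
open MeasureTheory Filter Set
open scoped Topology ENNReal NNReal ContDiff

namespace Abc

lemma half_level (s : St) : ∃ c : ℝ,
    1 / 2 ≤ dist (s.H (torusProj (0, 0))) (s.H (torusProj (0, c))) := by
  set g : ℝ → ℝ := fun y => (s.G (0, y)).2 with hg
  have hgc : Continuous g := by
    have := s.bdG.1.continuous
    fun_prop
  have h1 : g 1 = g 0 + 1 := by
    have := s.vert 0 0
    simp only [hg]
    rw [zero_add] at this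
    rw [this]; simp
  have := intermediate_value_Icc (zero_le_one' ℝ) hgc.continuousOn
  obtain ⟨c, -, hc⟩ := this (show g 0 + 1 / 2 ∈ Icc (g 0) (g 1) by rw [h1]; constructor <;> linarith)
  refine ⟨c, ?_⟩
  rw [← s.liftG, ← s.liftG, Prod.dist_eq]
  refine le_trans ?_ (le_max_right _ _)
  have e : dist (torusProj (s.G (0, 0))).2 (torusProj (s.G (0, c))).2 =
      ‖(((1 / 2 : ℝ)) : Torus1)‖ := by
    rw [dist_comm, dist_eq_norm]
    change ‖((g c : ℝ) : Torus1) - ((g 0 : ℝ) : Torus1)‖ = _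
    rw [← AddCircle.coe_sub, hc]; congr 2; ring
  rw [e]
  have := AddCircle.norm_half_period_eq (p := (1 : ℝ))
  rw [this]; simp

namespace Par
variable (p : Par) (s : St)

lemma a_sub (X u : ℝ) : p.a (X + u) - p.a X = p.Q * u + (p.Q / p.L) *
    (2 * Real.sin (Real.pi * (p.q * u)) * Real.cos (2 * Real.pi * p.q * X + Real.pi * (p.q * u))) := by
  unfold a b
  have h := Real.sin_sub_sin (2 * Real.pi * p.q * (X + u)) (2 * Real.pi * p.q * X)
  have e1 : (2 * Real.pi * p.q * (X + u) - 2 * Real.pi * p.q * X) / 2 = Real.pi * (p.q * u) := by ring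
  have e2 : (2 * Real.pi * p.q * (X + u) + 2 * Real.pi * p.q * X) / 2 =
    2 * Real.pi * p.q * X + Real.pi * (p.q * u) := by ring
  rw [e1, e2] at h
  rw [← h]; ring

lemma sep_real (c u : ℝ) (h1 : p.L / (p.Q : ℝ) ≤ p.q * u) (h2 : p.q * u ≤ 1 / 2) (hQ4 : 4 * p.q ≤ p.Q) :
    ∃ (X : ℝ) (m k : ℤ), 0 ≤ X ∧ X ≤ 3 / (2 * p.q) ∧ p.a X = m ∧
      |p.a (X + u) - m - c - k| ≤ 28 * p.q / p.L := by
  have hQ := p.Q_pos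
  have hL := p.L_pos
  have hq := p.q_pos
  have hπ := Real.pi_pos
  have hu : 0 ≤ u := by
    by_contra hcon
    have : p.q * u < 0 := mul_neg_of_pos_of_neg hq (not_le.mp hcon)
    have : 0 < p.L / (p.Q : ℝ) := by positivity
    linarith
  set D : ℝ → ℝ := fun X => p.a (X + u) - p.a X with hD
  have hDc : Continuous D := by have := p.a_cont; fun_prop
  set X2 := 1 / (2 * p.q) - u / 2 with hX2
  have hX20 : 0 ≤ X2 := by
    have : u ≤ 1 / (2 * p.q) := by rw [le_div_iff₀ (by positivity)]; linarith
    rw [hX2]; linarith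
  have hamp : 2 ≤ (p.Q / p.L) * Real.sin (Real.pi * (p.q * u)) := by
    have h := Real.mul_le_sin (x := Real.pi * (p.q * u)) (by positivity) (by nlinarith)
    have e : 2 / Real.pi * (Real.pi * (p.q * u)) = 2 * (p.q * u) := by field_simp
    rw [e] at h
    have h3 : p.Q / p.L * (2 * (p.L / p.Q)) ≤ p.Q / p.L * Real.sin (Real.pi * (p.q * u)) := by
      refine mul_le_mul_of_nonneg_left ?_ (by positivity)
      linarith
    have e2 : (p.Q : ℝ) / p.L * (2 * (p.L / p.Q)) = 2 := by field_simp
    linarith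
  have hDl : D X2 = p.Q * u - 2 * ((p.Q / p.L) * Real.sin (Real.pi * (p.q * u))) := by
    simp only [hD]
    rw [a_sub]
    have : 2 * Real.pi * p.q * X2 + Real.pi * (p.q * u) = Real.pi := by rw [hX2]; field_simp; ring
    rw [this, Real.cos_pi]; ring
  have hDr : D (X2 + 1 / (2 * p.q)) = p.Q * u + 2 * ((p.Q / p.L) * Real.sin (Real.pi * (p.q * u))) := by
    simp only [hD]
    rw [a_sub]
    have : 2 * Real.pi * p.q * (X2 + 1 / (2 * p.q)) + Real.pi * (p.q * u) = 2 * Real.pi := by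
      rw [hX2]; field_simp; ring
    rw [this, Real.cos_two_pi]; ring
  set k := ⌈D X2 - c⌉ with hk
  have hk1 := Int.le_ceil (D X2 - c)
  have hk2 := Int.ceil_lt_add_one (D X2 - c)
  have hle : X2 ≤ X2 + 1 / (2 * p.q) := by have : 0 < 1 / (2 * (p.q : ℝ)) := by positivity
                                           linarith
  obtain ⟨X, hX, hXD⟩ := intermediate_value_Icc hle hDc.continuousOn
    (show c + k ∈ Icc (D X2) (D (X2 + 1 / (2 * p.q))) by
      rw [← hk] at hk1 hk2
      constructor
      · linarith
      · rw [hDr]; rw [hDl] at hk2; linarith)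
  -- move to an integer level
  have hrange : p.a X + 1 ≤ p.a (X + 2 / p.Q) := by
    have h := p.a_diff (X + 2 / p.Q) X
    rw [add_sub_cancel_left, abs_of_pos (show (0 : ℝ) < 2 / p.Q by positivity)] at h
    have e1 : p.Q * (2 / (p.Q : ℝ)) = 2 := by field_simp
    have e2 : p.Q * (7 * p.q / p.L) * (2 / p.Q) = 14 * p.q / (p.L : ℝ) := by field_simp; norm_num
    have e3 : 14 * p.q / (p.L : ℝ) ≤ 1 := by
      rw [div_le_one hL]; have := p.L_ge; linarith
    rw [e1, e2] at h
    have := (abs_le.mp h).1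
    linarith
  set m := ⌈p.a X⌉ with hm
  have hm1 := Int.le_ceil (p.a X)
  have hm2 := Int.ceil_lt_add_one (p.a X)
  have h2Q : 0 < 2 / (p.Q : ℝ) := by positivity
  obtain ⟨X', hX', hX'm⟩ := intermediate_value_Icc (show X ≤ X + 2 / p.Q by linarith) p.a_cont.continuousOn
    (show (m : ℝ) ∈ Icc (p.a X) (p.a (X + 2 / p.Q)) by
      rw [← hm] at hm1 hm2
      constructor <;> linarith)
  refine ⟨X', m, k, ?_, ?_, hX'm, ?_⟩
  · exact hX20.trans (hX.1.trans hX'.1)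
  · have e1 : 2 / (p.Q : ℝ) ≤ 1 / (2 * p.q) := by
      rw [div_le_div_iff₀ hQ (by positivity)]
      have : (4 * p.q : ℝ) ≤ p.Q := by exact_mod_cast hQ4
      linarith
    have e2 : 3 / (2 * (p.q : ℝ)) = 1 / (2 * p.q) + 1 / (2 * p.q) + 1 / (2 * p.q) := by ring
    have := hX'.2
    have := hX.2
    rw [hX2] at this
    linarith
  · have h3 := p.a_diff (X' + u) (X + u)
    have h4 := p.a_diff X' X
    have e0 : X' + u - (X + u) = X' - X := by ring
    rw [e0] at h3
    have e1 : |X' - X| ≤ 2 / p.Q := by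
      rw [abs_of_nonneg (by linarith [hX'.1])]; linarith [hX'.2]
    have e2 : p.Q * (7 * p.q / p.L) * |X' - X| ≤ 14 * p.q / p.L := by
      calc p.Q * (7 * p.q / p.L) * |X' - X| ≤ p.Q * (7 * p.q / p.L) * (2 / p.Q) := by gcongr
        _ = 14 * p.q / p.L := by field_simp; norm_num
    have e3 : p.a (X' + u) - m - c - k = (p.a (X' + u) - p.a (X + u) - p.Q * (X' - X)) -
        (p.a X' - p.a X - p.Q * (X' - X)) := by
      have : D X = p.a (X + u) - p.a X := rfl
      rw [this] at hXD
      rw [← hX'm]; linarith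
    have e4 : 28 * p.q / (p.L : ℝ) = 14 * p.q / p.L + 14 * p.q / p.L := by ring
    rw [e3, e4]
    refine (abs_sub _ _).trans ?_
    linarith

lemma sep_geo (hqs : p.q = s.q) (hQ4 : 4 * p.q ≤ p.Q) (hQL : 2 * p.L ≤ p.Q) (hLK : 1000 * p.q * s.K ≤ p.L) :
    ∃ F : Finset Torus2, p.Q ≤ 4 * p.L * F.card ∧
      ∀ z ∈ F, ∀ w ∈ F, z ≠ w → ∃ t, 1 / 4 ≤ dist (Sg (p.H' s) t z) (Sg (p.H' s) t w) := by
  classical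
  have hQ := p.Q_pos
  have hL := p.L_pos
  have hq := p.q_pos
  have hK := Kpos s
  have hLn : 1 ≤ p.L := by exact_mod_cast hL
  set J := p.Q / (2 * p.L) with hJ
  have hJ1 : 1 ≤ J := by rw [hJ, Nat.one_le_div_iff (by omega)]; exact hQL
  have hJ2 : p.Q ≤ 4 * p.L * J := by
    have := Nat.lt_div_mul_add (a := p.Q) (b := 2 * p.L) (by omega)
    rw [← hJ] at this
    nlinarith
  have hJ3 : J * (2 * p.L) ≤ p.Q := Nat.div_mul_le_self _ _
  set x : ℕ → ℝ := fun j => j * p.L / (p.Q * p.q) with hx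
  set z : ℕ → Torus2 := fun j => p.H' s ((x j : Torus1), 0) with hz
  have hbt0 : p.bt 0 = 0 := by
    have := p.bt_coe 0
    rw [p.hβ0] at this
    simpa using this
  have hSz : ∀ (j : ℕ) (t : ℝ), Sg (p.H' s) (t : Torus1) (z j) =
      s.H (torusProj (x j + t, p.a (x j + t))) := by
    intro j t
    simp only [hz]
    rw [Sg_H']
    simp only [rot]
    rw [hh_apply, hbt0, add_zero, zero_add, ← AddCircle.coe_add, phi_coe]; rfl
  obtain ⟨c, hc⟩ := half_level s
  have hlt : ∀ i j, i < j → j < J → ∃ t, 1 / 4 ≤ dist (Sg (p.H' s) t (z i)) (Sg (p.H' s) t (z j)) := by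
    intro i j hij hj
    set u := x j - x i with hu
    have hqu : p.q * u = ((j : ℝ) - i) * p.L / p.Q := by rw [hu]; simp only [hx]; field_simp
    have hij' : (1 : ℝ) ≤ (j : ℝ) - i := by
      have : ((i + 1 : ℕ) : ℝ) ≤ j := by exact_mod_cast hij
      push_cast at this; linarith
    have hjJ : (j : ℝ) - i ≤ J := by
      have : (j : ℝ) ≤ J := by exact_mod_cast hj.le
      have : (0 : ℝ) ≤ i := by positivity
      linarith
    have hJ3' : (J : ℝ) * (2 * p.L) ≤ p.Q := by exact_mod_cast hJ3
    have hb1 : p.L / (p.Q : ℝ) ≤ p.q * u := by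
      rw [hqu]; gcongr; nlinarith
    have hb2 : p.q * u ≤ 1 / 2 := by
      rw [hqu, div_le_div_iff₀ hQ (by norm_num)]; nlinarith
    obtain ⟨X, m, k, hX0, hX1, ham, hd⟩ := p.sep_real c u hb1 hb2 hQ4
    refine ⟨((X - x i : ℝ) : Torus1), ?_⟩
    rw [hSz, hSz]
    have e1 : x i + (X - x i) = X := by ring
    have e2 : x j + (X - x i) = X + u := by rw [hu]; ring
    rw [e1, e2]
    have hqK : (64 : ℝ) * s.K ≤ p.q := by rw [hqs]; exact_mod_cast s.hq
    have hLK' : (1000 : ℝ) * p.q * s.K ≤ p.L := by exact_mod_cast hLK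
    have hKq : (s.K : ℝ) * (2 / p.q) ≤ 1 / 32 := by
      rw [← mul_div_assoc, div_le_div_iff₀ hq (by norm_num)]; linarith
    have hKL : (s.K : ℝ) * (28 * p.q / p.L) ≤ 1 / 32 := by
      rw [← mul_div_assoc, div_le_div_iff₀ hL (by norm_num)]; nlinarith
    have hXq : X ≤ 2 / p.q := by
      have : 3 / (2 * (p.q : ℝ)) ≤ 2 / p.q := by
        rw [div_le_div_iff₀ (by positivity) hq]; nlinarith
      linarith
    have hu0 : 0 ≤ u := by
      by_contra hcon
      have : p.q * u < 0 := mul_neg_of_pos_of_neg hq (not_le.mp hcon)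
      have : 0 < p.L / (p.Q : ℝ) := by positivity
      linarith
    have hXuq : X + u ≤ 2 / p.q := by
      have : u ≤ 1 / (2 * p.q) := by rw [le_div_iff₀ (by positivity)]; linarith
      have e : 2 / (p.q : ℝ) = 3 / (2 * p.q) + 1 / (2 * p.q) := by field_simp; norm_num
      linarith
    have d1 : dist (s.H (torusProj (X, p.a X))) (s.H (torusProj (0, 0))) ≤ 1 / 32 := by
      refine (s.lip _ _).trans (le_trans (mul_le_mul_of_nonneg_left ?_ (by positivity)) hKq)
      rw [Prod.dist_eq]
      apply max_le
      · refine (coe_dist_le _ _).trans ?_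
        simp only [sub_zero]; rwa [abs_of_nonneg hX0]
      · simp only [torusProj]
        rw [ham, coe_int]; simp; positivity
    have d2 : dist (s.H (torusProj (X + u, p.a (X + u)))) (s.H (torusProj (0, c))) ≤ 1 / 32 := by
      refine (s.lip _ _).trans ?_
      have : dist (torusProj (X + u, p.a (X + u))) (torusProj (0, c)) ≤ max (2 / (p.q : ℝ)) (28 * (p.q : ℝ) / (p.L : ℝ)) := by
        rw [Prod.dist_eq]
        apply max_le_max
        · refine (coe_dist_le _ _).trans ?_
          simp only [sub_zero]; rwa [abs_of_nonneg (by linarith)]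
        · simp only [torusProj]
          rw [dist_eq_norm]
          have : ((p.a (X + u) : ℝ) : Torus1) - (c : Torus1) =
              ((p.a (X + u) - m - c - k : ℝ) : Torus1) := by
            simp only [AddCircle.coe_sub, coe_int, sub_zero]
          rw [this]
          exact (coe_norm_le _).trans hd
      refine (mul_le_mul_of_nonneg_left this (by positivity)).trans ?_
      rw [mul_max_of_nonneg _ _ (by positivity)]
      exact max_le hKq hKL
    have h4 := dist_triangle4 (s.H (torusProj (0, 0))) (s.H (torusProj (X, p.a X)))
      (s.H (torusProj (X + u, p.a (X + u)))) (s.H (torusProj (0, c)))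
    rw [dist_comm] at d1
    linarith
  have hne : ∀ i j, i < J → j < J → i ≠ j →
      ∃ t, 1 / 4 ≤ dist (Sg (p.H' s) t (z i)) (Sg (p.H' s) t (z j)) := by
    intro i j hi hj hij
    rcases lt_or_gt_of_ne hij with h | h
    · exact hlt i j h hj
    · obtain ⟨t, ht⟩ := hlt j i h hi
      exact ⟨t, by rwa [dist_comm]⟩
  refine ⟨(Finset.range J).image z, ?_, ?_⟩
  · rw [Finset.card_image_of_injOn, Finset.card_range]
    · exact hJ2
    · intro i hi j hj hij
      by_contra hcon
      simp only [Finset.coe_range, mem_Iio] at hi hj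
      obtain ⟨t, ht⟩ := hne i j hi hj hcon
      rw [hij, dist_self] at ht
      norm_num at ht
  · intro z1 h1 z2 h2 h12
    obtain ⟨i, hi, rfl⟩ := Finset.mem_image.mp h1
    obtain ⟨j, hj, rfl⟩ := Finset.mem_image.mp h2
    exact hne i j (Finset.mem_range.mp hi) (Finset.mem_range.mp hj) (fun h => h12 (by rw [h]))

end Par

end Abc

end

section
open MeasureTheory Filter Set
open scoped Topology ENNReal NNReal ContDiff

namespace Abc

lemma BD_vert (q L : ℕ) :
    BD (fun p : ℝ × ℝ => ((0 : ℝ), p.1 + Real.sin (2 * Real.pi * q * p.1) / L)) := by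
  have h1 : BD (fun p : ℝ × ℝ => ((0 : ℝ), p.1)) :=
    BD_clm ((ContinuousLinearMap.inr ℝ ℝ ℝ).comp (ContinuousLinearMap.fst ℝ ℝ ℝ))
  have h2 : BD (fun p : ℝ × ℝ => ((0 : ℝ), Real.sin (2 * Real.pi * q * p.1) / L)) := by
    apply BD_periodic
    · refine contDiff_const.prodMk ?_
      exact (Real.contDiff_sin.comp (contDiff_const.mul contDiff_fst)).div_const _
    · intro x
      have : 2 * Real.pi * q * (x.1 + 1) = 2 * Real.pi * q * x.1 + q * (2 * Real.pi) := by ring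
      simp only [Prod.fst_add]
      rw [this, Real.sin_add_nat_mul_two_pi]
    · intro x; simp
  have h3 := h1.add h2
  simpa using h3

lemma BD_hor {β : ℝ → ℝ} (hs : ContDiff ℝ ∞ β) (hp : ∀ y, β (y + 1) = β y) :
    BD (fun p : ℝ × ℝ => (β p.2, (0 : ℝ))) := by
  apply BD_periodic
  · exact (hs.comp contDiff_snd).prodMk contDiff_const
  · intro x; simp
  · intro x; simp [hp]

lemma beta_lip {β : ℝ → ℝ} (hs : ContDiff ℝ ∞ β) (hp : ∀ y, β (y + 1) = β y) :
    ∃ C : ℕ, ∀ y y', |β y - β y'| ≤ C * |y - y'| := by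
  obtain ⟨C, hC⟩ := (BD_hor hs hp).lip
  refine ⟨C, fun y y' => ?_⟩
  have := hC (0, y) (0, y')
  simp only [Prod.dist_eq, dist_self, Real.dist_eq] at this
  simpa using this

lemma fam (s : St) {β : ℝ → ℝ} (hs : ContDiff ℝ ∞ β) (hp : ∀ y, β (y + 1) = β y) (q L : ℕ) :
    ∃ Gn Gn' : ℕ → ℝ × ℝ → ℝ × ℝ, PB Gn ∧ PB Gn' ∧
      ∀ p : Par, p.β = β → p.q = q → p.L = L →
        IsLiftOf (Gn p.Q) (p.H' s) ∧ IsLiftOf (Gn' p.Q) (p.H' s).symm ∧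
        ∀ x y, Gn p.Q (x, y + 1) = Gn p.Q (x, y) + (0, 1) := by
  have hinv : ∀ Q : ℕ, 1 ≤ Q → |1 / (Q : ℝ)| ≤ Q := by
    intro Q hQ
    have h1 : (1 : ℝ) ≤ Q := by exact_mod_cast hQ
    rw [abs_of_nonneg (by positivity), div_le_iff₀ (by positivity)]
    nlinarith
  have hV := PB_lin (BD_vert q L) (fun Q => (Q : ℝ)) (fun Q _ => by simp)
  have hVi := PB_lin (BD_vert q L) (fun Q => -(Q : ℝ)) (fun Q _ => by simp)
  have hB := PB_lin (BD_hor hs hp) (fun Q => 1 / (Q : ℝ)) hinv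
  have hBi := PB_lin (BD_hor hs hp) (fun Q => -(1 / (Q : ℝ))) (fun Q hQ => by rw [abs_neg]; exact hinv Q hQ)
  refine ⟨_, _, s.bdG.toPB.comp (hV.comp hB), hBi.comp (hVi.comp s.bdG'.toPB), ?_⟩
  intro p hβ hq hL
  subst hβ hq hL
  refine ⟨?_, ?_, ?_⟩
  · rintro ⟨x, y⟩
    simp only
    rw [s.liftG, Par.H'_apply]
    congr 1
    simp only [torusProj]
    rw [Par.hh_apply, Par.bt_coe, ← AddCircle.coe_add, Par.phi_coe, ← AddCircle.coe_add]
    simp only [Par.a, Par.b]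
    ext
    · simp; ring_nf
    · simp; ring_nf
  · intro w
    simp only
    rw [Par.H'_symm, ← s.liftG']
    obtain ⟨x, y⟩ := s.G' w
    simp only [torusProj]
    rw [Par.hh_symm_apply, Par.phi_coe, ← AddCircle.coe_sub, Par.bt_coe, ← AddCircle.coe_sub]
    simp only [Par.a, Par.b, Prod.fst_add, Prod.snd_add, Prod.smul_fst, Prod.smul_snd, smul_eq_mul, mul_zero, add_zero]
    have e : y + -(p.Q : ℝ) * (x + Real.sin (2 * Real.pi * p.q * x) / p.L) =
      y - p.Q * (x + Real.sin (2 * Real.pi * p.q * x) / p.L) := by ring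
    rw [e]
    congr 2
    ring
  · intro x y
    simp only
    rw [← s.vert]
    simp only [p.hβp]
    congr 1
    ext <;> simp
    ring

end Abc

end

section
open MeasureTheory Filter Set
open scoped Topology ENNReal NNReal ContDiff

namespace Abc

lemma le_Qf (M : ℕ) : M ≤ Qf M := by
  have h1 : M ≤ M.factorial ^ 5 := (Nat.self_le_factorial M).trans (Nat.le_self_pow (by norm_num) _)
  exact h1.trans (Nat.lt_two_pow_self).le

lemma le_rpow_inv {c Q n : ℕ} (h : c ^ (n + 1) ≤ Q) : (c : ℝ) ≤ (Q : ℝ) ^ (1 / ((n : ℝ) + 1)) := by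
  have h1 : ((c : ℝ) ^ (n + 1)) ≤ Q := by exact_mod_cast h
  have h2 : (c : ℝ) = ((c : ℝ) ^ (n + 1)) ^ (1 / ((n : ℝ) + 1)) := by
    have := Real.pow_rpow_inv_natCast (x := (c : ℝ)) (n := n + 1) (by positivity) (by omega)
    push_cast at this
    rw [one_div]; exact this.symm
  rw [h2]
  exact Real.rpow_le_rpow (by positivity) h1 (by positivity)

set_option maxHeartbeats 2000000 in
lemma step_exists (n : ℕ) (s : St) : ∃ s' Q, Step n s s' Q := by
  have hK := s.hK
  have hqpos := s.q_pos
  have hKr : (1 : ℝ) ≤ s.K := by exact_mod_cast hK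
  have hqr : (0 : ℝ) < s.q := by exact_mod_cast hqpos
  set δ : ℝ := 1 / (16 * s.K * (n + 1)) with hδ
  have hδ0 : 0 < δ := by positivity
  obtain ⟨β, hβs, hβp, hβ0, hβb, Y, hYm, hYv, hY⟩ := exists_saw hδ0 (η := (1 / 2 : ℝ≥0∞) ^ n)
    (by apply ENNReal.pow_pos; simp)
  obtain ⟨Lb, hLb⟩ := beta_lip hβs hβp
  set L := 1000 * s.q * s.K * (n + 1) with hL
  have hL1 : 1000 * s.q * s.K ≤ L := Nat.le_mul_of_pos_right _ (by omega)
  have hL2 : 100 * s.q ≤ L := by nlinarith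
  obtain ⟨Gn, Gn', hGn, hGn', hlift⟩ := fam s hβs hβp s.q L
  obtain ⟨C1, P1, hC1, hb1⟩ := hGn.unif (n + 1)
  obtain ⟨C2, P2, hC2, hb2⟩ := hGn'.unif (n + 1)
  set C0 := C1 + C2 with hC0
  set P := P1 + P2 with hP
  have hC0' : 1 ≤ C0 := by omega
  obtain ⟨c3, hc3⟩ : ∃ c, c = 15 * s.K ^ 2 * (n + 1) ^ 2 * (2 * Lb + 1) := ⟨_, rfl⟩
  obtain ⟨m1, hm1⟩ : ∃ c, c = 100 * 2 ^ n * C0 * s.q := ⟨_, rfl⟩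
  obtain ⟨m2, hm2⟩ : ∃ c, c = n.factorial * C0 ^ (n + 1) * 2 ^ n := ⟨_, rfl⟩
  obtain ⟨m3, hm3⟩ : ∃ c, c = 100 * (n + 1) * C0 := ⟨_, rfl⟩
  obtain ⟨m4, hm4⟩ : ∃ c, c = (P + 1) * (n + 1) := ⟨_, rfl⟩
  obtain ⟨m5, hm5⟩ : ∃ c, c = P * (n + 1) := ⟨_, rfl⟩
  obtain ⟨m6, hm6⟩ : ∃ c, c = c3 ^ (n + 1) := ⟨_, rfl⟩
  obtain ⟨m7, hm7⟩ : ∃ c, c = (4 * L) ^ (n + 1) := ⟨_, rfl⟩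
  obtain ⟨m8, hm8⟩ : ∃ c, c = 2 ^ n * s.q := ⟨_, rfl⟩
  obtain ⟨m9, hm9⟩ : ∃ c, c = 52 * s.K * (n + 1) := ⟨_, rfl⟩
  obtain ⟨M, hM⟩ : ∃ M, M = s.ex + m1 + m2 + m3 + m4 + m5 + m6 + m7 + m8 + m9 + P + 4 * s.q + 2 * L + n + 10 :=
    ⟨_, rfl⟩
  set Q := Qf M with hQdef
  set N := (M + 1) ^ 5 with hN
  have hMQ : M ≤ Q := le_Qf M
  have hMN : M + 1 ≤ N := Nat.le_self_pow (by norm_num) _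
  have hQ1 : 1 ≤ Q := by omega
  have hQr : (0 : ℝ) < Q := by exact_mod_cast hQ1
  have hQr1 : (1 : ℝ) ≤ Q := by exact_mod_cast hQ1
  have hqe := s.hqe
  have hex : s.ex ≤ M.factorial ^ 5 := by
    have h1 : M ≤ M.factorial ^ 5 := (Nat.self_le_factorial M).trans (Nat.le_self_pow (by norm_num) _)
    omega
  have hqQ : s.q ∣ Q := by rw [hqe, hQdef, Qf]; exact pow_dvd_pow _ hex
  set p : Par := ⟨β, hβs, hβp, hβb, hβ0, Lb, hLb, s.q, Q, L, hqpos, hQ1, hqQ, hL2⟩ with hp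
  obtain ⟨hl, hl', hvert⟩ := hlift p rfl rfl rfl
  set q' := Qf (M + 1) with hq'def
  have hq'N : q' = Q ^ N := Qf_succ M
  set K' := C0 * Q ^ P with hK'
  have hK'1 : 1 ≤ K' := Nat.one_le_iff_ne_zero.mpr (by positivity)
  have hpowN : ∀ a b : ℕ, a ≤ Q → b + 1 ≤ N → a * Q ^ b ≤ q' := by
    intro a b ha hb
    calc a * Q ^ b ≤ Q * Q ^ b := Nat.mul_le_mul_right _ ha
      _ = Q ^ (b + 1) := by rw [pow_succ, mul_comm]
      _ ≤ q' := by rw [hq'N]; exact Nat.pow_le_pow_right hQ1 hb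
  have hbig : 100 * 2 ^ n * K' * s.q ≤ q' := by
    have := hpowN m1 P (by omega) (by omega)
    rw [hm1] at this
    calc 100 * 2 ^ n * K' * s.q = 100 * 2 ^ n * C0 * s.q * Q ^ P := by rw [hK']; ring
      _ ≤ q' := this
  have hK'r : ((K' : ℕ) : ℝ) = C0 * (Q : ℝ) ^ P := by rw [hK']; push_cast; ring
  have hbound1 : ∀ i, 1 ≤ i → i ≤ n + 1 → ∀ x, ‖iteratedFDeriv ℝ i (Gn Q) x‖ ≤ K' := by
    intro i h1 h2 x
    refine (hb1 i h1 h2 Q hQ1 x).trans ?_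
    rw [hK'r, hC0, hP]
    push_cast
    have : (Q : ℝ) ^ P1 ≤ (Q : ℝ) ^ (P1 + P2) := pow_le_pow_right₀ hQr1 (by omega)
    have h0 : (0 : ℝ) ≤ C2 := by positivity
    gcongr
    linarith
  have hbound2 : ∀ i, 1 ≤ i → i ≤ n + 1 → ∀ x, ‖iteratedFDeriv ℝ i (Gn' Q) x‖ ≤ K' := by
    intro i h1 h2 x
    refine (hb2 i h1 h2 Q hQ1 x).trans ?_
    rw [hK'r, hC0, hP]
    push_cast
    have : (Q : ℝ) ^ P2 ≤ (Q : ℝ) ^ (P1 + P2) := pow_le_pow_right₀ hQr1 (by omega)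
    have h0 : (0 : ℝ) ≤ C1 := by positivity
    gcongr
    linarith
  have hlip : ∀ z w, dist (p.H' s z) (p.H' s w) ≤ K' * dist z w :=
    lip_of_lift hl (fun x y => BD.lip_of (hGn.1 Q) (fun x => hbound1 1 le_rfl (by omega) x) x y)
  have h64 : 64 * K' ≤ q' := by
    refine le_trans ?_ hbig
    have h2n : 1 ≤ 2 ^ n := Nat.one_le_two_pow
    have : 1 ≤ 2 ^ n * s.q := Nat.one_le_iff_ne_zero.mpr (by positivity)
    calc 64 * K' ≤ 100 * K' * 1 := by omega
      _ ≤ 100 * K' * (2 ^ n * s.q) := Nat.mul_le_mul_left _ this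
      _ = _ := by ring
  let s' : St :=
    { H := p.H' s
      G := Gn Q
      G' := Gn' Q
      liftG := hl
      liftG' := hl'
      bdG := hGn.toBD hQ1
      bdG' := hGn'.toBD hQ1
      mp := s.mp.comp p.hh_mp
      mp' := p.hh_mp'.comp s.mp'
      vert := hvert
      q := q'
      K := K'
      ex := (M + 1).factorial ^ 5
      hqe := rfl
      hK := hK'1
      lip := hlip
      hq := h64 }
  have hLr : (L : ℝ) = 1000 * s.q * s.K * (n + 1) := by rw [hL]; push_cast; ring
  have hn1 : (0 : ℝ) < (n : ℝ) + 1 := by positivity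
  have hL7 : (s.K : ℝ) * (8 * s.q / L) = 8 / 1000 * (1 / ((n : ℝ) + 1)) := by
    rw [hLr]; field_simp
  have hQ52 : (52 : ℝ) * s.K * (n + 1) ≤ Q := by
    have : m9 ≤ Q := by omega
    rw [hm9] at this; exact_mod_cast this
  have hKQ : (s.K : ℝ) * (1 / Q) ≤ 1 / 52 * (1 / ((n : ℝ) + 1)) := by
    have e1 : 1 / 52 * (1 / ((n : ℝ) + 1)) = 1 / (52 * (n + 1)) := by field_simp
    rw [e1, mul_one_div, div_le_div_iff₀ hQr (by positivity)]
    linarith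
  refine ⟨s', Q, ?_⟩
  constructor
  case dvd =>
    refine hqQ.trans ?_
    show Q ∣ q'
    rw [hq'N]; exact dvd_pow_self _ (by omega)
  case comm => exact fun k z => p.comm_geo s rfl k z
  case big => exact hbig
  case smooth =>
    intro k hk t t' x
    have h := conj_diff_bound (hGn.1 Q) (hGn'.1 Q) (k := k) (C := K') (D := K') (by positivity)
      (by exact_mod_cast hK'1) (fun i h1 h2 x => hbound1 i h1 (by omega) x)
      (fun i h1 h2 x => hbound2 i h1 (by omega) x) t t' x
    refine h.trans ?_
    show _ ≤ (q' : ℝ) / 2 ^ n * |t - t'|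
    have hnat : k.factorial * K' * K' ^ k * 2 ^ n ≤ q' := by
      have h1 := hpowN m2 m5 (by omega) (by omega)
      rw [hm2, hm5] at h1
      refine le_trans ?_ h1
      have e : n.factorial * C0 ^ (n + 1) * 2 ^ n * Q ^ (P * (n + 1)) = n.factorial * K' ^ (n + 1) * 2 ^ n := by
        rw [hK', mul_pow, ← pow_mul]; ring
      rw [e, mul_assoc k.factorial, ← pow_succ']
      have e1 : k.factorial ≤ n.factorial := Nat.factorial_le hk
      have e2 : K' ^ (k + 1) ≤ K' ^ (n + 1) := Nat.pow_le_pow_right hK'1 (by omega)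
      gcongr
    have hnat' : (k.factorial : ℝ) * K' * K' ^ k * 2 ^ n ≤ q' := by exact_mod_cast hnat
    have : (k.factorial : ℝ) * (K' * |t - t'|) * K' ^ k = (k.factorial * K' * K' ^ k) * |t - t'| := by ring
    rw [this]
    refine mul_le_mul_of_nonneg_right ?_ (abs_nonneg _)
    rw [le_div_iff₀ (by positivity)]
    exact hnat'
  case cover =>
    obtain ⟨F, hF, hF'⟩ := p.cover_geo s n
    refine ⟨F, ?_, hF'⟩
    have h1 : (F.card : ℝ) ≤ c3 * Q := by
      rw [hc3]; exact_mod_cast hF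
    have h2 := le_rpow_inv (c := c3) (Q := Q) (n := n) (by omega)
    rw [Real.rpow_add hQr, Real.rpow_one]
    nlinarith
  case sep =>
    obtain ⟨F, hF, hF'⟩ := p.sep_geo s rfl (show 4 * s.q ≤ Q by omega) (show 2 * L ≤ Q by omega) hL1
    refine ⟨F, ?_, hF'⟩
    have h1 : (Q : ℝ) ≤ ((4 * L : ℕ) : ℝ) * F.card := by exact_mod_cast hF
    have h2 := le_rpow_inv (c := 4 * L) (Q := Q) (n := n) (by omega)
    rw [Real.rpow_sub hQr, Real.rpow_one, div_le_iff₀ (Real.rpow_pos_of_pos hQr _)]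
    refine h1.trans ?_
    rw [mul_comm]
    exact mul_le_mul_of_nonneg_left h2 (Nat.cast_nonneg _)
  case scale => exact fun t => scale_exact (by omega) t
  case scale' =>
    intro m hm
    have hR : 100 * (n + 1) * K' ≤ Q ^ (P + 1) := by
      have : m3 ≤ Q := by omega
      rw [hm3] at this
      calc 100 * (n + 1) * K' = (100 * (n + 1) * C0) * Q ^ P := by rw [hK']; ring
        _ ≤ Q * Q ^ P := Nat.mul_le_mul_right _ this
        _ = Q ^ (P + 1) := by rw [pow_succ, mul_comm]
    have h := scale_lower (M := M) (by omega) (P := P + 1) (m := m) (R := 100 * (n + 1) * K') (by omega) hR hm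
    refine le_trans ?_ h
    refine Real.rpow_le_rpow_of_exponent_le hQr1 ?_
    have h4 : (P + 1) * (n + 1) ≤ (M + 1) ^ 5 := by omega
    have h4' : ((P + 1 : ℕ) : ℝ) * ((n : ℝ) + 1) ≤ ((M : ℝ) + 1) ^ 5 := by exact_mod_cast h4
    have : ((P + 1 : ℕ) : ℝ) / ((M : ℝ) + 1) ^ 5 ≤ 1 / ((n : ℝ) + 1) := by
      rw [div_le_div_iff₀ (by positivity) hn1]; linarith
    linarith
  case ue =>
    intro f C hC hf z
    have h := p.ue_geo s f C hC hf z
    refine h.trans ?_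
    rw [div_eq_mul_one_div C]
    refine mul_le_mul_of_nonneg_left ?_ hC
    show (s.K : ℝ) * (1 / Q + 7 * s.q / L) ≤ 1 / ((n : ℝ) + 1)
    have e : (s.K : ℝ) * (7 * s.q / L) ≤ s.K * (8 * s.q / L) := by gcongr; norm_num
    have : 0 < 1 / ((n : ℝ) + 1) := by positivity
    rw [mul_add]
    linarith
  case psi =>
    intro z
    refine (p.psi_geo s z).trans ?_
    show 1 / (2 * (Q : ℝ)) ≤ _
    have h8 : 2 ^ n * s.q ≤ Q := by omega
    have h8' : (2 : ℝ) ^ n * s.q ≤ Q := by exact_mod_cast h8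
    apply one_div_le_one_div_of_le (by positivity)
    linarith
  case good =>
    obtain ⟨𝒢, h1, h2, h3⟩ := p.good_geo s hYm hYv hY hδ0.le (q' : ℝ) (by exact_mod_cast (by omega : 0 < q'))
    refine ⟨𝒢, h1, h2, fun z hz w hw h => (h3 z hz w hw h).trans ?_⟩
    show (s.K : ℝ) * (4 / q' + 1 / Q + 8 * Q / q' + 2 * δ + 8 * s.q / L) ≤ _
    have hQQ : Q ^ 2 ≤ q' := by rw [hq'N]; exact Nat.pow_le_pow_right hQ1 (by omega)
    have hQQ' : (Q : ℝ) ^ 2 ≤ q' := by exact_mod_cast hQQ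
    have hq'0 : (0 : ℝ) < q' := by nlinarith
    have a1 : 4 / (q' : ℝ) ≤ 4 * (1 / Q) := by
      rw [mul_one_div, div_le_div_iff₀ hq'0 hQr]; nlinarith
    have a2 : 8 * Q / (q' : ℝ) ≤ 8 * (1 / Q) := by
      rw [mul_one_div, div_le_div_iff₀ hq'0 hQr]; nlinarith
    have a3 : (s.K : ℝ) * (2 * δ) = 1 / 8 * (1 / ((n : ℝ) + 1)) := by
      rw [hδ]; field_simp; norm_num
    have a4 : (s.K : ℝ) * (4 / q' + 1 / Q + 8 * Q / q') ≤ s.K * (13 * (1 / Q)) := by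
      refine mul_le_mul_of_nonneg_left ?_ (by positivity)
      linarith
    have : 0 < 1 / ((n : ℝ) + 1) := by positivity
    have e : (s.K : ℝ) * (4 / q' + 1 / Q + 8 * Q / q' + 2 * δ + 8 * s.q / L) =
      s.K * (4 / q' + 1 / Q + 8 * Q / q') + s.K * (2 * δ) + s.K * (8 * s.q / L) := by ring
    rw [e, a3, hL7]
    linarith
  case Qbig => omega

end Abc

end

/-- There exist `q₁ ≥ 2` and a uniquely ergodic `C^∞` diffeomorphism `T` of
`𝕋²` whose unique invariant Borel probability measure is the Haar–Lebesgue measure,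
measure-theoretically isomorphic to an irrational circle rotation, whose upper
topological slow entropy w.r.t. `a^{int1,5}` (base `q₁`) equals `1`. -/
theorem stmt7 :
    ∃ q₁ : ℕ, 2 ≤ q₁ ∧ ∃ T : Torus2 → Torus2,
      IsCkTorusDiffeo ⊤ T ∧
      UniquelyErgodicWithVolume T ∧
      IsoToIrrationalRotation T ∧
      HasUpperTopSlowEntropy T (intScale1 5 q₁) 1 := by
  exact Abc.main_of_step Abc.step_exists
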